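/- arXiv:1611.07414 — 13 statements merged into one kernel-verified Lean document; each statement's English description precedes it below -/
import Mathlib

section
/- There is an absolute constant A > 0 with the following property. Let G be a bipartite graph with finite parts F and C, let capacity types p ∈ {1,…,P} have capacities 0 < c_1 ≤ c_2 ≤ ⋯ ≤ c_P and multiplicities k_p ∈ ℕ, let (x,y) be a fractional solution satisfying (L1)–(L5), and let δ ∈ (0,1). Set Δ := A·(1/δ)·ln(2 + 1/δ). Then there exist a family x̂ with 0 ≤ x̂_{ijp} ≤ x_{ijp} for all i,j,p, pairwise disjoint sets S_1,…,S_K, T_1,…,T_L partitioning F, a partition C = C_del ⊔ C_blue ⊔ C_red, and nonempty pairwise disjoint sets J_1,…,J_L ⊆ C with C_red = J_1 ⊔ ⋯ ⊔ J_L, such that: (1) C_del is (Δ, δ)-deletable with respect to graph distance in G; (2) for each ℓ, any two vertices of T_ℓ are at graph distance at most Δ and every G-neighbor of a vertex of J_ℓ lies in T_ℓ; (3) for each k, any two vertices of S_k are at graph distance at most Δ, and there exist ȳ_{ip} ∈ {0,1} (i ∈ S_k, p ∈ [P]) with Σ_{q ≥ p} Σ_{i∈S_k} ȳ_{iq} ≤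 ⌊Σ_{q ≥ p} Σ_{i∈S_k} y_{iq}⌋ for every p, and Σ_{j∈C} Σ_{i∈S_k} Σ_p x̂_{ijp} ≤ (1+δ)·Σ_{i∈S_k} Σ_p c_p·ȳ_{ip}; (4) every client j ∈ C_blue satisfies Σ_{i ∈ S_1∪⋯∪S_K} Σ_p x̂_{ijp} ≥ 1 − δ/100. -/
open Finset

namespace StrongDecomposition

open scoped Classical in
/-- A nonnegative monotone sequence consists of the partial sums of its nonnegative increments. -/
lemma exists_increments {P : ℕ} (b : Fin P → ℝ) (hb : ∀ p, 0 ≤ b p) (hmono : Monotone b) :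
    ∃ β : Fin P → ℝ, (∀ q, 0 ≤ β q) ∧ ∀ p, b p = ∑ q ∈ univ.filter (fun q => q ≤ p), β q := by
  refine ⟨fun q => b q - if h : 0 < q.1 then b ⟨q.1 - 1, by omega⟩ else 0, fun q => ?_, ?_⟩
  · dsimp only
    split_ifs with h
    · exact sub_nonneg.2 (hmono (Fin.le_def.2 (by simp)))
    · simpa using hb q
  · rintro ⟨n, hn⟩
    induction n with
    | zero =>
      have : univ.filter (fun q : Fin P => q ≤ ⟨0, hn⟩) = {⟨0, hn⟩} := by
        ext q; simp [Fin.le_def, Fin.ext_iff]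
      rw [this]; simp
    | succ n ih =>
      have : univ.filter (fun q : Fin P => q ≤ ⟨n + 1, hn⟩) =
          insert ⟨n + 1, hn⟩ (univ.filter (fun q : Fin P => q ≤ ⟨n, by omega⟩)) := by
        ext q; simp [Fin.le_def, Fin.ext_iff]; omega
      rw [this, sum_insert (by simp [Fin.le_def]), ← ih (by omega)]
      simp

/-- Summation by parts over the types. -/
lemma sum_mul_eq_sum_tail {V : Type} {P : ℕ} (S : Finset V) (b β : Fin P → ℝ)
    (hβ : ∀ p, b p = ∑ q ∈ univ.filter (fun q => q ≤ p), β q) (z : V → Fin P → ℝ) :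
    ∑ i ∈ S, ∑ p, b p * z i p =
      ∑ q, β q * ∑ p ∈ univ.filter (fun p => q ≤ p), ∑ i ∈ S, z i p := by
  have hp : ∀ p, ∑ i ∈ S, b p * z i p =
      ∑ q, if q ≤ p then β q * ∑ i ∈ S, z i p else 0 := fun p => by
    rw [← mul_sum, hβ, sum_mul, sum_filter]
  rw [sum_comm, sum_congr rfl fun p _ => hp p, sum_comm]
  refine sum_congr rfl fun q _ => ?_
  rw [mul_sum, sum_filter]

/-- Among `N` indices, exactly `n ≤ N` lie below `n`. -/
lemma sum_indicator_equivFin {V : Type} [DecidableEq V] (S : Finset V) (n : ℕ) (hn : n ≤ #S)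
    (idx : V → ℕ) (hidx : ∀ i (h : i ∈ S), idx i = (S.equivFin ⟨i, h⟩).1) :
    ∑ i ∈ S, (if idx i < n then (1 : ℝ) else 0) = n := by
  rw [← sum_coe_sort S]
  have : ∑ i : S, (if idx i < n then (1 : ℝ) else 0) =
      ∑ t : Fin #S, (if t.1 < n then (1 : ℝ) else 0) := by
    refine Fintype.sum_equiv S.equivFin _ _ fun i => ?_
    rw [hidx i.1 i.2]
  rw [this, Fin.sum_univ_eq_sum_range (fun t => if t < n then (1 : ℝ) else 0) #S, sum_boole]
  have : (range #S).filter (fun t => t < n) = range n := by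
    ext t; simp; omega
  rw [this, card_range]

/-- Rounding down all tail sums of the opening variables loses at most one largest capacity. -/
lemma exists_rounding {V : Type} [DecidableEq V] {P : ℕ} (S : Finset V) (y : V → Fin P → ℝ)
    (b : Fin P → ℝ) (M : ℝ) (hy : ∀ i p, 0 ≤ y i p) (hsum : ∀ i ∈ S, ∑ p, y i p ≤ 1)
    (hb : ∀ p, 0 ≤ b p) (hmono : Monotone b) (hM : 0 ≤ M) (hbM : ∀ p, b p ≤ M) :
    ∃ yb : V → Fin P → ℝ, (∀ i p, yb i p = 0 ∨ yb i p = 1) ∧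
      (∀ p : Fin P, ∑ q ∈ univ.filter (fun q => p ≤ q), ∑ i ∈ S, yb i q ≤
        (⌊∑ q ∈ univ.filter (fun q => p ≤ q), ∑ i ∈ S, y i q⌋₊ : ℝ)) ∧
      ∑ i ∈ S, ∑ p, b p * y i p - M ≤ ∑ i ∈ S, ∑ p, b p * yb i p := by
  classical
  set Y : Fin P → ℝ := fun p => ∑ q ∈ univ.filter (fun q => p ≤ q), ∑ i ∈ S, y i q with hY
  set n : Fin P → ℕ := fun p => ⌊Y p⌋₊ with hn
  have hn_anti : Antitone n := fun p q hpq => Nat.floor_mono <|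
    sum_le_sum_of_subset_of_nonneg
      (fun r hr => by simp only [mem_filter, mem_univ, true_and] at hr ⊢; exact hpq.trans hr)
      fun r _ _ => sum_nonneg fun i _ => hy i r
  have hYS : ∀ p, Y p ≤ #S := fun p => calc
    Y p ≤ ∑ q, ∑ i ∈ S, y i q := sum_le_sum_of_subset_of_nonneg (filter_subset _ _)
      fun r _ _ => sum_nonneg fun i _ => hy i r
    _ = ∑ i ∈ S, ∑ q, y i q := sum_comm
    _ ≤ ∑ i ∈ S, 1 := sum_le_sum hsum
    _ = #S := by simp
  have hnS : ∀ p, n p ≤ #S := fun p => Nat.floor_le_of_le (hYS p)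
  set idx : V → ℕ := fun i => if h : i ∈ S then (S.equivFin ⟨i, h⟩).1 else 0
  have hidx : ∀ i (h : i ∈ S), idx i = (S.equivFin ⟨i, h⟩).1 := fun i h => dif_pos h
  set yb : V → Fin P → ℝ := fun i p =>
    if idx i < n p ∧ ∀ q, p < q → n q ≤ idx i then 1 else 0 with hyb
  have htail : ∀ i p, ∑ q ∈ univ.filter (fun q => p ≤ q), yb i q =
      if idx i < n p then 1 else 0 := by
    intro i p
    split_ifs with h
    · obtain ⟨r, hr, hmax⟩ := (univ.filter (fun q => p ≤ q ∧ idx i < n q)).exists_max_image id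
        ⟨p, by simp [h]⟩
      simp only [mem_filter, mem_univ, true_and, id] at hr hmax
      rw [sum_eq_single_of_mem r (by simp [hr.1])]
      · refine if_pos ⟨hr.2, fun q hq => ?_⟩
        by_contra! hlt
        exact absurd (hmax q ⟨hr.1.trans hq.le, hlt⟩) (not_le.2 hq)
      · intro q hq hqr
        simp only [mem_filter, mem_univ, true_and] at hq
        refine if_neg fun hc => ?_
        rcases lt_or_gt_of_ne hqr with hlt | hlt
        · exact absurd (hc.2 r hlt) (not_le.2 hr.2)
        · exact absurd (hmax q ⟨hq, hc.1⟩) (not_le.2 hlt)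
    · refine sum_eq_zero fun q hq => if_neg fun hc => h ?_
      simp only [mem_filter, mem_univ, true_and] at hq
      exact hc.1.trans_le (hn_anti hq)
  have hcount : ∀ p, ∑ q ∈ univ.filter (fun q => p ≤ q), ∑ i ∈ S, yb i q = n p := by
    intro p
    rw [sum_comm, sum_congr rfl fun i _ => htail i p]
    exact sum_indicator_equivFin S (n p) (hnS p) idx hidx
  refine ⟨yb, fun i p => ?_, fun p => (hcount p).le, ?_⟩
  · by_cases h : idx i < n p ∧ ∀ q, p < q → n q ≤ idx i
    · exact Or.inr (if_pos h)
    · exact Or.inl (if_neg h)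
  obtain ⟨β, hβ0, hβ⟩ := exists_increments b hb hmono
  rw [sum_mul_eq_sum_tail S b β hβ, sum_mul_eq_sum_tail S b β hβ]
  simp_rw [hcount]
  have hβM : ∑ q, β q ≤ M := by
    rcases Nat.eq_zero_or_pos P with rfl | hP
    · simpa using hM
    · refine le_trans (le_of_eq ?_) (hbM ⟨P - 1, by omega⟩)
      rw [hβ, filter_true_of_mem fun q _ => Fin.le_def.2 (by simp only; omega)]
  have hle : ∑ q, β q * Y q ≤ ∑ q, (β q * n q + β q) :=
    sum_le_sum fun q _ => by nlinarith [(Nat.lt_floor_add_one (Y q)).le, hβ0 q]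
  rw [sum_add_distrib] at hle
  linarith

open scoped Classical in
/-- Growing a ball around `s` among the facilities `R` and the clients `A`: after at most `m`
layers either the ball `Q` has a thin client boundary or it has grown by the factor
`(1 + δ) ^ m`. -/
lemma exists_ball {V : Type} [DecidableEq V] (G : SimpleGraph V) (R A : Finset V) (s : V)
    (hs : s ∈ R) (δ : ℝ) (hδ : 0 < δ) (m : ℕ) :
    ∃ Q I B : Finset V, s ∈ Q ∧ Q ⊆ R ∧ I ⊆ B ∧
      B = A.filter (fun j => ∃ i ∈ Q, G.Adj i j) ∧
      (∀ j ∈ I, ∀ i ∈ R, G.Adj i j → i ∈ Q) ∧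
      (∀ i ∈ Q, G.edist s i ≤ ((2 * m + 2 : ℕ) : ℕ∞)) ∧
      (∀ j ∈ B, G.edist s j ≤ ((2 * m + 3 : ℕ) : ℕ∞)) ∧
      A.filter (fun j => G.Adj s j) ⊆ I ∧
      ((#B : ℝ) ≤ (1 + δ) * #I ∨
        (1 + δ) ^ m * #(A.filter (fun j => G.Adj s j)) ≤ (#I : ℝ)) := by
  set cl : Finset V → Finset V := fun X => A.filter (fun j => ∃ i ∈ X, G.Adj i j) with hcl
  set nx : Finset V → Finset V := fun X => X ∪ R.filter (fun i => ∃ j ∈ cl X, G.Adj i j) with hnx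
  set b : ℕ → Finset V := fun k => nx^[k] {s} with hb
  have hbs : ∀ k, b (k + 1) = nx (b k) := fun k => Function.iterate_succ_apply' nx k {s}
  have hsub : ∀ k, b k ⊆ b (k + 1) := fun k => by rw [hbs]; exact subset_union_left
  have hclm : ∀ {X Z : Finset V}, X ⊆ Z → cl X ⊆ cl Z := fun {X Z} h j hj => by
    simp only [hcl, mem_filter] at hj ⊢
    obtain ⟨hj, i, hi, hij⟩ := hj
    exact ⟨hj, i, h hi, hij⟩
  have hmem : ∀ k, s ∈ b k := fun k => by
    induction k with
    | zero => simp [hb]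
    | succ k ih => exact hsub k ih
  have hR : ∀ k, b k ⊆ R := fun k => by
    induction k with
    | zero => simpa [hb] using hs
    | succ k ih => rw [hbs]; exact union_subset ih (filter_subset _ _)
  have hcd : ∀ k, (∀ i ∈ b k, G.edist s i ≤ ((2 * k : ℕ) : ℕ∞)) →
      ∀ j ∈ cl (b k), G.edist s j ≤ ((2 * k + 1 : ℕ) : ℕ∞) := by
    intro k h j hj
    simp only [hcl, mem_filter] at hj
    obtain ⟨-, i, hi, hij⟩ := hj
    refine (G.edist_triangle (v := i)).trans ?_
    push_cast
    exact add_le_add (by simpa using h i hi) (SimpleGraph.edist_eq_one_iff_adj.2 hij).le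
  have hd : ∀ k, ∀ i ∈ b k, G.edist s i ≤ ((2 * k : ℕ) : ℕ∞) := fun k => by
    induction k with
    | zero => intro i hi; simp [hb] at hi; simp [hi]
    | succ k ih =>
      intro i hi
      rw [hbs, hnx, mem_union, mem_filter] at hi
      rcases hi with hi | ⟨-, j, hj, hij⟩
      · exact (ih i hi).trans (by exact_mod_cast (by omega))
      · refine (G.edist_triangle (v := j)).trans ?_
        refine (add_le_add (hcd k ih j hj) (SimpleGraph.edist_eq_one_iff_adj.2 hij.symm).le).trans ?_
        exact_mod_cast (by omega)
  have hs0 : ∀ k, A.filter (fun j => G.Adj s j) ⊆ cl (b k) := fun k j hj => by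
    simp only [hcl, mem_filter] at hj ⊢
    exact ⟨hj.1, s, hmem k, hj.2⟩
  have key : ∀ k ≤ m, ((#(cl (b (k + 1))) : ℝ) ≤ (1 + δ) * #(cl (b k)) ∨
        (1 + δ) ^ m * #(A.filter (fun j => G.Adj s j)) ≤ (#(cl (b k)) : ℝ)) →
      ∃ Q I B : Finset V, s ∈ Q ∧ Q ⊆ R ∧ I ⊆ B ∧
      B = A.filter (fun j => ∃ i ∈ Q, G.Adj i j) ∧
      (∀ j ∈ I, ∀ i ∈ R, G.Adj i j → i ∈ Q) ∧
      (∀ i ∈ Q, G.edist s i ≤ ((2 * m + 2 : ℕ) : ℕ∞)) ∧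
      (∀ j ∈ B, G.edist s j ≤ ((2 * m + 3 : ℕ) : ℕ∞)) ∧
      A.filter (fun j => G.Adj s j) ⊆ I ∧
      ((#B : ℝ) ≤ (1 + δ) * #I ∨
        (1 + δ) ^ m * #(A.filter (fun j => G.Adj s j)) ≤ (#I : ℝ)) := by
    intro k hk h
    refine ⟨b (k + 1), cl (b k), cl (b (k + 1)), hmem _, hR _, hclm (hsub k), rfl, ?_, ?_, ?_,
      hs0 k, h⟩
    · intro j hj i hi hij
      rw [hbs, hnx, mem_union, mem_filter]
      exact Or.inr ⟨hi, j, hj, hij⟩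
    · exact fun i hi => (hd _ i hi).trans (by exact_mod_cast (by omega))
    · exact fun j hj => (hcd _ (hd _) j hj).trans (by exact_mod_cast (by omega))
  by_cases h : ∃ k ≤ m, (#(cl (b (k + 1))) : ℝ) ≤ (1 + δ) * #(cl (b k))
  · obtain ⟨k, hk, h⟩ := h
    exact key k hk (Or.inl h)
  · push Not at h
    refine key m le_rfl (Or.inr ?_)
    have : ∀ k ≤ m, (1 + δ) ^ k * #(A.filter (fun j => G.Adj s j)) ≤ (#(cl (b k)) : ℝ) := by
      intro k
      induction k with
      | zero => intro _; simpa using card_le_card (hs0 0)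
      | succ k ih =>
        intro hk
        have h1 := ih (by omega)
        have h2 := h k (by omega)
        rw [pow_succ]
        nlinarith
    exact this m le_rfl

/-- The number of layers needed for growth by `200 / δ ^ 2` is of order `(1 / δ) log (2 + 1 / δ)`. -/
lemma exists_layers (δ : ℝ) (hδ : 0 < δ) (hδ1 : δ < 1) :
    ∃ m : ℕ, 200 / δ ^ 2 ≤ (1 + δ) ^ m ∧
      12 * m + 16 ≤ ⌊(1000 : ℝ) * (1 / δ) * Real.log (2 + 1 / δ)⌋₊ := by
  set l := Real.log (2 + 1 / δ) with hl
  have hinv : 1 < 1 / δ := by rw [lt_div_iff₀ hδ]; linarith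
  have hl1 : 1 ≤ l := by
    rw [hl, Real.le_log_iff_exp_le (by positivity)]
    linarith [Real.exp_one_lt_d9]
  have hexp : Real.exp l = 2 + 1 / δ := Real.exp_log (by positivity)
  refine ⟨⌈2 / δ * (8 * l)⌉₊, ?_, ?_⟩
  · have h1 : Real.exp (δ / 2) ≤ 1 + δ := by
      rw [← Real.le_log_iff_exp_le (by positivity)]
      have := Real.one_sub_inv_le_log_of_pos (show 0 < 1 + δ by positivity)
      refine le_trans ?_ this
      have : 1 - (1 + δ)⁻¹ = δ / (1 + δ) := by field_simp; ring
      rw [this]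
      exact div_le_div_of_nonneg_left hδ.le (by positivity) (by linarith)
    have h2 : Real.exp (8 * l) ≤ (1 + δ) ^ ⌈2 / δ * (8 * l)⌉₊ := by
      calc Real.exp (8 * l) ≤ Real.exp (⌈2 / δ * (8 * l)⌉₊ * (δ / 2)) := by
            apply Real.exp_le_exp.2
            have := Nat.le_ceil (2 / δ * (8 * l))
            calc 8 * l = 2 / δ * (8 * l) * (δ / 2) := by field_simp
              _ ≤ _ := by gcongr
        _ = Real.exp (δ / 2) ^ ⌈2 / δ * (8 * l)⌉₊ := Real.exp_nat_mul _ _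
        _ ≤ _ := by gcongr
    refine le_trans ?_ h2
    have h3 : Real.exp (8 * l) = (2 + 1 / δ) ^ 8 := by
      rw [← hexp, ← Real.exp_nat_mul]; norm_num
    rw [h3]
    have h4 : (3 : ℝ) ^ 6 ≤ (2 + 1 / δ) ^ 6 := by gcongr; linarith
    have h5 : (1 / δ) ^ 2 ≤ (2 + 1 / δ) ^ 2 := by gcongr; linarith
    calc 200 / δ ^ 2 = 200 * (1 / δ) ^ 2 := by field_simp
      _ ≤ (2 + 1 / δ) ^ 6 * (2 + 1 / δ) ^ 2 := by gcongr; linarith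
      _ = _ := by ring
  · apply Nat.le_floor
    have := (Nat.ceil_lt_add_one (show 0 ≤ 2 / δ * (8 * l) by positivity)).le
    push_cast
    have h6 : 2 / δ * (8 * l) = 16 * (1 / δ * l) := by ring
    have h7 : 1 ≤ 1 / δ * l := by nlinarith
    rw [h6] at this
    calc (12 : ℝ) * _ + 16 ≤ 12 * (16 * (1 / δ * l) + 1) + 16 := by gcongr; rw [h6]; exact this
      _ ≤ 1000 * (1 / δ) * l := by linarith

/-- The facts about a fractional solution that the construction uses. -/
structure IsFractional {V : Type} (G : SimpleGraph V) (F C : Finset V) {P : ℕ}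
    (c : Fin P → ℝ) (x : V → V → Fin P → ℝ) (y : V → Fin P → ℝ) : Prop where
  nbr_mem : ∀ j ∈ C, ∀ v, G.Adj j v → v ∈ F
  cap_pos : ∀ p, 0 < c p
  cap_mono : Monotone c
  x_nonneg : ∀ i j p, 0 ≤ x i j p
  y_nonneg : ∀ i p, 0 ≤ y i p
  adj_of_pos : ∀ i j p, 0 < x i j p → G.Adj i j
  covered : ∀ j ∈ C, 1 ≤ ∑ i ∈ F, ∑ p, x i j p
  capacity : ∀ i ∈ F, ∀ p, ∑ j ∈ C, x i j p ≤ c p * y i p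
  x_le_y : ∀ i ∈ F, ∀ j ∈ C, ∀ p, x i j p ≤ y i p
  y_sum : ∀ i ∈ F, ∑ p, y i p ≤ 1

lemma IsFractional.x_eq_zero {V : Type} {G : SimpleGraph V} {F C : Finset V} {P : ℕ}
    {c : Fin P → ℝ} {x : V → V → Fin P → ℝ} {y : V → Fin P → ℝ} (h : IsFractional G F C c x y)
    {i j : V} (p : Fin P) (hij : ¬ G.Adj i j) : x i j p = 0 :=
  le_antisymm (not_lt.1 fun hp => hij (h.adj_of_pos i j p hp)) (h.x_nonneg i j p)

/-- A facility is unassigned, or in the roundable set centred at `s`, or in the complete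
neighbourhood centred at `t`. -/
inductive FacilityStatus (V : Type) where
  | free
  | core (s : V)
  | full (t : V)

/-- A client is undecided, deleted, blue, or red and responsible for the neighbourhood at `t`. -/
inductive ClientStatus (V : Type) where
  | active
  | deleted
  | blue
  | red (t : V)

open scoped Classical in
/-- The unassigned facilities. -/
noncomputable def freeSet {V : Type} (F : Finset V) (fac : V → FacilityStatus V) : Finset V :=
  F.filter fun i => fac i = .free

open scoped Classical in
/-- The undecided clients. -/
noncomputable def activeSet {V : Type} (C : Finset V) (cli : V → ClientStatus V) : Finset V :=
  C.filter fun j => cli j = .active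

lemma mem_freeSet {V : Type} {F : Finset V} {fac : V → FacilityStatus V} {i : V} :
    i ∈ freeSet F fac ↔ i ∈ F ∧ fac i = .free := by
  simp [freeSet]

lemma mem_activeSet {V : Type} {C : Finset V} {cli : V → ClientStatus V} {j : V} :
    j ∈ activeSet C cli ↔ j ∈ C ∧ cli j = .active := by
  simp [activeSet]

/-- The weights `w` distribute every deleted client over blue and red clients at distance at
most `N`, with load at most `δ`. -/
structure Distributes {V : Type} (G : SimpleGraph V) (C : Finset V) (N : ℕ) (δ : ℝ)
    (cli : V → ClientStatus V) (w : V → V → ℝ) : Prop where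
  nonneg : ∀ j j', 0 ≤ w j j'
  le_one : ∀ j j', w j j' ≤ 1
  sum_eq : ∀ j ∈ C, cli j = .deleted → ∑ j' ∈ C, w j j' = 1
  source : ∀ j j', w j j' ≠ 0 → cli j = .deleted
  target : ∀ j j', w j j' ≠ 0 → cli j' ≠ .deleted ∧ cli j' ≠ .active
  dist_le : ∀ j j', w j j' ≠ 0 → G.edist j j' ≤ (N : ℕ∞)
  load : ∀ j' ∈ C, ∑ j ∈ C, w j j' ≤ δ

/-- Deleting the thin boundary `B \ I` of a set `I` of clients. -/
lemma Distributes.delete_boundary {V : Type} [DecidableEq V] {G : SimpleGraph V} {C : Finset V}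
    {N : ℕ} {δ : ℝ} {cli cli' : V → ClientStatus V} {w : V → V → ℝ}
    (h : Distributes G C N δ cli w) {I B : Finset V} (hI : I.Nonempty) (hIB : I ⊆ B)
    (hB : B ⊆ activeSet C cli) (hcard : (#B : ℝ) ≤ (1 + δ) * #I)
    (hdist : ∀ j ∈ B, ∀ j' ∈ B, G.edist j j' ≤ (N : ℕ∞))
    (hcliI : ∀ j ∈ I, cli' j ≠ .deleted ∧ cli' j ≠ .active)
    (hcliB : ∀ j ∈ B, j ∉ I → cli' j = .deleted) (hcli : ∀ j, j ∉ B → cli' j = cli j) :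
    ∃ w', Distributes G C N δ cli' w' := by
  have hIpos : (0 : ℝ) < #I := by exact_mod_cast hI.card_pos
  have hI1 : (1 : ℝ) ≤ #I := by exact_mod_cast hI.card_pos
  have hact : ∀ j ∈ B, cli j = .active := fun j hj => (mem_activeSet.1 (hB hj)).2
  have hBC : B ⊆ C := fun j hj => (mem_activeSet.1 (hB hj)).1
  have hsrc : ∀ j ∈ B, ∀ j', w j j' = 0 := fun j hj j' => by
    by_contra hne
    simpa [hact j hj] using h.source j j' hne
  have htgt : ∀ j ∈ B, ∀ j', w j' j = 0 := fun j hj j' => by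
    by_contra hne
    exact (h.target j' j hne).2 (hact j hj)
  set w' : V → V → ℝ := fun j j' => if j ∈ B \ I then (if j' ∈ I then (1 : ℝ) / #I else 0) else w j j'
    with hw'
  have hcases : ∀ j j', w' j j' ≠ 0 → (j ∈ B \ I ∧ j' ∈ I) ∨ (j ∉ B ∧ j' ∉ B ∧ w j j' ≠ 0) := by
    intro j j' hne
    by_cases hj : j ∈ B \ I
    · refine Or.inl ⟨hj, ?_⟩
      by_contra hj'
      exact hne (by simp only [hw', hj, hj', if_true, if_false])
    · have hww : w' j j' = w j j' := if_neg hj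
      rw [hww] at hne
      exact Or.inr ⟨fun hb => hne (hsrc j hb j'), fun hb => hne (htgt j' hb j), hne⟩
  refine ⟨w', ?_, ?_, ?_, ?_, ?_, ?_, ?_⟩
  · intro j j'
    simp only [hw']
    split_ifs <;> first | positivity | exact h.nonneg j j'
  · intro j j'
    simp only [hw']
    split_ifs
    · rw [div_le_one hIpos]; exact hI1
    · exact zero_le_one
    · exact h.le_one j j'
  · intro j hj hdel
    by_cases hjB : j ∈ B
    · have hjI : j ∉ I := fun hI' => (hcliI j hI').1 hdel
      simp only [hw', mem_sdiff, hjB, hjI, not_false_eq_true, and_self, if_true]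
      rw [sum_ite_mem, inter_eq_right.2 (hIB.trans hBC)]
      simp [hIpos.ne']
    · simp only [hw', mem_sdiff, hjB, false_and, if_false]
      exact h.sum_eq j hj ((hcli j hjB).symm.trans hdel)
  · intro j j' hne
    rcases hcases j j' hne with ⟨hj, -⟩ | ⟨hj, -, hne⟩
    · rw [mem_sdiff] at hj
      exact hcliB j hj.1 hj.2
    · rw [hcli j hj]; exact h.source j j' hne
  · intro j j' hne
    rcases hcases j j' hne with ⟨-, hj'⟩ | ⟨-, hj', hne⟩
    · exact hcliI j' hj'
    · rw [hcli j' hj']; exact h.target j j' hne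
  · intro j j' hne
    rcases hcases j j' hne with ⟨hj, hj'⟩ | ⟨-, -, hne⟩
    · exact hdist j (mem_sdiff.1 hj).1 j' (hIB hj')
    · exact h.dist_le j j' hne
  · intro j' hj'C
    by_cases hj' : j' ∈ I
    · have : ∀ j ∈ C, w' j j' = if j ∈ B \ I then (1 : ℝ) / #I else 0 := by
        intro j _
        simp only [hw', hj', if_true, htgt j' (hIB hj') j]
      rw [sum_congr rfl this, sum_ite_mem, inter_eq_right.2 (sdiff_subset.trans hBC), sum_const,
        nsmul_eq_mul, card_sdiff_of_subset hIB, Nat.cast_sub (card_le_card hIB), mul_one_div,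
        div_le_iff₀ hIpos]
      linarith
    · refine le_trans (sum_le_sum fun j _ => ?_) (h.load j' hj'C)
      simp only [hw', hj', if_false]
      split_ifs
      · exact h.nonneg j j'
      · exact le_rfl

/-- Deciding some active clients as blue does not affect the weights. -/
lemma Distributes.of_settle {V : Type} {G : SimpleGraph V} {C : Finset V} {N : ℕ} {δ : ℝ}
    {cli cli' : V → ClientStatus V} {w : V → V → ℝ} (h : Distributes G C N δ cli w)
    (hcli : ∀ j, cli' j = cli j ∨ (cli j = .active ∧ cli' j = .blue)) :
    Distributes G C N δ cli' w where
  nonneg := h.nonneg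
  le_one := h.le_one
  sum_eq j hj hdel := h.sum_eq j hj <| by
    rcases hcli j with h' | ⟨-, h'⟩
    · rw [← h', hdel]
    · simp [h'] at hdel
  source j j' hne := by
    have := h.source j j' hne
    rcases hcli j with h' | ⟨h', -⟩
    · rw [h', this]
    · simp [h'] at this
  target j j' hne := by
    have := h.target j j' hne
    rcases hcli j' with h' | ⟨h', -⟩
    · rwa [h']
    · simp [h'] at this
  dist_le := h.dist_le
  load := h.load

open scoped Classical in
/-- The invariants of the construction; `m` is the number of layers of a ball. -/
structure IsPartialDecomposition {V : Type} (G : SimpleGraph V) (F C : Finset V) {P : ℕ}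
    (c : Fin P → ℝ) (x : V → V → Fin P → ℝ) (y : V → Fin P → ℝ) (δ : ℝ) (m : ℕ)
    (fac : V → FacilityStatus V) (cli : V → ClientStatus V) (xh : V → V → Fin P → ℝ) : Prop where
  xh_nonneg : ∀ i j p, 0 ≤ xh i j p
  xh_le : ∀ i j p, xh i j p ≤ x i j p
  xh_eq_zero : ∀ i, (∀ s, fac i ≠ .core s) → ∀ j p, xh i j p = 0
  xh_active : ∀ j ∈ C, cli j = .active → ∀ i s, fac i = .core s → ∀ p, xh i j p = x i j p
  active_lt : ∀ j ∈ C, cli j = .active → ∑ i ∈ F, ∑ p, xh i j p < 1 - δ / 100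
  blue_ge : ∀ j ∈ C, cli j = .blue → 1 - δ / 100 ≤ ∑ i ∈ F, ∑ p, xh i j p
  core_center : ∀ i s, fac i = .core s → i ∈ F ∧ s ∈ F ∧ fac s = .core s
  core_dist : ∀ i s, fac i = .core s → G.edist s i ≤ ((6 * m + 8 : ℕ) : ℕ∞)
  full_center : ∀ i t, fac i = .full t → i ∈ F ∧ t ∈ F ∧ fac t = .full t
  full_dist : ∀ i t, fac i = .full t → G.edist t i ≤ ((2 * m + 2 : ℕ) : ℕ∞)
  full_red : ∀ i t, fac i = .full t → ∃ j ∈ C, cli j = .red t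
  red_center : ∀ j t, cli j = .red t → t ∈ F ∧ fac t = .full t
  red_nbr : ∀ j t, cli j = .red t → ∀ v, G.Adj j v → fac v = .full t
  active_nbr : ∀ j ∈ C, cli j = .active → ∀ v, G.Adj j v → fac v = .free ∨
    ∃ s, fac v = .core s ∧ G.edist s v ≤ ((2 * m + 2 : ℕ) : ℕ∞)
  roundable : ∀ s, fac s = .core s → ∃ D : ℝ, 0 ≤ D ∧
    (∀ i ∈ freeSet F fac, (#((activeSet C cli).filter fun j => G.Adj i j) : ℝ) ≤ D) ∧
    2 * D / δ ≤ ∑ i ∈ F.filter (fun i => fac i = .core s), ∑ p, ∑ j ∈ C, xh i j p ∧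
    ∀ i, fac i = .core s → ∀ p, ∑ j ∈ C, xh i j p ≤ min (c p) D * y i p

/-- `Q` is a ball around `s` among the free facilities, `B` consists of the active clients next to
it, and all free neighbours of the clients in `I` lie in `Q`. -/
structure IsBall {V : Type} (G : SimpleGraph V) (F C : Finset V) (m : ℕ)
    (fac : V → FacilityStatus V) (cli : V → ClientStatus V) (s : V) (Q I B : Finset V) : Prop where
  center_mem : s ∈ Q
  subset_free : Q ⊆ freeSet F fac
  inner_subset : I ⊆ B
  mem_iff : ∀ j, j ∈ B ↔ j ∈ activeSet C cli ∧ ∃ i ∈ Q, G.Adj i j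
  closed : ∀ j ∈ I, ∀ i ∈ freeSet F fac, G.Adj i j → i ∈ Q
  dist_fac : ∀ i ∈ Q, G.edist s i ≤ ((2 * m + 2 : ℕ) : ℕ∞)
  dist_cli : ∀ j ∈ B, G.edist s j ≤ ((2 * m + 3 : ℕ) : ℕ∞)
  inner_nonempty : I.Nonempty

/-- Open the edges between `Q` and `A`. -/
def extend {V : Type} [DecidableEq V] {P : ℕ} (Q A : Finset V) (x xh : V → V → Fin P → ℝ) :
    V → V → Fin P → ℝ :=
  fun i j p => if i ∈ Q then (if j ∈ A then x i j p else 0) else xh i j p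

section Step

variable {V : Type} {G : SimpleGraph V} {F C : Finset V} {P : ℕ}
  {c : Fin P → ℝ} {x : V → V → Fin P → ℝ} {y : V → Fin P → ℝ} {δ : ℝ} {m : ℕ}
  {fac : V → FacilityStatus V} {cli : V → ClientStatus V} {xh : V → V → Fin P → ℝ}
  {s : V} {Q I B : Finset V}

lemma IsBall.free (hb : IsBall G F C m fac cli s Q I B) {i : V} (hi : i ∈ Q) :
    i ∈ F ∧ fac i = .free :=
  mem_freeSet.1 (hb.subset_free hi)

lemma IsBall.active (hb : IsBall G F C m fac cli s Q I B) {j : V} (hj : j ∈ B) :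
    j ∈ C ∧ cli j = .active :=
  mem_activeSet.1 ((hb.mem_iff j).1 hj).1

/-- Active clients outside `B` have no neighbour in `Q`. -/
lemma IsBall.not_adj (hb : IsBall G F C m fac cli s Q I B) {j : V} (hj : j ∈ C)
    (hact : cli j = .active) (hjB : j ∉ B) {i : V} (hi : i ∈ Q) : ¬ G.Adj i j := fun hij =>
  hjB ((hb.mem_iff j).2 ⟨mem_activeSet.2 ⟨hj, hact⟩, i, hi, hij⟩)

lemma IsBall.edist_cli (hb : IsBall G F C m fac cli s Q I B) {j j' : V} (hj : j ∈ B)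
    (hj' : j' ∈ B) : G.edist j j' ≤ ((12 * m + 16 : ℕ) : ℕ∞) := by
  refine (G.edist_triangle (v := s)).trans ?_
  rw [SimpleGraph.edist_comm]
  refine (add_le_add (hb.dist_cli j hj) (hb.dist_cli j' hj')).trans ?_
  exact_mod_cast (by omega)

open scoped Classical in
/-- The degrees into the active clients only decrease. -/
lemma card_active_le {fac' : V → FacilityStatus V} {cli' : V → ClientStatus V} {D : ℝ}
    (hfac : ∀ i, fac' i = .free → fac i = .free) (hcli : ∀ j, cli' j = .active → cli j = .active)
    (hD : ∀ i ∈ freeSet F fac, (#((activeSet C cli).filter fun j => G.Adj i j) : ℝ) ≤ D) :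
    ∀ i ∈ freeSet F fac', (#((activeSet C cli').filter fun j => G.Adj i j) : ℝ) ≤ D := by
  intro i hi
  rw [mem_freeSet] at hi
  refine le_trans ?_ (hD i (mem_freeSet.2 ⟨hi.1, hfac i hi.2⟩))
  refine Nat.cast_le.2 (card_le_card (filter_subset_filter _ fun j hj => ?_))
  rw [mem_activeSet] at hj ⊢
  exact ⟨hj.1, hcli j hj.2⟩

lemma xh_eq_zero_of_mem (hd : IsPartialDecomposition G F C c x y δ m fac cli xh)
    (hb : IsBall G F C m fac cli s Q I B) {i : V} (hi : i ∈ Q) (j : V) (p : Fin P) : xh i j p = 0 :=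
  hd.xh_eq_zero i (fun s hs => by simp [(hb.free hi).2] at hs) j p

/-- Outside `Q`, clients in `I` are served as in `x`. -/
lemma xh_eq_of_inner (hx : IsFractional G F C c x y)
    (hd : IsPartialDecomposition G F C c x y δ m fac cli xh) (hb : IsBall G F C m fac cli s Q I B)
    {j : V} (hj : j ∈ I) {i : V} (hi : i ∈ F) (hiQ : i ∉ Q) (p : Fin P) :
    xh i j p = x i j p := by
  obtain ⟨hjC, hact⟩ := hb.active (hb.inner_subset hj)
  by_cases hij : G.Adj i j
  · rcases hd.active_nbr j hjC hact i hij.symm with hfree | ⟨s, hs, -⟩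
    · exact absurd (hb.closed j hj i (mem_freeSet.2 ⟨hi, hfree⟩) hij) hiQ
    · exact hd.xh_active j hjC hact i s hs p
  · rw [hx.x_eq_zero p hij]
    exact le_antisymm ((hd.xh_le i j p).trans (hx.x_eq_zero p hij).le) (hd.xh_nonneg i j p)

variable [DecidableEq V]

/-- Every client in `I` still receives at least `δ / 100` from `Q`. -/
lemma le_sum_of_inner (hx : IsFractional G F C c x y)
    (hd : IsPartialDecomposition G F C c x y δ m fac cli xh) (hb : IsBall G F C m fac cli s Q I B)
    {j : V} (hj : j ∈ I) : δ / 100 ≤ ∑ i ∈ Q, ∑ p, x i j p := by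
  obtain ⟨hjC, hact⟩ := hb.active (hb.inner_subset hj)
  have hQF : Q ⊆ F := fun i hi => (hb.free hi).1
  have h1 := hx.covered j hjC
  have h2 := hd.active_lt j hjC hact
  rw [← sum_sdiff hQF] at h1 h2
  have h3 : ∑ i ∈ F \ Q, ∑ p, xh i j p = ∑ i ∈ F \ Q, ∑ p, x i j p :=
    sum_congr rfl fun i hi => sum_congr rfl fun p _ =>
      xh_eq_of_inner hx hd hb hj (mem_sdiff.1 hi).1 (mem_sdiff.1 hi).2 p
  have h4 : ∑ i ∈ Q, ∑ p, xh i j p = 0 :=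
    sum_eq_zero fun i hi => sum_eq_zero fun p _ => xh_eq_zero_of_mem hd hb hi j p
  linarith

lemma extend_nonneg (hx : IsFractional G F C c x y)
    (hd : IsPartialDecomposition G F C c x y δ m fac cli xh)
    (A : Finset V) (i j : V) (p : Fin P) : 0 ≤ extend Q A x xh i j p := by
  unfold extend
  split_ifs
  exacts [hx.x_nonneg i j p, le_rfl, hd.xh_nonneg i j p]

lemma extend_le (hx : IsFractional G F C c x y)
    (hd : IsPartialDecomposition G F C c x y δ m fac cli xh)
    (A : Finset V) (i j : V) (p : Fin P) : extend Q A x xh i j p ≤ x i j p := by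
  unfold extend
  split_ifs
  exacts [le_rfl, hx.x_nonneg i j p, hd.xh_le i j p]

lemma le_extend (hx : IsFractional G F C c x y)
    (hd : IsPartialDecomposition G F C c x y δ m fac cli xh) (hb : IsBall G F C m fac cli s Q I B)
    (A : Finset V) (i j : V) (p : Fin P) : xh i j p ≤ extend Q A x xh i j p := by
  by_cases hi : i ∈ Q
  · rw [xh_eq_zero_of_mem hd hb hi]; exact extend_nonneg hx hd A i j p
  · simp [extend, hi]

lemma sum_extend_ge (hx : IsFractional G F C c x y)
    (hd : IsPartialDecomposition G F C c x y δ m fac cli xh) (hb : IsBall G F C m fac cli s Q I B)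
    (A : Finset V) (j : V) :
    ∑ i ∈ F, ∑ p, xh i j p ≤ ∑ i ∈ F, ∑ p, extend Q A x xh i j p :=
  sum_le_sum fun i _ => sum_le_sum fun p _ => le_extend hx hd hb A i j p

open scoped Classical in
lemma sum_extend_le (hx : IsFractional G F C c x y) (hb : IsBall G F C m fac cli s Q I B)
    {D : ℝ} (hD : ∀ i ∈ freeSet F fac,
      (#((activeSet C cli).filter fun j => G.Adj i j) : ℝ) ≤ D) {i : V} (hi : i ∈ Q) (p : Fin P) :
    ∑ j ∈ C, extend Q (activeSet C cli) x xh i j p ≤ min (c p) D * y i p := by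
  have hiF := (hb.free hi).1
  rw [min_mul_of_nonneg _ _ (hx.y_nonneg i p)]
  refine le_min ?_ ?_
  · refine le_trans (sum_le_sum fun j _ => ?_) (hx.capacity i hiF p)
    simp only [extend, hi, if_true]
    split_ifs
    exacts [le_rfl, hx.x_nonneg i j p]
  · calc ∑ j ∈ C, extend Q (activeSet C cli) x xh i j p
        ≤ ∑ j ∈ C, if j ∈ (activeSet C cli).filter (fun j => G.Adj i j) then y i p else 0 := by
          refine sum_le_sum fun j hj => ?_
          simp only [extend, hi, if_true, mem_filter]
          by_cases hij : G.Adj i j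
          · simp only [hij, and_true]
            split_ifs
            exacts [hx.x_le_y i hiF j hj p, le_rfl]
          · simp [hij, hx.x_eq_zero p hij]
      _ = #((activeSet C cli).filter fun j => G.Adj i j) * y i p := by
          rw [sum_ite_mem, inter_eq_right.2, sum_const, nsmul_eq_mul]
          exact fun j hj => (mem_activeSet.1 (mem_filter.1 hj).1).1
      _ ≤ D * y i p := by
          gcongr
          exacts [hx.y_nonneg i p, hD i (hb.subset_free hi)]

open scoped Classical in
/-- If no client in `I` has a neighbour in a roundable set, the ball becomes a complete
neighbourhood. -/
lemma carve_full (hd : IsPartialDecomposition G F C c x y δ m fac cli xh)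
    (hb : IsBall G F C m fac cli s Q I B)
    (hI : ∀ j ∈ I, ∀ v, G.Adj j v → fac v = .free) (hx : IsFractional G F C c x y) :
    IsPartialDecomposition G F C c x y δ m (fun i => if i ∈ Q then .full s else fac i)
      (fun j => if j ∈ I then .red s else if j ∈ B then .deleted else cli j) xh := by
  have hsfree := (hb.free hb.center_mem).2
  have hsF := (hb.free hb.center_mem).1
  have hact : ∀ j, (if j ∈ I then .red s else if j ∈ B then .deleted else cli j) =
      ClientStatus.active → cli j = .active ∧ j ∉ B := by
    intro j h; split_ifs at h with h1 h2; exact ⟨h, h2⟩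
  have hblue : ∀ j, (if j ∈ I then .red s else if j ∈ B then .deleted else cli j) =
      ClientStatus.blue → cli j = .blue := by
    intro j h; split_ifs at h; exact h
  have hred : ∀ j t, (if j ∈ I then .red s else if j ∈ B then .deleted else cli j) =
      ClientStatus.red t → (j ∈ I ∧ t = s) ∨ cli j = .red t := by
    intro j t h; split_ifs at h with h1
    · exact Or.inl ⟨h1, by simpa using h.symm⟩
    · exact Or.inr h
  have hcore : ∀ i t, (if i ∈ Q then .full s else fac i) = FacilityStatus.core t ↔
      fac i = .core t := by
    intro i t
    by_cases hi : i ∈ Q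
    · simp [hi, (hb.free hi).2]
    · simp [hi]
  have hfull : ∀ i t, (if i ∈ Q then .full s else fac i) = FacilityStatus.full t →
      (i ∈ Q ∧ t = s) ∨ fac i = .full t := by
    intro i t h; split_ifs at h with h1
    · exact Or.inl ⟨h1, by simpa using h.symm⟩
    · exact Or.inr h
  have hkeep : ∀ i t, fac i = .full t →
      (if i ∈ Q then .full s else fac i) = FacilityStatus.full t := by
    intro i t h
    have : i ∉ Q := fun hi => by simp [(hb.free hi).2] at h
    simp [this, h]
  constructor
  · exact hd.xh_nonneg
  · exact hd.xh_le
  · intro i hi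
    exact hd.xh_eq_zero i fun s' hs' => hi s' ((hcore i s').2 hs')
  · intro j hj hja i s' hs'
    exact hd.xh_active j hj (hact j hja).1 i s' ((hcore i s').1 hs')
  · intro j hj hja
    exact hd.active_lt j hj (hact j hja).1
  · intro j hj hjb
    exact hd.blue_ge j hj (hblue j hjb)
  · intro i s' h
    simp only [hcore] at h ⊢
    exact hd.core_center i s' h
  · intro i s' h
    exact hd.core_dist i s' ((hcore i s').1 h)
  · intro i t h
    rcases hfull i t h with ⟨hi, rfl⟩ | h
    · exact ⟨(hb.free hi).1, hsF, if_pos hb.center_mem⟩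
    · obtain ⟨h1, h2, h3⟩ := hd.full_center i t h
      exact ⟨h1, h2, hkeep t t h3⟩
  · intro i t h
    rcases hfull i t h with ⟨hi, rfl⟩ | h
    · exact hb.dist_fac i hi
    · exact hd.full_dist i t h
  · intro i t h
    rcases hfull i t h with ⟨hi, rfl⟩ | h
    · obtain ⟨j, hj⟩ := hb.inner_nonempty
      exact ⟨j, (hb.active (hb.inner_subset hj)).1, if_pos hj⟩
    · obtain ⟨j, hj, hr⟩ := hd.full_red i t h
      have : j ∉ B := fun hjB => by simp [(hb.active hjB).2] at hr
      have hjI : j ∉ I := fun hjI => this (hb.inner_subset hjI)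
      exact ⟨j, hj, by simp [this, hjI, hr]⟩
  · intro j t h
    rcases hred j t h with ⟨-, rfl⟩ | h
    · exact ⟨hsF, if_pos hb.center_mem⟩
    · obtain ⟨h1, h2⟩ := hd.red_center j t h
      exact ⟨h1, hkeep t t h2⟩
  · intro j t h v hv
    rcases hred j t h with ⟨hj, rfl⟩ | h
    · have hjC := (hb.active (hb.inner_subset hj)).1
      exact if_pos (hb.closed j hj v
        (mem_freeSet.2 ⟨hx.nbr_mem j hjC v hv, hI j hj v hv⟩) hv.symm)
    · exact hkeep v t (hd.red_nbr j t h v hv)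
  · intro j hj hja v hv
    obtain ⟨hja, hjB⟩ := hact j hja
    have hvQ : v ∉ Q := fun hvQ => hb.not_adj hj hja hjB hvQ hv.symm
    simpa only [hvQ, if_false] using hd.active_nbr j hj hja v hv
  · intro s' h
    obtain ⟨D, hD0, hD, hsum, hcap⟩ := hd.roundable s' ((hcore s' s').1 h)
    refine ⟨D, hD0, card_active_le ?_ (fun j hj => (hact j hj).1) hD, ?_, ?_⟩
    · intro i h; split_ifs at h; exact h
    · refine hsum.trans (le_of_eq (sum_congr ?_ fun _ _ => rfl))
      ext i
      simp only [mem_filter, hcore]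
    · intro i hi
      exact hcap i ((hcore i s').1 hi)

open scoped Classical in
/-- If some client in `I` has a neighbour in the roundable set around `t`, that set absorbs the
ball. -/
lemma absorb (hx : IsFractional G F C c x y)
    (hd : IsPartialDecomposition G F C c x y δ m fac cli xh) (hb : IsBall G F C m fac cli s Q I B)
    (hδ : 0 < δ) {j₀ v₀ t : V} (hj₀ : j₀ ∈ I) (hv₀ : G.Adj j₀ v₀) (ht : fac v₀ = .core t)
    (htd : G.edist t v₀ ≤ ((2 * m + 2 : ℕ) : ℕ∞)) :
    IsPartialDecomposition G F C c x y δ m (fun i => if i ∈ Q then .core t else fac i)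
      (fun j => if j ∈ I then .blue else if j ∈ B then .deleted else cli j)
      (extend Q (activeSet C cli) x xh) := by
  have hact : ∀ j, (if j ∈ I then .blue else if j ∈ B then .deleted else cli j) =
      ClientStatus.active → cli j = .active ∧ j ∉ B := by
    intro j h; split_ifs at h with h1 h2; exact ⟨h, h2⟩
  have hred : ∀ j t, (if j ∈ I then .blue else if j ∈ B then .deleted else cli j) =
      ClientStatus.red t → cli j = .red t := by
    intro j t h; split_ifs at h; exact h
  have hcore : ∀ i r, (if i ∈ Q then .core t else fac i) = FacilityStatus.core r →
      (i ∈ Q ∧ r = t) ∨ (i ∉ Q ∧ fac i = .core r) := by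
    intro i r h; split_ifs at h with h1
    · exact Or.inl ⟨h1, by simpa using h.symm⟩
    · exact Or.inr ⟨h1, h⟩
  have hkeep : ∀ i r, fac i = .core r →
      (if i ∈ Q then .core t else fac i) = FacilityStatus.core r := by
    intro i r h
    have : i ∉ Q := fun hi => by simp [(hb.free hi).2] at h
    simp [this, h]
  have hfull : ∀ i r, (if i ∈ Q then .core t else fac i) = FacilityStatus.full r ↔
      fac i = .full r := by
    intro i t
    by_cases hi : i ∈ Q
    · simp [hi, (hb.free hi).2]
    · simp [hi]
  obtain ⟨hv₀F, htF, htt⟩ := hd.core_center v₀ t ht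
  constructor
  · exact extend_nonneg hx hd _
  · exact extend_le hx hd _
  · intro i hi j p
    have hiQ : i ∉ Q := fun hiQ => hi t (if_pos hiQ)
    simp only [extend, hiQ, if_false]
    exact hd.xh_eq_zero i (fun s' hs' => hi s' (hkeep i s' hs')) j p
  · intro j hj hja i r h p
    obtain ⟨hja, -⟩ := hact j hja
    rcases hcore i r h with ⟨hi, -⟩ | ⟨hi, h⟩
    · simp [extend, hi, mem_activeSet, hj, hja]
    · simpa [extend, hi] using hd.xh_active j hj hja i r h p
  · intro j hj hja
    obtain ⟨hja, hjB⟩ := hact j hja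
    refine lt_of_le_of_lt (sum_le_sum fun i _ => sum_le_sum fun p _ => ?_) (hd.active_lt j hj hja)
    by_cases hi : i ∈ Q
    · simp only [extend, hi, if_true, hx.x_eq_zero p (hb.not_adj hj hja hjB hi), ite_self]
      exact hd.xh_nonneg i j p
    · simp [extend, hi]
  · intro j hj hjb
    by_cases hjI : j ∈ I
    · have h1 := hx.covered j hj
      refine le_trans (by linarith) (h1.trans (le_of_eq ?_))
      refine sum_congr rfl fun i hi => sum_congr rfl fun p _ => ?_
      by_cases hiQ : i ∈ Q
      · simp [extend, hiQ, mem_activeSet, hb.active (hb.inner_subset hjI)]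
      · simpa [extend, hiQ] using (xh_eq_of_inner hx hd hb hjI hi hiQ p).symm
    · refine (hd.blue_ge j hj ?_).trans (sum_extend_ge hx hd hb _ j)
      rw [if_neg hjI] at hjb
      split_ifs at hjb
      exact hjb
  · intro i r h
    rcases hcore i r h with ⟨hi, rfl⟩ | ⟨-, h⟩
    · exact ⟨(hb.free hi).1, htF, hkeep r r htt⟩
    · obtain ⟨h1, h2, h3⟩ := hd.core_center i r h
      exact ⟨h1, h2, hkeep r r h3⟩
  · intro i r h
    rcases hcore i r h with ⟨hi, rfl⟩ | ⟨-, h⟩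
    · have h1 := (SimpleGraph.edist_eq_one_iff_adj.2 hv₀.symm).le
      have h2 := hb.dist_cli j₀ (hb.inner_subset hj₀)
      rw [SimpleGraph.edist_comm] at h2
      refine (G.edist_triangle (v := s)).trans ((add_le_add ((G.edist_triangle (v := j₀)).trans
        (add_le_add ((G.edist_triangle (v := v₀)).trans (add_le_add htd h1)) h2))
        (hb.dist_fac i hi)).trans ?_)
      exact_mod_cast (by omega)
    · exact hd.core_dist i r h
  · intro i r h
    simp only [hfull] at h ⊢
    exact hd.full_center i r h
  · intro i r h
    exact hd.full_dist i r ((hfull i r).1 h)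
  · intro i r h
    obtain ⟨j, hj, hr⟩ := hd.full_red i r ((hfull i r).1 h)
    have : j ∉ B := fun hjB => by simp [(hb.active hjB).2] at hr
    have hjI : j ∉ I := fun hjI => this (hb.inner_subset hjI)
    exact ⟨j, hj, by simp [this, hjI, hr]⟩
  · intro j r h
    obtain ⟨h1, h2⟩ := hd.red_center j r (hred j r h)
    exact ⟨h1, (hfull r r).2 h2⟩
  · intro j r h v hv
    exact (hfull v r).2 (hd.red_nbr j r (hred j r h) v hv)
  · intro j hj hja v hv
    obtain ⟨hja, hjB⟩ := hact j hja
    have hvQ : v ∉ Q := fun hvQ => hb.not_adj hj hja hjB hvQ hv.symm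
    simpa only [hvQ, if_false] using hd.active_nbr j hj hja v hv
  · intro r h
    have hr : fac r = .core r := by
      rcases hcore r r h with ⟨-, rfl⟩ | ⟨-, h⟩
      exacts [htt, h]
    obtain ⟨D, hD0, hD, hsum, hcap⟩ := hd.roundable r hr
    refine ⟨D, hD0, card_active_le ?_ (fun j hj => (hact j hj).1) hD, hsum.trans ?_, ?_⟩
    · intro i h; split_ifs at h; exact h
    · refine (sum_le_sum fun i _ => sum_le_sum fun p _ => sum_le_sum fun j _ =>
        le_extend hx hd hb (activeSet C cli) i j p).trans
        (sum_le_sum_of_subset_of_nonneg (fun i hi => ?_) fun i _ _ => sum_nonneg fun p _ =>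
          sum_nonneg fun j _ => extend_nonneg hx hd _ i j p)
      rw [mem_filter] at hi ⊢
      exact ⟨hi.1, hkeep i r hi.2⟩
    · intro i hi p
      rcases hcore i r hi with ⟨hiQ, -⟩ | ⟨hiQ, h⟩
      · exact sum_extend_le hx hb hD hiQ p
      · simpa [extend, hiQ] using hcap i h p

open scoped Classical in
/-- A ball with many clients, centred at a facility of maximum degree, becomes a roundable set. -/
lemma carve_core (hx : IsFractional G F C c x y)
    (hd : IsPartialDecomposition G F C c x y δ m fac cli xh) (hb : IsBall G F C m fac cli s Q I B)
    (hδ : 0 < δ)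
    (hmax : ∀ i ∈ freeSet F fac, #((activeSet C cli).filter fun j => G.Adj i j) ≤
      #((activeSet C cli).filter fun j => G.Adj s j))
    (hgrow : 200 / δ ^ 2 * #((activeSet C cli).filter fun j => G.Adj s j) ≤ (#I : ℝ)) :
    IsPartialDecomposition G F C c x y δ m (fun i => if i ∈ Q then .core s else fac i)
      (fun j => if cli j = .active ∧
        1 - δ / 100 ≤ ∑ i ∈ F, ∑ p, extend Q (activeSet C cli) x xh i j p then .blue else cli j)
      (extend Q (activeSet C cli) x xh) := by
  have hsfree := (hb.free hb.center_mem).2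
  have hsF := (hb.free hb.center_mem).1
  have hact : ∀ j, (if cli j = .active ∧
        1 - δ / 100 ≤ ∑ i ∈ F, ∑ p, extend Q (activeSet C cli) x xh i j p then .blue else cli j) =
      ClientStatus.active → cli j = .active ∧
        ∑ i ∈ F, ∑ p, extend Q (activeSet C cli) x xh i j p < 1 - δ / 100 := by
    intro j h
    split_ifs at h with h1
    exact ⟨h, lt_of_not_ge fun h2 => h1 ⟨h, h2⟩⟩
  have hred : ∀ j t, (if cli j = .active ∧
        1 - δ / 100 ≤ ∑ i ∈ F, ∑ p, extend Q (activeSet C cli) x xh i j p then .blue else cli j) =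
      ClientStatus.red t ↔ cli j = .red t := by
    intro j t
    split_ifs with h1
    · simp [h1.1]
    · rfl
  have hcore : ∀ i r, (if i ∈ Q then .core s else fac i) = FacilityStatus.core r →
      (i ∈ Q ∧ r = s) ∨ (i ∉ Q ∧ fac i = .core r) := by
    intro i r h; split_ifs at h with h1
    · exact Or.inl ⟨h1, by simpa using h.symm⟩
    · exact Or.inr ⟨h1, h⟩
  have hkeep : ∀ i r, fac i = .core r →
      (if i ∈ Q then .core s else fac i) = FacilityStatus.core r := by
    intro i r h
    have : i ∉ Q := fun hi => by simp [(hb.free hi).2] at h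
    simp [this, h]
  have hfresh : ∀ i, fac i ≠ .core s := fun i h => by
    simpa [hsfree] using (hd.core_center i s h).2.2
  have hfull : ∀ i r, (if i ∈ Q then .core s else fac i) = FacilityStatus.full r ↔
      fac i = .full r := by
    intro i t
    by_cases hi : i ∈ Q
    · simp [hi, (hb.free hi).2]
    · simp [hi]
  constructor
  · exact extend_nonneg hx hd _
  · exact extend_le hx hd _
  · intro i hi j p
    have hiQ : i ∉ Q := fun hiQ => hi s (if_pos hiQ)
    simp only [extend, hiQ, if_false]
    exact hd.xh_eq_zero i (fun s' hs' => hi s' (hkeep i s' hs')) j p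
  · intro j hj hja i r h p
    obtain ⟨hja, -⟩ := hact j hja
    rcases hcore i r h with ⟨hi, -⟩ | ⟨hi, h⟩
    · simp [extend, hi, mem_activeSet, hj, hja]
    · simpa [extend, hi] using hd.xh_active j hj hja i r h p
  · intro j hj hja
    exact (hact j hja).2
  · intro j hj hjb
    by_cases hj' : cli j = .active ∧
        1 - δ / 100 ≤ ∑ i ∈ F, ∑ p, extend Q (activeSet C cli) x xh i j p
    · exact hj'.2
    · rw [if_neg hj'] at hjb
      exact (hd.blue_ge j hj hjb).trans (sum_extend_ge hx hd hb _ j)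
  · intro i r h
    rcases hcore i r h with ⟨hi, rfl⟩ | ⟨-, h⟩
    · exact ⟨(hb.free hi).1, hsF, if_pos hb.center_mem⟩
    · obtain ⟨h1, h2, h3⟩ := hd.core_center i r h
      exact ⟨h1, h2, hkeep r r h3⟩
  · intro i r h
    rcases hcore i r h with ⟨hi, rfl⟩ | ⟨-, h⟩
    · exact (hb.dist_fac i hi).trans (by exact_mod_cast (by omega))
    · exact hd.core_dist i r h
  · intro i r h
    simp only [hfull] at h ⊢
    exact hd.full_center i r h
  · intro i r h
    exact hd.full_dist i r ((hfull i r).1 h)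
  · intro i r h
    obtain ⟨j, hj, hr⟩ := hd.full_red i r ((hfull i r).1 h)
    exact ⟨j, hj, (hred j r).2 hr⟩
  · intro j r h
    obtain ⟨h1, h2⟩ := hd.red_center j r ((hred j r).1 h)
    exact ⟨h1, (hfull r r).2 h2⟩
  · intro j r h v hv
    exact (hfull v r).2 (hd.red_nbr j r ((hred j r).1 h) v hv)
  · intro j hj hja v hv
    by_cases hvQ : v ∈ Q
    · exact Or.inr ⟨s, if_pos hvQ, hb.dist_fac v hvQ⟩
    · simpa only [hvQ, if_false] using hd.active_nbr j hj (hact j hja).1 v hv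
  · intro r h
    rcases hcore r r h with ⟨-, rfl⟩ | ⟨hrQ, hr⟩
    · have hD : ∀ i ∈ freeSet F fac, (#((activeSet C cli).filter fun j => G.Adj i j) : ℝ) ≤
          (#((activeSet C cli).filter fun j => G.Adj r j) : ℝ) :=
        fun i hi => Nat.cast_le.2 (hmax i hi)
      refine ⟨#((activeSet C cli).filter fun j => G.Adj r j), Nat.cast_nonneg _,
        card_active_le ?_ (fun j hj => (hact j hj).1) hD, ?_, ?_⟩
      · intro i h; split_ifs at h; exact h
      · have hIC : I ⊆ C := fun j hj => (hb.active (hb.inner_subset hj)).1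
        calc 2 * (#((activeSet C cli).filter fun j => G.Adj r j) : ℝ) / δ
            = δ / 100 * (200 / δ ^ 2 * #((activeSet C cli).filter fun j => G.Adj r j)) := by
              field_simp; ring
          _ ≤ δ / 100 * #I := by gcongr
          _ = ∑ j ∈ I, δ / 100 := by rw [sum_const, nsmul_eq_mul, mul_comm]
          _ ≤ ∑ j ∈ I, ∑ i ∈ Q, ∑ p, x i j p :=
              sum_le_sum fun j hj => le_sum_of_inner hx hd hb hj
          _ = ∑ j ∈ I, ∑ i ∈ Q, ∑ p, extend Q (activeSet C cli) x xh i j p :=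
              sum_congr rfl fun j hj => sum_congr rfl fun i hi => sum_congr rfl fun p _ => by
                simp [extend, hi, mem_activeSet, hb.active (hb.inner_subset hj)]
          _ ≤ ∑ j ∈ C, ∑ i ∈ Q, ∑ p, extend Q (activeSet C cli) x xh i j p :=
              sum_le_sum_of_subset_of_nonneg hIC fun j _ _ => sum_nonneg fun i _ =>
                sum_nonneg fun p _ => extend_nonneg hx hd _ i j p
          _ = ∑ i ∈ Q, ∑ p, ∑ j ∈ C, extend Q (activeSet C cli) x xh i j p := by
              rw [sum_comm]
              exact sum_congr rfl fun i _ => sum_comm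
          _ ≤ _ := by
              refine sum_le_sum_of_subset_of_nonneg (fun i hi => ?_) fun i _ _ =>
                sum_nonneg fun p _ => sum_nonneg fun j _ => extend_nonneg hx hd _ i j p
              rw [mem_filter]
              exact ⟨(hb.free hi).1, if_pos hi⟩
      · intro i hi p
        rcases hcore i r hi with ⟨hiQ, -⟩ | ⟨-, h⟩
        · exact sum_extend_le hx hb hD hiQ p
        · exact absurd h (hfresh i)
    · obtain ⟨D, hD0, hD, hsum, hcap⟩ := hd.roundable r hr
      refine ⟨D, hD0, card_active_le ?_ (fun j hj => (hact j hj).1) hD, hsum.trans ?_, ?_⟩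
      · intro i h; split_ifs at h; exact h
      · refine (sum_le_sum fun i _ => sum_le_sum fun p _ => sum_le_sum fun j _ =>
          le_extend hx hd hb (activeSet C cli) i j p).trans
          (sum_le_sum_of_subset_of_nonneg (fun i hi => ?_) fun i _ _ => sum_nonneg fun p _ =>
            sum_nonneg fun j _ => extend_nonneg hx hd _ i j p)
        rw [mem_filter] at hi ⊢
        exact ⟨hi.1, hkeep i r hi.2⟩
      · intro i hi p
        rcases hcore i r hi with ⟨hi, rfl⟩ | ⟨hiQ, h⟩
        · exact absurd hr (hfresh r)
        · simpa [extend, hiQ] using hcap i h p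

end Step

/-- One round of the construction. -/
lemma exists_step {V : Type} [DecidableEq V] {G : SimpleGraph V} {F C : Finset V} {P : ℕ}
    {c : Fin P → ℝ} {x : V → V → Fin P → ℝ} {y : V → Fin P → ℝ} {δ : ℝ} {m : ℕ}
    {fac : V → FacilityStatus V} {cli : V → ClientStatus V} {xh : V → V → Fin P → ℝ}
    {w : V → V → ℝ} (hδ : 0 < δ) (hm : 200 / δ ^ 2 ≤ (1 + δ) ^ m)
    (hx : IsFractional G F C c x y) (hd : IsPartialDecomposition G F C c x y δ m fac cli xh)
    (hw : Distributes G C (12 * m + 16) δ cli w)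
    (hex : ∃ i ∈ freeSet F fac, ∃ j ∈ activeSet C cli, G.Adj i j) :
    ∃ fac' cli' xh' w', IsPartialDecomposition G F C c x y δ m fac' cli' xh' ∧
      Distributes G C (12 * m + 16) δ cli' w' ∧ #(freeSet F fac') < #(freeSet F fac) := by
  classical
  obtain ⟨i₀, hi₀, j₀, hj₀, hij₀⟩ := hex
  obtain ⟨s, hs, hmax⟩ := exists_max_image (freeSet F fac)
    (fun i => #((activeSet C cli).filter fun j => G.Adj i j)) ⟨i₀, hi₀⟩
  obtain ⟨Q, I, B, hsQ, hQ, hIB, hB, hcl, hdf, hdc, hsI, hcard⟩ :=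
    exists_ball G (freeSet F fac) (activeSet C cli) s hs δ hδ m
  have hInonempty : I.Nonempty := by
    have h1 : 0 < #((activeSet C cli).filter fun j => G.Adj i₀ j) :=
      card_pos.2 ⟨j₀, mem_filter.2 ⟨hj₀, hij₀⟩⟩
    refine (card_pos.1 (h1.trans_le (hmax i₀ hi₀))).mono fun j hj => hsI ?_
    rw [mem_filter] at hj ⊢
    exact hj
  have hb : IsBall G F C m fac cli s Q I B :=
    ⟨hsQ, hQ, hIB, fun j => by rw [hB, mem_filter], hcl, hdf, hdc, hInonempty⟩
  have hBact : B ⊆ activeSet C cli := fun j hj => ((hb.mem_iff j).1 hj).1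
  have hlt : ∀ f : FacilityStatus V, f ≠ .free →
      #(freeSet F fun i => if i ∈ Q then f else fac i) < #(freeSet F fac) := by
    intro f hf
    refine card_lt_card ((ssubset_iff_of_subset fun i hi => ?_).2 ⟨s, hs, ?_⟩)
    · rw [mem_freeSet] at hi ⊢
      refine ⟨hi.1, ?_⟩
      have h := hi.2
      split_ifs at h
      · exact absurd h hf
      · exact h
    · simp [mem_freeSet, hsQ, hf]
  rcases hcard with hcard | hgrow
  · have hdel : ∀ f : ClientStatus V, f ≠ .deleted → f ≠ .active → ∃ w', Distributes G C
        (12 * m + 16) δ (fun j => if j ∈ I then f else if j ∈ B then .deleted else cli j) w' := by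
      intro f hf hf'
      refine hw.delete_boundary hInonempty hIB hBact hcard
        (fun j hj j' hj' => hb.edist_cli hj hj') (fun j hj => ?_) (fun j hj hj' => ?_)
        (fun j hj => ?_)
      · simp [hj, hf, hf']
      · simp [hj, hj']
      · have hjI : j ∉ I := fun h => hj (hIB h)
        simp [hj, hjI]
    by_cases hI : ∀ j ∈ I, ∀ v, G.Adj j v → fac v = .free
    · obtain ⟨w', hw'⟩ := hdel (.red s) (by simp) (by simp)
      exact ⟨_, _, _, w', carve_full hd hb hI hx, hw', hlt (.full s) (by simp)⟩
    · push Not at hI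
      obtain ⟨j, hj, v, hv, hfree⟩ := hI
      obtain ⟨hjC, hact⟩ := hb.active (hIB hj)
      obtain ⟨t, ht, htd⟩ := (hd.active_nbr j hjC hact v hv).resolve_left hfree
      obtain ⟨w', hw'⟩ := hdel .blue (by simp) (by simp)
      exact ⟨_, _, _, w', absorb hx hd hb hδ hj hv ht htd, hw', hlt (.core t) (by simp)⟩
  · refine ⟨_, _, _, w, carve_core hx hd hb hδ (fun i hi => hmax i hi) ?_, hw.of_settle ?_,
      hlt (.core s) (by simp)⟩
    · refine le_trans (by gcongr) hgrow
    · intro j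
      split_ifs with h
      · exact Or.inr ⟨h.1, rfl⟩
      · exact Or.inl rfl

/-- The construction runs until no unassigned facility has an undecided client. -/
lemma exists_terminal {V : Type} [DecidableEq V] {G : SimpleGraph V} {F C : Finset V} {P : ℕ}
    {c : Fin P → ℝ} {x : V → V → Fin P → ℝ} {y : V → Fin P → ℝ} {δ : ℝ} {m : ℕ}
    (hδ : 0 < δ) (hδ1 : δ < 1) (hm : 200 / δ ^ 2 ≤ (1 + δ) ^ m)
    (hx : IsFractional G F C c x y) :
    ∃ fac cli xh w, IsPartialDecomposition G F C c x y δ m fac cli xh ∧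
      Distributes G C (12 * m + 16) δ cli w ∧ ∀ j ∈ C, cli j ≠ .active := by
  have key : ∀ n fac cli xh w, #(freeSet F fac) = n →
      IsPartialDecomposition G F C c x y δ m fac cli xh →
      Distributes G C (12 * m + 16) δ cli w →
      ∃ fac cli xh w, IsPartialDecomposition G F C c x y δ m fac cli xh ∧
        Distributes G C (12 * m + 16) δ cli w ∧ ∀ j ∈ C, cli j ≠ .active := by
    intro n
    induction n using Nat.strong_induction_on with
    | _ n ih =>
      intro fac cli xh w hn hd hw
      by_cases hex : ∃ i ∈ freeSet F fac, ∃ j ∈ activeSet C cli, G.Adj i j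
      · obtain ⟨fac', cli', xh', w', hd', hw', hlt⟩ := exists_step hδ hm hx hd hw hex
        exact ih _ (hn ▸ hlt) fac' cli' xh' w' rfl hd' hw'
      · push Not at hex
        refine ⟨fac, cli, xh, w, hd, hw, fun j hj hact => ?_⟩
        have hle : ∑ i ∈ F, ∑ p, x i j p ≤ ∑ i ∈ F, ∑ p, xh i j p := by
          refine sum_le_sum fun i hi => sum_le_sum fun p _ => ?_
          by_cases hij : G.Adj i j
          · rcases hd.active_nbr j hj hact i hij.symm with hfree | ⟨s, hs, -⟩
            · exact absurd hij
                (hex i (mem_freeSet.2 ⟨hi, hfree⟩) j (mem_activeSet.2 ⟨hj, hact⟩))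
            · exact (hd.xh_active j hj hact i s hs p).ge
          · rw [hx.x_eq_zero p hij]
            exact hd.xh_nonneg i j p
        linarith [hx.covered j hj, hd.active_lt j hj hact]
  refine key _ (fun _ => .free) (fun _ => .active) (fun _ _ _ => 0) (fun _ _ => 0) rfl ?_ ?_
  · constructor <;> simp [hx.x_nonneg]
    intro j _
    linarith
  · constructor <;> simp [hδ.le]

open scoped Classical in
/-- The set of facilities around a core centre can be rounded. -/
lemma IsPartialDecomposition.exists_rounding_core {V : Type} [DecidableEq V] {G : SimpleGraph V}
    {F C : Finset V} {P : ℕ} {c : Fin P → ℝ} {x : V → V → Fin P → ℝ} {y : V → Fin P → ℝ} {δ : ℝ}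
    {m : ℕ} {fac : V → FacilityStatus V} {cli : V → ClientStatus V} {xh : V → V → Fin P → ℝ}
    (hδ : 0 < δ) (hδ1 : δ < 1) (hx : IsFractional G F C c x y)
    (hd : IsPartialDecomposition G F C c x y δ m fac cli xh) {s : V} (hs : fac s = .core s)
    {S : Finset V} (hS : S = F.filter fun i => fac i = .core s) :
    ∃ yb : V → Fin P → ℝ, (∀ i p, yb i p = 0 ∨ yb i p = 1) ∧
      (∀ p : Fin P, ∑ q ∈ univ.filter (fun q => p ≤ q), ∑ i ∈ S, yb i q ≤
        (⌊∑ q ∈ univ.filter (fun q => p ≤ q), ∑ i ∈ S, y i q⌋₊ : ℝ)) ∧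
      ∑ j ∈ C, ∑ i ∈ S, ∑ p, xh i j p ≤ (1 + δ) * ∑ i ∈ S, ∑ p, c p * yb i p := by
  obtain ⟨D, hD0, -, hsum, hcap⟩ := hd.roundable s hs
  rw [← hS] at hsum
  have hSF : ∀ i ∈ S, i ∈ F ∧ fac i = .core s := fun i hi => by rwa [hS, mem_filter] at hi
  obtain ⟨yb, h01, htail, hround⟩ := exists_rounding S y (fun p => min (c p) D) D hx.y_nonneg
    (fun i hi => hx.y_sum i (hSF i hi).1) (fun p => le_min (hx.cap_pos p).le hD0)
    (fun p q hpq => min_le_min_right D (hx.cap_mono hpq)) hD0 (fun p => min_le_right _ _)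
  refine ⟨yb, h01, htail, ?_⟩
  have hcomm : ∑ j ∈ C, ∑ i ∈ S, ∑ p, xh i j p = ∑ i ∈ S, ∑ p, ∑ j ∈ C, xh i j p := by
    rw [sum_comm]
    exact sum_congr rfl fun i _ => sum_comm
  have hle : ∑ i ∈ S, ∑ p, ∑ j ∈ C, xh i j p ≤ ∑ i ∈ S, ∑ p, min (c p) D * y i p :=
    sum_le_sum fun i hi => sum_le_sum fun p _ => hcap i (hSF i hi).2 p
  have hge : ∑ i ∈ S, ∑ p, min (c p) D * yb i p ≤ ∑ i ∈ S, ∑ p, c p * yb i p := by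
    refine sum_le_sum fun i _ => sum_le_sum fun p _ => ?_
    refine mul_le_mul_of_nonneg_right (min_le_left _ _) ?_
    rcases h01 i p with h | h <;> simp [h]
  rw [hcomm]
  set E := ∑ i ∈ S, ∑ p, ∑ j ∈ C, xh i j p
  have hDE : 2 * D ≤ E * δ := (div_le_iff₀ hδ).1 hsum
  nlinarith [mul_le_mul_of_nonneg_left (hround.trans hge) (by linarith : 0 ≤ 1 + δ),
    mul_nonneg hD0 (by linarith : 0 ≤ 1 - δ)]

lemma edist_le_of_center {V : Type} {G : SimpleGraph V} {s u v : V} {r N : ℕ}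
    (hu : G.edist s u ≤ (r : ℕ∞)) (hv : G.edist s v ≤ (r : ℕ∞)) (hN : 2 * r ≤ N) :
    G.edist u v ≤ (N : ℕ∞) := by
  refine (G.edist_triangle (v := s)).trans ?_
  rw [SimpleGraph.edist_comm]
  refine (add_le_add hu hv).trans ?_
  exact_mod_cast (by omega)

lemma mem_biUnion_equivFin {V : Type} [DecidableEq V] (K : Finset V) (f : V → Finset V) (i : V) :
    i ∈ univ.biUnion (fun a : Fin #K => f (K.equivFin.symm a)) ↔ ∃ s ∈ K, i ∈ f s := by
  simp only [mem_biUnion, mem_univ, true_and]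
  exact ⟨fun ⟨a, ha⟩ => ⟨_, (K.equivFin.symm a).2, ha⟩,
    fun ⟨s, hs, hi⟩ => ⟨K.equivFin ⟨s, hs⟩, by simpa using hi⟩⟩

lemma disjoint_equivFin {V : Type} (K : Finset V) (f : V → Finset V)
    (hf : ∀ s t i, i ∈ f s → i ∈ f t → s = t) (a b : Fin #K) (hab : a ≠ b) :
    Disjoint (f (K.equivFin.symm a)) (f (K.equivFin.symm b)) :=
  disjoint_left.2 fun i ha hb => hab <| K.equivFin.symm.injective <| Subtype.ext <| hf _ _ i ha hb

end StrongDecomposition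

open StrongDecomposition in
/-- Strong LP-based decomposition theorem: there is an absolute constant `A > 0` such that,
given a bipartite graph with facility part `F` and client part `C`, capacities
`0 < c 1 ≤ … ≤ c P` with multiplicities `k p`, a fractional solution `(x, y)` satisfying
(L1)–(L5), and `δ ∈ (0,1)`, setting `Δ := A * (1/δ) * ln(2 + 1/δ)` there is a family `x̂ ≤ x`,
a partition of `F` into roundable sets `S_1, …, S_K` and complete neighborhoods
`T_1, …, T_L` (with responsible client sets `J_1, …, J_L`), and a partition
`C = C_del ⊔ C_blue ⊔ C_red` with `C_red = J_1 ⊔ … ⊔ J_L`, satisfying properties (1)–(4). -/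
theorem strong_decomposition :
    ∃ A : ℝ, 0 < A ∧
      ∀ (V : Type) [DecidableEq V] (G : SimpleGraph V) (F C : Finset V),
        Disjoint F C →
        (∀ a b : V, G.Adj a b → (a ∈ F ∧ b ∈ C) ∨ (a ∈ C ∧ b ∈ F)) →
        ∀ (P : ℕ) (c : Fin P → ℝ) (k : Fin P → ℕ)
          (x : V → V → Fin P → ℝ) (y : V → Fin P → ℝ) (δ : ℝ),
        (∀ p, 0 < c p) → Monotone c →
        (∀ i j p, 0 ≤ x i j p ∧ x i j p ≤ 1) →
        (∀ i p, 0 ≤ y i p ∧ y i p ≤ 1) →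
        (∀ i j p, 0 < x i j p → G.Adj i j) →
        (∀ j ∈ C, 1 ≤ ∑ i ∈ F, ∑ p, x i j p) →                       -- (L1)
        (∀ i ∈ F, ∀ p, ∑ j ∈ C, x i j p ≤ c p * y i p) →             -- (L2)
        (∀ p, ∑ i ∈ F, y i p ≤ (k p : ℝ)) →                          -- (L3)
        (∀ i ∈ F, ∀ j ∈ C, ∀ p, x i j p ≤ y i p) →                   -- (L4)
        (∀ i ∈ F, ∑ p, y i p ≤ 1) →                                  -- (L5)
        0 < δ → δ < 1 →
        ∃ (xh : V → V → Fin P → ℝ) (K L : ℕ)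
          (S : Fin K → Finset V) (T : Fin L → Finset V)
          (Cdel Cblue Cred : Finset V) (J : Fin L → Finset V),
          -- `x̂` is dominated by `x`
          (∀ i j p, 0 ≤ xh i j p ∧ xh i j p ≤ x i j p) ∧
          -- the `S_k` and `T_ℓ` are pairwise disjoint and partition `F`
          (∀ k₁ k₂, k₁ ≠ k₂ → Disjoint (S k₁) (S k₂)) ∧
          (∀ ℓ₁ ℓ₂, ℓ₁ ≠ ℓ₂ → Disjoint (T ℓ₁) (T ℓ₂)) ∧
          (∀ k' ℓ, Disjoint (S k') (T ℓ)) ∧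
          (Finset.univ.biUnion S ∪ Finset.univ.biUnion T = F) ∧
          -- `C_del ⊔ C_blue ⊔ C_red` partitions `C`
          Disjoint Cdel Cblue ∧ Disjoint Cdel Cred ∧ Disjoint Cblue Cred ∧
          (Cdel ∪ Cblue ∪ Cred = C) ∧
          -- the `J_ℓ` are nonempty, pairwise disjoint, and partition `C_red`
          (∀ ℓ, (J ℓ).Nonempty) ∧
          (∀ ℓ₁ ℓ₂, ℓ₁ ≠ ℓ₂ → Disjoint (J ℓ₁) (J ℓ₂)) ∧
          (Finset.univ.biUnion J = Cred) ∧
          -- (1) `C_del` is `(Δ, δ)`-deletable w.r.t. graph distance in `G`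
          (∃ w : V → V → ℝ,
            (∀ j j', 0 ≤ w j j' ∧ w j j' ≤ 1) ∧
            (∀ j ∈ Cdel, ∑ j' ∈ C \ Cdel, w j j' = 1) ∧
            (∀ j' ∈ C \ Cdel, ∑ j ∈ Cdel, w j j' ≤ δ) ∧
            (∀ j ∈ Cdel, ∀ j' ∈ C \ Cdel, 0 < w j j' →
              G.edist j j' ≤ (⌊A * (1 / δ) * Real.log (2 + 1 / δ)⌋₊ : ℕ∞))) ∧
          -- (2) each `T_ℓ` has diameter at most `Δ` and is a complete neighborhood of `J_ℓ`
          (∀ ℓ, ∀ u ∈ T ℓ, ∀ v ∈ T ℓ,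
            G.edist u v ≤ (⌊A * (1 / δ) * Real.log (2 + 1 / δ)⌋₊ : ℕ∞)) ∧
          (∀ ℓ, ∀ j ∈ J ℓ, ∀ v : V, G.Adj j v → v ∈ T ℓ) ∧
          -- (3) each `S_k` has diameter at most `Δ` and is `(Δ, 1+δ)`-roundable w.r.t. `(x̂, y)`
          (∀ k', ∀ u ∈ S k', ∀ v ∈ S k',
            G.edist u v ≤ (⌊A * (1 / δ) * Real.log (2 + 1 / δ)⌋₊ : ℕ∞)) ∧
          (∀ k', ∃ yb : V → Fin P → ℝ,
            (∀ i p, yb i p = 0 ∨ yb i p = 1) ∧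
            (∀ p : Fin P,
              ∑ q ∈ Finset.univ.filter (fun q => p ≤ q), ∑ i ∈ S k', yb i q ≤
                (⌊∑ q ∈ Finset.univ.filter (fun q => p ≤ q), ∑ i ∈ S k', y i q⌋₊ : ℝ)) ∧
            (∑ j ∈ C, ∑ i ∈ S k', ∑ p, xh i j p ≤
              (1 + δ) * ∑ i ∈ S k', ∑ p, c p * yb i p)) ∧
          -- (4) blue clients are almost fully served by the `S_k`
          (∀ j ∈ Cblue, 1 - δ / 100 ≤ ∑ i ∈ Finset.univ.biUnion S, ∑ p, xh i j p) := by
  classical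
  refine ⟨1000, by norm_num, ?_⟩
  intro V _ G F C hFC hbip P c k x y δ hc hcmono hx01 hy01 hadj hcov hcap _ hxy hysum hδ hδ1
  have hx : IsFractional G F C c x y :=
    { nbr_mem := fun j hj v hv => (hbip j v hv).elim
        (fun h => absurd hj (disjoint_left.1 hFC h.1)) fun h => h.2
      cap_pos := hc
      cap_mono := hcmono
      x_nonneg := fun i j p => (hx01 i j p).1
      y_nonneg := fun i p => (hy01 i p).1
      adj_of_pos := hadj
      covered := hcov
      capacity := hcap
      x_le_y := hxy
      y_sum := hysum }
  obtain ⟨m, hm, hN⟩ := exists_layers δ hδ hδ1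
  obtain ⟨fac, cli, xh, w, hd, hw, hfin⟩ := exists_terminal hδ hδ1 hm hx
  set N := ⌊(1000 : ℝ) * (1 / δ) * Real.log (2 + 1 / δ)⌋₊
  set KS := F.filter fun s => fac s = .core s ∨ fac s = .free with hKS
  set KT := F.filter fun t => fac t = .full t with hKT
  set S : V → Finset V :=
    fun s => F.filter fun i => fac i = .core s ∨ fac i = .free ∧ i = s with hS
  set T : V → Finset V := fun t => F.filter fun i => fac i = .full t with hT
  set J : V → Finset V := fun t => C.filter fun j => cli j = .red t with hJ
  have hSkey : ∀ i ∈ F, (∀ t, fac i ≠ .full t) → ∃ s ∈ KS, i ∈ S s := by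
    intro i hi hne
    rcases hf : fac i with _ | s | t
    · exact ⟨i, by simp [hKS, hi, hf], by simp [hS, hi, hf]⟩
    · obtain ⟨-, h2, h3⟩ := hd.core_center i s hf
      exact ⟨s, by simp [hKS, h2, h3], by simp [hS, hi, hf]⟩
    · exact absurd hf (hne t)
  have hTkey : ∀ i t, fac i = .full t → t ∈ KT ∧ i ∈ T t := by
    intro i t hf
    obtain ⟨h1, h2, h3⟩ := hd.full_center i t hf
    exact ⟨by simp [hKT, h2, h3], by simp [hT, h1, hf]⟩
  refine ⟨xh, #KS, #KT, fun a => S (KS.equivFin.symm a), fun a => T (KT.equivFin.symm a),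
    C.filter fun j => cli j = .deleted, C.filter fun j => cli j = .blue,
    C.filter fun j => ∃ t, cli j = .red t, fun a => J (KT.equivFin.symm a),
    fun i j p => ⟨hd.xh_nonneg i j p, hd.xh_le i j p⟩, disjoint_equivFin KS S ?_,
    disjoint_equivFin KT T ?_, ?_, ?_, ?_, ?_, ?_, ?_, ?_, disjoint_equivFin KT J ?_, ?_,
    ⟨w, fun j j' => ⟨hw.nonneg j j', hw.le_one j j'⟩, ?_, ?_, ?_⟩, ?_, ?_, ?_, ?_, ?_⟩
  · intro s t i hi hi'
    simp only [hS, mem_filter] at hi hi'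
    grind
  · intro s t i hi hi'
    simp only [hT, mem_filter] at hi hi'
    simpa [hi.2] using hi'.2
  · intro a b
    refine disjoint_left.2 fun i hi hi' => ?_
    simp only [hS, hT, mem_filter] at hi hi'
    simp [hi'.2] at hi
  · ext i
    rw [mem_union, mem_biUnion_equivFin, mem_biUnion_equivFin]
    constructor
    · rintro (⟨s, -, hi⟩ | ⟨s, -, hi⟩)
      exacts [(mem_filter.1 hi).1, (mem_filter.1 hi).1]
    · intro hi
      by_cases h : ∃ t, fac i = .full t
      · obtain ⟨t, ht⟩ := h
        exact Or.inr ⟨t, hTkey i t ht⟩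
      · push Not at h
        exact Or.inl (hSkey i hi h)
  · exact disjoint_filter.2 fun j _ h => by simp [h]
  · exact disjoint_filter.2 fun j _ h => by simp [h]
  · exact disjoint_filter.2 fun j _ h => by simp [h]
  · ext j
    simp only [mem_union, mem_filter]
    constructor
    · rintro ((h | h) | h) <;> exact h.1
    · intro hj
      have := hfin j hj
      rcases hcj : cli j with _ | _ | _ | t <;> simp_all
  · intro a
    have ha := (mem_filter.1 (KT.equivFin.symm a).2).2
    obtain ⟨j, hj, hr⟩ := hd.full_red _ _ ha
    exact ⟨j, mem_filter.2 ⟨hj, hr⟩⟩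
  · intro s t i hi hi'
    simp only [hJ, mem_filter] at hi hi'
    simpa [hi.2] using hi'.2
  · ext j
    rw [mem_biUnion_equivFin, mem_filter]
    constructor
    · rintro ⟨t, -, hj⟩
      obtain ⟨hj, hr⟩ := mem_filter.1 hj
      exact ⟨hj, t, hr⟩
    · rintro ⟨hj, t, hr⟩
      exact ⟨t, (hTkey t t (hd.red_center j t hr).2).1, mem_filter.2 ⟨hj, hr⟩⟩
  · intro j hj
    obtain ⟨hjC, hdel⟩ := mem_filter.1 hj
    rw [← hw.sum_eq j hjC hdel]
    refine sum_subset sdiff_subset fun j' hj' hnot => by_contra fun hne => ?_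
    exact hnot (mem_sdiff.2 ⟨hj', fun h => (hw.target j j' hne).1 (mem_filter.1 h).2⟩)
  · intro j' hj'
    refine le_trans ?_ (hw.load j' (mem_sdiff.1 hj').1)
    exact sum_le_sum_of_subset_of_nonneg (filter_subset _ _) fun j _ _ => hw.nonneg j j'
  · intro j _ j' _ hpos
    exact (hw.dist_le j j' hpos.ne').trans (by exact_mod_cast hN)
  · intro a u hu v hv
    exact edist_le_of_center (hd.full_dist u _ (mem_filter.1 hu).2)
      (hd.full_dist v _ (mem_filter.1 hv).2) (by omega)
  · intro a j hj v hv
    exact (hTkey v _ (hd.red_nbr j _ (mem_filter.1 hj).2 v hv)).2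
  · intro a u hu v hv
    have hSdist : ∀ i ∈ S (KS.equivFin.symm a),
        G.edist (KS.equivFin.symm a) i ≤ ((6 * m + 8 : ℕ) : ℕ∞) := by
      intro i hi
      rcases (mem_filter.1 hi).2 with h | ⟨-, rfl⟩
      · exact hd.core_dist i _ h
      · simp
    exact edist_le_of_center (hSdist u hu) (hSdist v hv) (by omega)
  · intro a
    dsimp only
    obtain ⟨s, hs⟩ := KS.equivFin.symm a
    dsimp only
    rcases (mem_filter.1 hs).2 with hcore | hfree
    · refine hd.exists_rounding_core hδ hδ1 hx hcore (filter_congr fun i _ => ?_)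
      refine or_iff_left ?_
      rintro ⟨h, rfl⟩
      simp [hcore] at h
    · refine ⟨fun _ _ => 0, fun _ _ => Or.inl rfl, fun p => by simp, ?_⟩
      have hzero : ∀ j ∈ C, ∑ i ∈ S s, ∑ p, xh i j p = 0 := by
        refine fun j _ => sum_eq_zero fun i hi => sum_eq_zero fun p _ => ?_
        refine hd.xh_eq_zero i (fun r hr => ?_) j p
        rcases (mem_filter.1 hi).2 with h | ⟨h, -⟩
        · simpa [hfree] using (hd.core_center i s h).2.2
        · simp [hr] at h
      simp [sum_eq_zero hzero]
  · intro j hj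
    obtain ⟨hjC, hblue⟩ := mem_filter.1 hj
    refine (hd.blue_ge j hjC hblue).trans (le_of_eq (sum_subset ?_ ?_).symm)
    · intro i hi
      rw [mem_biUnion_equivFin] at hi
      obtain ⟨s, -, hi⟩ := hi
      exact (mem_filter.1 hi).1
    · intro i hi hnot
      rw [mem_biUnion_equivFin] at hnot
      refine sum_eq_zero fun p _ => hd.xh_eq_zero i (fun s hs => hnot (hSkey i hi ?_)) j p
      simp [hs]
end

section
/- Let B be a bipartite graph with finite parts C (clients) and S (facility slots), and let κ : S → ℝ_{≥0}. Suppose there exists x : C × S → [0,1] with x(j,s) > 0 only when {j,s} is an edge of B, Σ_{s∈S} x(j,s) ≥ 1 for every j ∈ C, and Σ_{j∈C} x(j,s) ≤ κ(s) for every s ∈ S. Then there exists a function φ : C → S such that {j, φ(j)} is an edge of B for every j ∈ C and |φ⁻¹(s)| ≤ ⌈κ(s)⌉ for every s ∈ S. -/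
open Finset

/-- Hall's theorem with capacities: if every finite set of indices is no larger than the total
capacity of its neighbourhood, there is a choice function using each `a` at most `c a` times. -/
theorem exists_choice_card_le_of_card_le_sum_biUnion {ι α : Type*} [DecidableEq α]
    (t : ι → Finset α) (c : α → ℕ) (h : ∀ A : Finset ι, #A ≤ ∑ a ∈ A.biUnion t, c a) :
    ∃ φ : ι → α, (∀ i, φ i ∈ t i) ∧
      ∀ (a : α) (A : Finset ι), (∀ i ∈ A, φ i = a) → #A ≤ c a := by
  obtain ⟨f, hf, hft⟩ := (Finset.all_card_le_biUnion_card_iff_exists_injective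
    (fun i => (t i).sigma fun a => range (c a))).1 fun A => by
      have hA : (A.biUnion fun i => (t i).sigma fun a => range (c a)) =
          (A.biUnion t).sigma fun a => range (c a) := by
        ext ⟨a, k⟩
        simp only [mem_biUnion, mem_sigma]
        tauto
      simpa [hA, card_sigma] using h A
  simp only [mem_sigma, mem_range] at hft
  refine ⟨fun i => (f i).1, fun i => (hft i).1, fun a A hA => ?_⟩
  rw [← card_range (c a)]
  refine card_le_card_of_injOn (fun i => (f i).2) (fun i hi => ?_) fun i hi j hj hij => ?_
  · simpa [hA i hi] using (hft i).2
  · exact hf (Sigma.ext ((hA i hi).trans (hA j hj).symm) (heq_of_eq hij))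

/-- Integrality of the bipartite assignment step: if a bipartite graph with client part `C`
and facility-slot part `S` admits a fractional assignment `x` supported on edges, covering
every client and loading every slot `s` at most `κ s`, then there is an integral assignment
`φ` along edges in which every slot `s` receives at most `⌈κ s⌉` clients. -/
theorem fractional_to_integral_assignment
    {V : Type*} [DecidableEq V] (B : SimpleGraph V) (C S : Finset V)
    (hCS : Disjoint C S)
    (hbip : ∀ a b : V, B.Adj a b → (a ∈ C ∧ b ∈ S) ∨ (a ∈ S ∧ b ∈ C))
    (κ : V → ℝ) (hκ : ∀ s ∈ S, 0 ≤ κ s)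
    (x : V → V → ℝ)
    (hx01 : ∀ j ∈ C, ∀ s ∈ S, 0 ≤ x j s ∧ x j s ≤ 1)
    (hsupp : ∀ j ∈ C, ∀ s ∈ S, 0 < x j s → B.Adj j s)
    (hcover : ∀ j ∈ C, 1 ≤ ∑ s ∈ S, x j s)
    (hcap : ∀ s ∈ S, ∑ j ∈ C, x j s ≤ κ s) :
    ∃ φ : V → V,
      (∀ j ∈ C, φ j ∈ S ∧ B.Adj j (φ j)) ∧
      (∀ s ∈ S, (C.filter (fun j => φ j = s)).card ≤ ⌈κ s⌉₊) := by
  classical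
  obtain ⟨φ, hφ, hcard⟩ := exists_choice_card_le_of_card_le_sum_biUnion
    (fun j : C => S.filter fun s => 0 < x j s) (fun s => ⌈κ s⌉₊) fun A => by
      set N := A.biUnion fun j : C => S.filter fun s => 0 < x j s
      have hNS : N ⊆ S := biUnion_subset.2 fun j _ => filter_subset _ _
      have hrow (j : C) (hj : j ∈ A) : 1 ≤ ∑ s ∈ N, x j s := by
        refine (hcover j j.2).trans_eq (sum_subset hNS fun s hs hsN => ?_).symm
        refine le_antisymm (not_lt.1 fun hpos => hsN ?_) (hx01 j j.2 s hs).1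
        exact mem_biUnion.2 ⟨j, hj, mem_filter.2 ⟨hs, hpos⟩⟩
      have hcol (s : V) (hs : s ∈ N) : ∑ j ∈ A, x j s ≤ ⌈κ s⌉₊ :=
        calc ∑ j ∈ A, x j s ≤ ∑ j : C, x j s :=
              sum_le_univ_sum_of_nonneg fun j => (hx01 j j.2 s (hNS hs)).1
          _ = ∑ j ∈ C, x j s := sum_coe_sort C fun j => x j s
          _ ≤ κ s := hcap s (hNS hs)
          _ ≤ ⌈κ s⌉₊ := Nat.le_ceil _
      have : (#A : ℝ) ≤ ∑ s ∈ N, (⌈κ s⌉₊ : ℝ) :=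
        calc (#A : ℝ) = ∑ j ∈ A, (1 : ℝ) := by simp
          _ ≤ ∑ j ∈ A, ∑ s ∈ N, x j s := sum_le_sum hrow
          _ = ∑ s ∈ N, ∑ j ∈ A, x j s := sum_comm
          _ ≤ ∑ s ∈ N, (⌈κ s⌉₊ : ℝ) := sum_le_sum hcol
      exact_mod_cast this
  simp only [mem_filter] at hφ
  refine ⟨fun v => if hv : v ∈ C then φ ⟨v, hv⟩ else v, fun j hj => ?_, fun s _ => ?_⟩
  · obtain ⟨hS, hpos⟩ := hφ ⟨j, hj⟩
    simpa [hj] using And.intro hS (hsupp j hj _ hS hpos)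
  · refine le_trans (le_of_eq ?_) (hcard s (univ.filter fun j => φ j = s) (by simp))
    rw [← card_map (Function.Embedding.subtype _)]
    congr 1
    ext v
    by_cases hv : v ∈ C <;> simp [hv]
end

section
/- Let (X,d) be a metric space, let C ⊆ X be a finite set of clients and F a finite set of facility locations, let capacity types p ∈ {1,…,P} have capacities c_p > 0, and let ȳ_{ip} ∈ {0,1} for i ∈ F, p ∈ [P]. Let C_del ⊊ C be (τ,ρ)-deletable (with respect to the metric d). Suppose x'_{ijp} ∈ [0,1], defined for j ∈ C∖C_del, i ∈ F, p ∈ [P], satisfies: Σ_{i,p} x'_{ijp} ≥ 1 for every j ∈ C∖C_del; Σ_{j∈C∖C_del} x'_{ijp} ≤ b·c_p·ȳ_{ip} for all i,p; and x'_{ijp} > 0 only if d(i,j) ≤ a. Then there exists x_{ijp} ≥ 0 defined for all j ∈ C, agreeing with x' on C∖C_del, such that Σ_{i,p} x_{ijp} ≥ 1 for every j ∈ C, Σ_{j∈C} x_{ijp} ≤ b·(1+ρ)·c_p·ȳ_{ip} for all i,p, and x_{ijp} > 0 only if d(i,j) ≤ a + τ. -/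
open Finset

/-- Re-inserting a `(τ, ρ)`-deletable client set: a partial fractional assignment `x'` of the
surviving clients `C ∖ C_del`, with radius bound `a` and capacity bound `b · c_p` at each
integrally opened facility, extends to a fractional assignment of all of `C` with radius
bound `a + τ` and capacity bound `b·(1+ρ)·c_p`. -/
theorem extend_deleted_clients
    {X : Type*} [MetricSpace X] [DecidableEq X] (F C : Finset X) (P : ℕ)
    (c : Fin P → ℝ) (hc : ∀ p, 0 < c p)
    (yb : X → Fin P → ℝ) (hyb : ∀ i p, yb i p = 0 ∨ yb i p = 1)
    (Cdel : Finset X) (hss : Cdel ⊂ C)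
    (a b τ ρ : ℝ) (ha : 0 ≤ a) (hb : 0 ≤ b) (hτ : 0 ≤ τ) (hρ : 0 ≤ ρ)
    -- `C_del` is `(τ, ρ)`-deletable with respect to the metric `d`
    (w : X → X → ℝ)
    (hw01 : ∀ j j', 0 ≤ w j j' ∧ w j j' ≤ 1)
    (hwrow : ∀ j ∈ Cdel, ∑ j' ∈ C \ Cdel, w j j' = 1)
    (hwcol : ∀ j' ∈ C \ Cdel, ∑ j ∈ Cdel, w j j' ≤ ρ)
    (hwdist : ∀ j ∈ Cdel, ∀ j' ∈ C \ Cdel, 0 < w j j' → dist j j' ≤ τ)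
    -- the partial fractional assignment `x'` of the surviving clients
    (x' : X → X → Fin P → ℝ)
    (hx'01 : ∀ i ∈ F, ∀ j ∈ C \ Cdel, ∀ p, 0 ≤ x' i j p ∧ x' i j p ≤ 1)
    (hcov' : ∀ j ∈ C \ Cdel, 1 ≤ ∑ i ∈ F, ∑ p, x' i j p)
    (hcap' : ∀ i ∈ F, ∀ p, ∑ j ∈ C \ Cdel, x' i j p ≤ b * c p * yb i p)
    (hrad' : ∀ i ∈ F, ∀ j ∈ C \ Cdel, ∀ p, 0 < x' i j p → dist i j ≤ a) :
    ∃ x : X → X → Fin P → ℝ,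
      (∀ i ∈ F, ∀ j ∈ C, ∀ p, 0 ≤ x i j p) ∧
      (∀ i ∈ F, ∀ j ∈ C \ Cdel, ∀ p, x i j p = x' i j p) ∧
      (∀ j ∈ C, 1 ≤ ∑ i ∈ F, ∑ p, x i j p) ∧
      (∀ i ∈ F, ∀ p, ∑ j ∈ C, x i j p ≤ b * (1 + ρ) * c p * yb i p) ∧
      (∀ i ∈ F, ∀ j ∈ C, ∀ p, 0 < x i j p → dist i j ≤ a + τ) := by
  have hmem : ∀ j ∈ C, j ∉ Cdel → j ∈ C \ Cdel := fun j hj hjd => mem_sdiff.2 ⟨hj, hjd⟩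
  refine ⟨fun i j p => if j ∈ Cdel then ∑ j' ∈ C \ Cdel, w j j' * x' i j' p else x' i j p,
    ?_, ?_, ?_, ?_, ?_⟩
  · intro i hi j hj p
    dsimp only
    split_ifs with hjd
    · exact sum_nonneg fun j' hj' => mul_nonneg (hw01 j j').1 (hx'01 i hi j' hj' p).1
    · exact (hx'01 i hi j (hmem j hj hjd) p).1
  · intro i _ j hj p
    exact if_neg (mem_sdiff.1 hj).2
  · intro j hj
    by_cases hjd : j ∈ Cdel
    · simp only [if_pos hjd]
      calc (1 : ℝ) = ∑ j' ∈ C \ Cdel, w j j' := (hwrow j hjd).symm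
        _ ≤ ∑ j' ∈ C \ Cdel, w j j' * ∑ i ∈ F, ∑ p, x' i j' p :=
          sum_le_sum fun j' hj' => le_mul_of_one_le_right (hw01 j j').1 (hcov' j' hj')
        _ = ∑ i ∈ F, ∑ p, ∑ j' ∈ C \ Cdel, w j j' * x' i j' p := by
          simp only [mul_sum]
          rw [sum_comm]
          exact sum_congr rfl fun i _ => sum_comm
    · simp only [if_neg hjd]
      exact hcov' j (hmem j hj hjd)
  · intro i hi p
    have hsurv : ∑ j ∈ C \ Cdel,
        (if j ∈ Cdel then ∑ j' ∈ C \ Cdel, w j j' * x' i j' p else x' i j p) =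
        ∑ j ∈ C \ Cdel, x' i j p :=
      sum_congr rfl fun j hj => if_neg (mem_sdiff.1 hj).2
    have hdel : ∑ j ∈ Cdel,
        (if j ∈ Cdel then ∑ j' ∈ C \ Cdel, w j j' * x' i j' p else x' i j p) ≤
        ρ * ∑ j ∈ C \ Cdel, x' i j p := by
      rw [sum_congr rfl fun j hj => if_pos hj, sum_comm, mul_sum]
      refine sum_le_sum fun j' hj' => ?_
      rw [← sum_mul]
      exact mul_le_mul_of_nonneg_right (hwcol j' hj') (hx'01 i hi j' hj' p).1
    rw [← sum_sdiff hss.subset, hsurv]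
    linarith [hcap' i hi p, mul_le_mul_of_nonneg_left (hcap' i hi p) hρ]
  · intro i hi j hj p hpos
    dsimp only at hpos
    split_ifs at hpos with hjd
    · obtain ⟨j', hj', hterm⟩ := exists_lt_of_sum_lt (s := C \ Cdel) (f := fun _ => (0 : ℝ))
        (by simpa using hpos)
      have hw : 0 < w j j' := pos_of_mul_pos_left hterm (hx'01 i hi j' hj' p).1
      have hx : 0 < x' i j' p := pos_of_mul_pos_right hterm (hw01 j j').1
      calc dist i j ≤ dist i j' + dist j j' := dist_triangle_right i j j'
        _ ≤ a + τ := add_le_add (hrad' i hi j' hj' p hx) (hwdist j hjd j' hj' hw)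
    · linarith [hrad' i hi j (hmem j hj hjd) p hpos]
end

section
/- Let P be a positive integer, let y_1,…,y_P ≥ 0 be reals and k_1,…,k_P ∈ ℕ with y_p ≤ k_p for every p, and let s_1,…,s_P ∈ ℕ satisfy Σ_{q ≥ p} s_q ≤ ⌊Σ_{q ≥ p} y_q⌋ for every p ∈ {1,…,P}. Then there exist s̃_1,…,s̃_P ∈ ℕ such that for every p: (a) Σ_{q ≥ p} s_q ≤ Σ_{q ≥ p} s̃_q ≤ Σ_{q ≥ p} y_q, and (b) s̃_p ≤ k_p. -/
open Finset

/-- Integers bounded by `k` can be chosen so that their suffix sums, and their total, are exactly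
the floors of those of `y`. -/
theorem exists_suffix_sum_eq_floor (P : ℕ) (y : Fin P → ℝ) (hy : ∀ p, 0 ≤ y p)
    (k : Fin P → ℕ) (hyk : ∀ p, y p ≤ (k p : ℝ)) :
    ∃ st : Fin P → ℕ,
      (∀ p : Fin P, ∑ q ∈ univ.filter (fun q => p ≤ q), st q =
        ⌊∑ q ∈ univ.filter (fun q => p ≤ q), y q⌋₊) ∧
      ∑ q, st q = ⌊∑ q, y q⌋₊ ∧ ∀ p, st p ≤ k p := by
  induction P with
  | zero => exact ⟨fun _ => 0, fun p => p.elim0, by simp, fun p => p.elim0⟩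
  | succ n ih =>
    obtain ⟨t, ht, htotal, htk⟩ :=
      ih (fun p => y p.succ) (fun p => hy _) (fun p => k p.succ) (fun p => hyk _)
    have hmono : ⌊∑ q : Fin n, y q.succ⌋₊ ≤ ⌊∑ q, y q⌋₊ := by
      rw [Fin.sum_univ_succ]
      exact Nat.floor_le_floor (by linarith [hy 0])
    have hstep : ⌊∑ q, y q⌋₊ ≤ ⌊∑ q : Fin n, y q.succ⌋₊ + k 0 := by
      rw [← Nat.floor_add_natCast (sum_nonneg fun q _ => hy _), Fin.sum_univ_succ]
      exact Nat.floor_le_floor (by linarith [hyk 0])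
    have hsum : ∑ q, (Fin.cons (⌊∑ q, y q⌋₊ - ⌊∑ q : Fin n, y q.succ⌋₊) t : Fin (n + 1) → ℕ) q =
        ⌊∑ q, y q⌋₊ := by
      rw [Fin.sum_univ_succ]
      simp only [Fin.cons_zero, Fin.cons_succ, htotal]
      omega
    refine ⟨Fin.cons (⌊∑ q, y q⌋₊ - ⌊∑ q : Fin n, y q.succ⌋₊) t, fun p => ?_, hsum, fun p => ?_⟩
    · cases p using Fin.cases with
      | zero => simpa only [Fin.zero_le, filter_true] using hsum
      | succ p =>
        have h := ht p
        rw [sum_filter, sum_filter] at h ⊢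
        simpa [Fin.sum_univ_succ] using h
    · cases p using Fin.cases with
      | zero =>
        rw [Fin.cons_zero]
        omega
      | succ p => simpa using htk p

/-- Mass-movement claim: given reals `y p ≥ 0` with `y p ≤ k p` and naturals `s p` whose
suffix sums are dominated by the floors of the suffix sums of `y`, there are naturals
`s̃ p ≤ k p` whose suffix sums are sandwiched between the suffix sums of `s` and of `y`. -/
theorem suffix_mass_movement (P : ℕ) (hP : 0 < P)
    (y : Fin P → ℝ) (hy : ∀ p, 0 ≤ y p)
    (k : Fin P → ℕ) (hyk : ∀ p, y p ≤ (k p : ℝ))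
    (s : Fin P → ℕ)
    (hs : ∀ p : Fin P,
      ∑ q ∈ Finset.univ.filter (fun q => p ≤ q), s q ≤
        ⌊∑ q ∈ Finset.univ.filter (fun q => p ≤ q), y q⌋₊) :
    ∃ st : Fin P → ℕ,
      (∀ p : Fin P,
        ∑ q ∈ Finset.univ.filter (fun q => p ≤ q), s q ≤
          ∑ q ∈ Finset.univ.filter (fun q => p ≤ q), st q) ∧
      (∀ p : Fin P,
        ((∑ q ∈ Finset.univ.filter (fun q => p ≤ q), st q : ℕ) : ℝ) ≤
          ∑ q ∈ Finset.univ.filter (fun q => p ≤ q), y q) ∧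
      (∀ p, st p ≤ k p) := by
  obtain ⟨st, hst, -, hk⟩ := exists_suffix_sum_eq_floor P y hy k hyk
  refine ⟨st, fun p => (hs p).trans_eq (hst p).symm, fun p => ?_, hk⟩
  rw [hst p]
  exact Nat.floor_le (sum_nonneg fun q _ => hy q)
end

section
/- Let G be a bipartite graph with finite parts F and C, let capacity types p ∈ {1,…,P} have capacities c_p > 0, and let (x,y) satisfy (L1), (L2), (L4) with x supported on edges of G. Let T_1,…,T_m ⊆ F be pairwise disjoint and J_1,…,J_m ⊆ C nonempty and pairwise disjoint such that for every ℓ, every G-neighbor of a vertex of J_ℓ lies in T_ℓ. Define D_ℓ := |J_ℓ|, s_p := Σ_{i ∈ T_1∪⋯∪T_m} y_{ip}, and z_{ℓ,p} := Σ_{i∈T_ℓ} y_{ip}. Then z satisfies the assignment-LP constraints: Σ_{ℓ=1}^m z_{ℓ,p} ≤ s_p for every p, and Σ_{p=1}^P z_{ℓ,p}·min(c_p, D_ℓ) ≥ D_ℓ for every ℓ. -/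
open Finset

/-- For a collection of disjoint complete neighborhoods `T_ℓ` with responsible client sets
`J_ℓ`, the fractional openings `z_{ℓ,p} := Σ_{i ∈ T_ℓ} y_{ip}` satisfy the assignment-LP
constraints of the induced `Q||C_min` instance with demands `D_ℓ = |J_ℓ|` and supplies
`s_p = Σ_{i ∈ ∪T_ℓ} y_{ip}`. -/
theorem complete_neighborhoods_satisfy_assignmentLP
    {V : Type*} [DecidableEq V] (G : SimpleGraph V) (F C : Finset V)
    (P : ℕ) (c : Fin P → ℝ) (hc : ∀ p, 0 < c p)
    (x : V → V → Fin P → ℝ) (y : V → Fin P → ℝ)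
    (hx01 : ∀ i j p, 0 ≤ x i j p ∧ x i j p ≤ 1)
    (hy01 : ∀ i p, 0 ≤ y i p ∧ y i p ≤ 1)
    (hsupp : ∀ i j p, 0 < x i j p → G.Adj i j)
    (hL1 : ∀ j ∈ C, 1 ≤ ∑ i ∈ F, ∑ p, x i j p)
    (hL2 : ∀ i ∈ F, ∀ p, ∑ j ∈ C, x i j p ≤ c p * y i p)
    (hL4 : ∀ i ∈ F, ∀ j ∈ C, ∀ p, x i j p ≤ y i p)
    (m : ℕ) (T : Fin m → Finset V) (J : Fin m → Finset V)
    (hTF : ∀ ℓ, T ℓ ⊆ F) (hJC : ∀ ℓ, J ℓ ⊆ C)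
    (hTdisj : ∀ ℓ₁ ℓ₂, ℓ₁ ≠ ℓ₂ → Disjoint (T ℓ₁) (T ℓ₂))
    (hJne : ∀ ℓ, (J ℓ).Nonempty)
    (hJdisj : ∀ ℓ₁ ℓ₂, ℓ₁ ≠ ℓ₂ → Disjoint (J ℓ₁) (J ℓ₂))
    (hnbr : ∀ ℓ, ∀ j ∈ J ℓ, ∀ v : V, G.Adj j v → v ∈ T ℓ) :
    (∀ p : Fin P,
      ∑ ℓ : Fin m, ∑ i ∈ T ℓ, y i p ≤ ∑ i ∈ Finset.univ.biUnion T, y i p) ∧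
    (∀ ℓ : Fin m,
      ((J ℓ).card : ℝ) ≤
        ∑ p, (∑ i ∈ T ℓ, y i p) * min (c p) ((J ℓ).card : ℝ)) := by
  constructor
  · intro p
    rw [Finset.sum_biUnion fun a _ b _ hab => hTdisj a b hab]
  · intro ℓ
    have served : ∀ j ∈ J ℓ, 1 ≤ ∑ i ∈ T ℓ, ∑ p, x i j p := by
      intro j hj
      rw [Finset.sum_subset (hTF ℓ) ?_]
      · exact hL1 j (hJC ℓ hj)
      · intro i _ hi
        refine Finset.sum_eq_zero fun p _ => ?_
        by_contra hne
        have hpos : 0 < x i j p := lt_of_le_of_ne (hx01 i j p).1 (Ne.symm hne)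
        exact hi (hnbr ℓ j hj i (hsupp i j p hpos).symm)
    have load : ∀ i ∈ T ℓ, ∀ p,
        ∑ j ∈ J ℓ, x i j p ≤ y i p * min (c p) ((J ℓ).card : ℝ) := by
      intro i hi p
      rw [mul_min_of_nonneg _ _ (hy01 i p).1]
      refine le_min ?_ ?_
      · rw [mul_comm]
        exact (Finset.sum_le_sum_of_subset_of_nonneg (hJC ℓ)
          fun j _ _ => (hx01 i j p).1).trans (hL2 i (hTF ℓ hi) p)
      · rw [mul_comm, ← nsmul_eq_mul]
        exact Finset.sum_le_card_nsmul _ _ _ fun j hj => hL4 i (hTF ℓ hi) j (hJC ℓ hj) p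
    calc ((J ℓ).card : ℝ) = ∑ j ∈ J ℓ, (1 : ℝ) := by simp
      _ ≤ ∑ j ∈ J ℓ, ∑ i ∈ T ℓ, ∑ p, x i j p := Finset.sum_le_sum served
      _ = ∑ i ∈ T ℓ, ∑ p, ∑ j ∈ J ℓ, x i j p := by
        rw [Finset.sum_comm]
        exact Finset.sum_congr rfl fun i _ => Finset.sum_comm
      _ ≤ ∑ i ∈ T ℓ, ∑ p, y i p * min (c p) ((J ℓ).card : ℝ) :=
        Finset.sum_le_sum fun i hi => Finset.sum_le_sum fun p _ => load i hi p
      _ = ∑ p, (∑ i ∈ T ℓ, y i p) * min (c p) ((J ℓ).card : ℝ) := by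
        rw [Finset.sum_comm]
        simp only [Finset.sum_mul]
end

section
/- Let there be m machines with demands D_1,…,D_m > 0 and n job types with capacities c_1,…,c_n > 0 and integer supplies s_1,…,s_n ∈ ℕ. Suppose there exists z : {1,…,m} × {1,…,n} → ℝ_{≥0} with Σ_i z_{ij} ≤ s_j for every j and Σ_j z_{ij}·min(c_j, D_i) ≥ D_i for every i. Then there exist nonnegative integers n_{ij} with Σ_i n_{ij} ≤ s_j for every job type j and Σ_j n_{ij}·c_j ≥ D_i/2 for every machine i. -/
open Finset

/-- The ratio `min c E / min c D` is nondecreasing in `c` when `D ≤ E`. -/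
lemma min_mul_min_le_min_mul_min {a b D E : ℝ} (ha : 0 < a) (hab : a ≤ b)
    (hD : 0 < D) (hDE : D ≤ E) :
    min b D * min a E ≤ min a D * min b E := by
  rcases le_total a D with h1 | h1
  · rw [min_eq_left h1, min_eq_left (h1.trans hDE), mul_comm]
    exact mul_le_mul_of_nonneg_left (min_le_min_left b hDE) ha.le
  · rw [min_eq_right h1, min_eq_right (h1.trans hab)]
    exact mul_le_mul_of_nonneg_left (min_le_min_right E hab) hD.le

/-- A job set of total capacity at least `D / 2` contains a set of largest jobs that still has
capacity at least `D / 2`, but whose capacity truncated at `D` does not exceed `D`. -/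
lemma exists_largest_jobs_covering_half {κ : Type*} [DecidableEq κ] (c : κ → ℝ)
    {D : ℝ} (hD : 0 < D) (U : Finset κ) (hU : D / 2 ≤ ∑ j ∈ U, c j) :
    ∃ G ⊆ U, (∀ g ∈ G, ∀ j ∈ U \ G, c j ≤ c g) ∧ D / 2 ≤ ∑ j ∈ G, c j ∧
      ∑ j ∈ G, min (c j) D ≤ D := by
  classical
  let F := U.powerset.filter fun G ↦
    (∀ g ∈ G, ∀ j ∈ U \ G, c j ≤ c g) ∧ D / 2 ≤ ∑ j ∈ G, c j
  have hF : F.Nonempty := ⟨U, by simp +contextual [F, hU]⟩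
  obtain ⟨G, hGF, hmin⟩ := F.exists_min_image card hF
  simp only [F, mem_filter, mem_powerset] at hGF hmin
  obtain ⟨hGU, hup, hsum⟩ := hGF
  refine ⟨G, hGU, hup, hsum, ?_⟩
  have hne : G.Nonempty := by
    rw [nonempty_iff_ne_empty]
    rintro rfl
    rw [sum_empty] at hsum
    linarith
  obtain ⟨g, hg, hgmin⟩ := G.exists_min_image c hne
  have hlt : ∑ j ∈ G.erase g, c j < D / 2 := by
    by_contra! hge
    have hcard := hmin (G.erase g) ⟨(erase_subset g G).trans hGU, fun x hx j hj ↦ ?_, hge⟩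
    · exact absurd (card_erase_lt_of_mem hg) (not_lt.mpr hcard)
    · have hxG := mem_of_mem_erase hx
      by_cases hjg : j = g
      · exact hjg ▸ hgmin x hxG
      · refine hup x hxG j ?_
        simp only [mem_sdiff, mem_erase] at hj ⊢
        exact ⟨hj.1, fun h ↦ hj.2 ⟨hjg, h⟩⟩
  rw [← add_sum_erase G _ hg]
  rcases le_or_gt (D / 2) (c g) with hbig | hsmall
  · have hempty : G.erase g = ∅ := by
      by_contra hne'
      obtain ⟨x, hx⟩ := nonempty_iff_ne_empty.mpr hne'
      have hpos : ∀ y ∈ G.erase g, 0 ≤ c y := fun y hy ↦ by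
        linarith [hgmin y (mem_of_mem_erase hy)]
      linarith [single_le_sum hpos hx, hgmin x (mem_of_mem_erase hx)]
    simp [hempty]
  · have htrunc : ∑ j ∈ G.erase g, min (c j) D ≤ ∑ j ∈ G.erase g, c j :=
      sum_le_sum fun j _ ↦ min_le_left _ _
    linarith [min_le_left (c g) D]

/-- A dual weight for a machine of demand `E`, at least every demand `D i`, which respects the
prices `y` of the small jobs `R` and dominates the other machines on all jobs larger than those. -/
lemma exists_dominating_weight {ι κ : Type*} (c : κ → ℝ) (hc : ∀ j, 0 < c j)
    (D : ι → ℝ) (hD : ∀ i, 0 < D i) {E : ℝ} (hE : 0 < E) (M : Finset ι)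
    (hDE : ∀ i ∈ M, D i ≤ E) (R : Finset κ) (w : ι → ℝ) (y : κ → ℝ)
    (hw : ∀ i ∈ M, 0 ≤ w i) (hy : ∀ j ∈ R, 0 ≤ y j)
    (hwy : ∀ i ∈ M, ∀ j ∈ R, w i * min (c j) (D i) ≤ y j) :
    ∃ v : ℝ, 0 ≤ v ∧ (∀ j ∈ R, v * min (c j) E ≤ y j) ∧
      ∀ g, (∀ j ∈ R, c j ≤ c g) → ∀ i ∈ M, w i * min (c g) (D i) ≤ v * min (c g) E := by
  rcases R.eq_empty_or_nonempty with rfl | hR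
  · refine ⟨∑ i ∈ M, w i, sum_nonneg hw, by simp, fun g _ i hi ↦ ?_⟩
    exact mul_le_mul (single_le_sum hw hi) (min_le_min_left _ (hDE i hi))
      (lt_min (hc g) (hD i)).le (sum_nonneg hw)
  · obtain ⟨k, hk, hmin⟩ := R.exists_min_image (fun j ↦ y j / min (c j) E) hR
    have hpos : ∀ j, 0 < min (c j) E := fun j ↦ lt_min (hc j) hE
    refine ⟨y k / min (c k) E, div_nonneg (hy k hk) (hpos k).le,
      fun j hj ↦ (le_div_iff₀ (hpos j)).mp (hmin j hj), fun g hg i hi ↦ ?_⟩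
    rw [div_mul_eq_mul_div, le_div_iff₀ (hpos k)]
    calc w i * min (c g) (D i) * min (c k) E
        = w i * (min (c g) (D i) * min (c k) E) := by ring
      _ ≤ w i * (min (c k) (D i) * min (c g) E) :=
          mul_le_mul_of_nonneg_left
            (min_mul_min_le_min_mul_min (hc k) (hg k hk) (hD i) (hDE i hi)) (hw i hi)
      _ = w i * min (c k) (D i) * min (c g) E := by ring
      _ ≤ y k * min (c g) E := mul_le_mul_of_nonneg_right (hwy i hi k hk) (hpos g).le

/-- Either the jobs in `U` can be assigned so that each machine in `M` receives half its demand,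
or the assignment LP has a dual certificate `(w, y)` of infeasibility. -/
lemma exists_half_assignment_or_dual_certificate {ι κ : Type*} [DecidableEq ι] [DecidableEq κ]
    (c : κ → ℝ) (hc : ∀ j, 0 < c j) (D : ι → ℝ) (hD : ∀ i, 0 < D i) (M : Finset ι) :
    ∀ U : Finset κ,
      (∃ a : κ → Option ι, ∀ i ∈ M, D i / 2 ≤ ∑ j ∈ U with a j = some i, c j) ∨
      ∃ (w : ι → ℝ) (y : κ → ℝ), (∀ i ∈ M, 0 ≤ w i) ∧ (∀ j ∈ U, 0 ≤ y j) ∧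
        (∀ i ∈ M, ∀ j ∈ U, w i * min (c j) (D i) ≤ y j) ∧
        ∑ j ∈ U, y j < ∑ i ∈ M, w i * D i := by
  induction M using Finset.induction_on_max_value D with
  | empty => exact fun U ↦ Or.inl ⟨fun _ ↦ none, by simp⟩
  | insert e M heM hmax ih =>
    intro U
    have hne : ∀ i ∈ M, i ≠ e := fun i hi h ↦ heM (h ▸ hi)
    have hpos : ∀ j i, 0 < min (c j) (D i) := fun j i ↦ lt_min (hc j) (hD i)
    rcases lt_or_ge (∑ j ∈ U, c j) (D e / 2) with hlt | hge
    · refine Or.inr ⟨fun i ↦ if i = e then 1 else 0, fun j ↦ min (c j) (D e),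
        fun i _ ↦ by positivity, fun j _ ↦ (hpos j e).le, fun i _ j _ ↦ ?_, ?_⟩
      · by_cases h : i = e
        · simp [h]
        · simpa [h] using ⟨(hc j).le, (hD e).le⟩
      · have htrunc : ∑ j ∈ U, min (c j) (D e) ≤ ∑ j ∈ U, c j :=
          sum_le_sum fun j _ ↦ min_le_left _ _
        simp only [ite_mul, one_mul, zero_mul, sum_ite_eq', mem_insert_self, if_true]
        linarith [hD e]
    · obtain ⟨G, hGU, hup, hhalf, htrunc⟩ :=
        exists_largest_jobs_covering_half c (hD e) U hge
      rcases ih (U \ G) with ⟨a, ha⟩ | ⟨w, y, hw, hy, hwy, hlt⟩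
      · refine Or.inl ⟨fun j ↦ if j ∈ G then some e else a j, fun i hi ↦ ?_⟩
        rcases mem_insert.mp hi with rfl | hi
        · refine hhalf.trans (sum_le_sum_of_subset_of_nonneg (fun j hj ↦ ?_)
            fun j _ _ ↦ (hc j).le)
          simp [hj, hGU hj]
        · refine (ha i hi).trans (sum_le_sum_of_subset_of_nonneg (fun j hj ↦ ?_)
            fun j _ _ ↦ (hc j).le)
          simp only [mem_filter, mem_sdiff] at hj ⊢
          simp [hj]
      · obtain ⟨v, hv, hvR, hvG⟩ :=
          exists_dominating_weight c hc D hD (hD e) M hmax (U \ G) w y hw hy hwy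
        refine Or.inr ⟨fun i ↦ if i = e then v else w i,
          fun j ↦ if j ∈ G then v * min (c j) (D e) else y j, ?_, ?_, ?_, ?_⟩
        · intro i hi
          rcases mem_insert.mp hi with rfl | hi
          · simpa using hv
          · simpa [hne i hi] using hw i hi
        · intro j hj
          by_cases hjG : j ∈ G
          · simpa [hjG] using mul_nonneg hv (hpos j e).le
          · simpa [hjG] using hy j (mem_sdiff.mpr ⟨hj, hjG⟩)
        · intro i hi j hj
          rcases mem_insert.mp hi with rfl | hi <;> by_cases hjG : j ∈ G
          · simp [hjG]
          · simpa [hjG] using hvR j (mem_sdiff.mpr ⟨hj, hjG⟩)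
          · simpa [hjG, hne i hi] using hvG j (hup j hjG) i hi
          · simpa [hjG, hne i hi] using hwy i hi j (mem_sdiff.mpr ⟨hj, hjG⟩)
        · have hG : ∑ j ∈ G, (if j ∈ G then v * min (c j) (D e) else y j) ≤ v * D e := by
            rw [sum_congr rfl fun j hj ↦ if_pos hj, ← mul_sum]
            exact mul_le_mul_of_nonneg_left htrunc hv
          have hR : ∑ j ∈ U \ G, (if j ∈ G then v * min (c j) (D e) else y j) =
              ∑ j ∈ U \ G, y j :=
            sum_congr rfl fun j hj ↦ if_neg (mem_sdiff.mp hj).2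
          have hM : ∑ i ∈ M, (if i = e then v else w i) * D i = ∑ i ∈ M, w i * D i :=
            sum_congr rfl fun i hi ↦ by rw [if_neg (hne i hi)]
          rw [← sum_sdiff hGU, sum_insert heM, hM, hR]
          beta_reduce
          rw [if_pos rfl]
          linarith

/-- The assignment LP is a 2-approximate supply polyhedron for `Q||C_min`: if an integer
supply vector `s` admits a fractional solution `z ≥ 0` with `Σ_i z_{ij} ≤ s_j` and
`Σ_j z_{ij}·min(c_j, D_i) ≥ D_i`, then there is an integral allocation of the supplied jobs
giving every machine `i` total capacity at least `D_i / 2`. -/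
theorem assignmentLP_two_approximate_supply (m n : ℕ)
    (D : Fin m → ℝ) (hD : ∀ i, 0 < D i)
    (c : Fin n → ℝ) (hc : ∀ j, 0 < c j)
    (s : Fin n → ℕ)
    (z : Fin m → Fin n → ℝ) (hz : ∀ i j, 0 ≤ z i j)
    (hA1 : ∀ j, ∑ i, z i j ≤ (s j : ℝ))
    (hA2 : ∀ i, D i ≤ ∑ j, z i j * min (c j) (D i)) :
    ∃ nn : Fin m → Fin n → ℕ,
      (∀ j, ∑ i, nn i j ≤ s j) ∧
      (∀ i, D i / 2 ≤ ∑ j, (nn i j : ℝ) * c j) := by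
  rcases exists_half_assignment_or_dual_certificate (κ := Σ j, Fin (s j)) (fun k ↦ c k.1)
    (fun k ↦ hc k.1) D hD univ univ with ⟨a, ha⟩ | ⟨w, y, hw, hy, hwy, hlt⟩
  · refine ⟨fun i j ↦ #{t : Fin (s j) | a ⟨j, t⟩ = some i}, fun j ↦ ?_, fun i ↦ ?_⟩
    · rw [← card_biUnion]
      · simpa using card_le_univ (α := Fin (s j)) _
      · intro i _ i' _ hii'
        refine disjoint_left.mpr fun t ht ht' ↦ hii' ?_
        simp only [mem_filter] at ht ht'
        exact Option.some_injective _ (ht.2.symm.trans ht'.2)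
    · refine (ha i (mem_univ i)).trans_eq ?_
      rw [sum_filter, Fintype.sum_sigma]
      refine sum_congr rfl fun j _ ↦ ?_
      simp only [← sum_filter, sum_const, nsmul_eq_mul]
  · refine absurd hlt (not_lt.mpr ?_)
    rw [Fintype.sum_sigma]
    calc ∑ i, w i * D i
        ≤ ∑ i, w i * ∑ j, z i j * min (c j) (D i) :=
          sum_le_sum fun i hi ↦ mul_le_mul_of_nonneg_left (hA2 i) (hw i hi)
      _ = ∑ j, ∑ i, z i j * (w i * min (c j) (D i)) := by
          simp_rw [mul_sum]
          rw [sum_comm]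
          exact sum_congr rfl fun j _ ↦ sum_congr rfl fun i _ ↦ by ring
      _ ≤ ∑ j, ∑ t, y ⟨j, t⟩ := sum_le_sum fun j _ ↦ ?_
    have hY : 0 ≤ ∑ t, y ⟨j, t⟩ := sum_nonneg fun t _ ↦ hy _ (mem_univ _)
    rcases Nat.eq_zero_or_pos (s j) with hs | hs
    · have hsum : ∑ i, z i j = 0 :=
        le_antisymm (by simpa [hs] using hA1 j) (sum_nonneg fun i _ ↦ hz i j)
      have hzero := (sum_eq_zero_iff_of_nonneg fun i _ ↦ hz i j).mp hsum
      rw [sum_eq_zero fun i hi ↦ by rw [hzero i hi, zero_mul]]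
      exact hY
    · have hs' : (0 : ℝ) < s j := Nat.cast_pos.mpr hs
      have havg : ∀ i, w i * min (c j) (D i) ≤ (∑ t, y ⟨j, t⟩) / s j := fun i ↦ by
        rw [le_div_iff₀ hs', mul_comm]
        simpa using card_nsmul_le_sum univ (fun t ↦ y ⟨j, t⟩) _
          fun t _ ↦ hwy i (mem_univ i) ⟨j, t⟩ (mem_univ _)
      calc ∑ i, z i j * (w i * min (c j) (D i))
          ≤ ∑ i, z i j * ((∑ t, y ⟨j, t⟩) / s j) :=
            sum_le_sum fun i _ ↦ mul_le_mul_of_nonneg_left (havg i) (hz i j)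
        _ = (∑ i, z i j) * ((∑ t, y ⟨j, t⟩) / s j) := (sum_mul _ _ _).symm
        _ ≤ s j * ((∑ t, y ⟨j, t⟩) / s j) :=
            mul_le_mul_of_nonneg_right (hA1 j) (div_nonneg hY hs'.le)
        _ = ∑ t, y ⟨j, t⟩ := mul_div_cancel₀ _ hs'.ne'
end

section
/- Let there be m machines with demands D_1,…,D_m > 0 and n job types with capacities sorted so that 0 < c_1 ≤ c_2 ≤ ⋯ ≤ c_n. Let s, t ∈ ℝ_{≥0}^n satisfy Σ_{k ≥ j} t_k ≥ Σ_{k ≥ j} s_k for every j ∈ {1,…,n}. If there exists z : {1,…,m} × {1,…,n} → ℝ_{≥0} with Σ_i z_{ij} ≤ s_j for every j and Σ_j z_{ij}·min(c_j, D_i) ≥ D_i for every i, then there exists z' : {1,…,m} × {1,…,n} → ℝ_{≥0} with Σ_i z'_{ij} ≤ t_j for every j and Σ_j z'_{ij}·min(c_j, D_i) ≥ D_i for every i. -/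
open Finset

/-- The sum of the entries of `s` with index at least `j`. -/
noncomputable def suffixSum {n : ℕ} (s : Fin n → ℝ) (j : ℕ) : ℝ :=
  ∑ l with j ≤ (l : Fin n).val, s l

lemma suffixSum_eq_add_succ {n : ℕ} (s : Fin n → ℝ) (j : Fin n) :
    suffixSum s j = s j + suffixSum s (j + 1) := by
  have h : univ.filter (fun l : Fin n => (j : ℕ) ≤ l) =
      insert j (univ.filter (fun l : Fin n => (j : ℕ) + 1 ≤ l)) := by
    ext l
    simp only [mem_filter, mem_univ, true_and, mem_insert, Fin.ext_iff]
    lia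
  rw [suffixSum, suffixSum, h, sum_insert (by simp)]

lemma suffixSum_of_le {n : ℕ} (s : Fin n → ℝ) {j : ℕ} (hj : n ≤ j) : suffixSum s j = 0 := by
  rw [suffixSum, filter_false_of_mem, sum_empty]
  intro l _
  lia

lemma suffixSum_antitone {n : ℕ} {s : Fin n → ℝ} (hs : ∀ j, 0 ≤ s j) :
    Antitone (suffixSum s) := fun a b hab =>
  sum_le_sum_of_subset_of_nonneg
    (fun l hl => by simp only [mem_filter, mem_univ, true_and] at hl ⊢; lia)
    fun l _ _ => hs l

lemma suffixSum_nonneg {n : ℕ} {s : Fin n → ℝ} (hs : ∀ j, 0 ≤ s j) (j : ℕ) :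
    0 ≤ suffixSum s j :=
  sum_nonneg fun l _ => hs l

lemma min_sub_min_le_min_sub_min {a b x y : ℝ} (hab : a ≤ b) (hxy : x ≤ y) :
    min a y - min a x ≤ min b y - min b x := by
  grind

/-- If `t` dominates `s` in suffix sums, the mass of `s` can be transported upwards into `t`. -/
lemma exists_upward_transport {n : ℕ} {s t : Fin n → ℝ} (hs : ∀ j, 0 ≤ s j) (ht : ∀ j, 0 ≤ t j)
    (hdom : ∀ j : Fin n, ∑ l with j ≤ l, s l ≤ ∑ l with j ≤ l, t l) :
    ∃ f : Fin n → Fin n → ℝ, (∀ j k, 0 ≤ f j k) ∧ (∀ j k, k < j → f j k = 0) ∧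
      (∀ j, ∑ k, f j k = s j) ∧ (∀ k, ∑ j, f j k ≤ t k) := by
  have hST (j : ℕ) : suffixSum s j ≤ suffixSum t j := by
    rcases lt_or_ge j n with hj | hj
    · exact hdom ⟨j, hj⟩
    · rw [suffixSum_of_le s hj, suffixSum_of_le t hj]
  have hS := suffixSum_antitone hs
  have hT := suffixSum_antitone ht
  have hS0 := suffixSum_nonneg hs
  have hT0 := suffixSum_nonneg ht
  have hSs := suffixSum_eq_add_succ s
  have hTt := suffixSum_eq_add_succ t
  have hSn := suffixSum_of_le s le_rfl
  have hTn := suffixSum_of_le t le_rfl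
  generalize suffixSum s = S at *
  generalize suffixSum t = T at *
  -- the length of the overlap of the intervals `[S (j + 1), S j]` and `[T (k + 1), T k]`
  refine ⟨fun j k => (min (S j) (T k) - min (S j) (T (k + 1))) -
    (min (S (j + 1)) (T k) - min (S (j + 1)) (T (k + 1))), fun j k => ?_, fun j k hkj => ?_,
    fun j => ?_, fun k => ?_⟩
  · exact sub_nonneg.2
      (min_sub_min_le_min_sub_min (hS (Nat.le_succ _)) (hT (Nat.le_succ _)))
  · have h1 : S j ≤ T (k + 1) := (hST j).trans (hT hkj)
    have h2 : T (k + 1) ≤ T k := hT (Nat.le_succ _)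
    have h3 : S (j + 1) ≤ S j := hS (Nat.le_succ _)
    simp only
    rw [min_eq_left h1, min_eq_left (h1.trans h2), min_eq_left (h3.trans h1),
      min_eq_left (h3.trans (h1.trans h2))]
    ring
  · have h1 (i : ℕ) : S i ≤ T 0 := (hS (Nat.zero_le _)).trans (hST 0)
    rw [sum_sub_distrib,
      Fin.sum_univ_eq_sum_range (fun k => min (S j) (T k) - min (S j) (T (k + 1))),
      Fin.sum_univ_eq_sum_range (fun k => min (S (j + 1)) (T k) - min (S (j + 1)) (T (k + 1))),
      sum_range_sub' (fun k => min (S j) (T k)), sum_range_sub' (fun k => min (S (j + 1)) (T k)),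
      hTn, min_eq_left (h1 _), min_eq_left (h1 _), min_eq_right (hS0 _), min_eq_right (hS0 _)]
    linarith [hSs j]
  · rw [Fin.sum_univ_eq_sum_range (fun j => (min (S j) (T k) - min (S j) (T (k + 1))) -
        (min (S (j + 1)) (T k) - min (S (j + 1)) (T (k + 1)))),
      sum_range_sub' (fun j => min (S j) (T k) - min (S j) (T (k + 1))), hSn,
      min_eq_left (hT0 _), min_eq_left (hT0 _)]
    have h2 : T (k + 1) ≤ T k := hT (Nat.le_succ _)
    grind

/-- The assignment LP polyhedron `P_ass` for `Q||C_min` is upward-feasible: if the supply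
vector `t` dominates `s` in suffix sums (capacities sorted increasingly) and `s ∈ P_ass`,
then `t ∈ P_ass`. -/
theorem assignmentLP_upward_feasible (m n : ℕ)
    (D : Fin m → ℝ) (hD : ∀ i, 0 < D i)
    (c : Fin n → ℝ) (hc : ∀ j, 0 < c j) (hmono : Monotone c)
    (s t : Fin n → ℝ) (hs : ∀ j, 0 ≤ s j) (ht : ∀ j, 0 ≤ t j)
    (hdom : ∀ j : Fin n,
      ∑ l ∈ Finset.univ.filter (fun l => j ≤ l), s l ≤
        ∑ l ∈ Finset.univ.filter (fun l => j ≤ l), t l)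
    (z : Fin m → Fin n → ℝ) (hz : ∀ i j, 0 ≤ z i j)
    (hA1 : ∀ j, ∑ i, z i j ≤ s j)
    (hA2 : ∀ i, D i ≤ ∑ j, z i j * min (c j) (D i)) :
    ∃ z' : Fin m → Fin n → ℝ,
      (∀ i j, 0 ≤ z' i j) ∧
      (∀ j, ∑ i, z' i j ≤ t j) ∧
      (∀ i, D i ≤ ∑ j, z' i j * min (c j) (D i)) := by
  obtain ⟨f, hf0, hfup, hfs, hft⟩ := exists_upward_transport hs ht hdom
  have hzs (i j) : z i j / s j * s j = z i j := by
    refine div_mul_cancel_of_imp fun h => le_antisymm ?_ (hz i j)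
    exact (single_le_sum (fun i _ => hz i j) (mem_univ i)).trans ((hA1 j).trans h.le)
  have hq (i j) : 0 ≤ z i j / s j := div_nonneg (hz i j) (hs j)
  refine ⟨fun i k => ∑ j, z i j / s j * f j k,
    fun i k => sum_nonneg fun j _ => mul_nonneg (hq i j) (hf0 j k), fun k => ?_, fun i => ?_⟩
  · rw [sum_comm]
    refine (sum_le_sum fun j _ => ?_).trans (hft k)
    rw [← sum_mul, ← sum_div]
    exact mul_le_of_le_one_left (hf0 j k) (div_le_one_of_le₀ (hA1 j) (hs j))
  · refine (hA2 i).trans ?_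
    simp only [sum_mul]
    rw [sum_comm]
    refine sum_le_sum fun j _ => ?_
    calc z i j * min (c j) (D i) = ∑ k, z i j / s j * f j k * min (c j) (D i) := by
          rw [← sum_mul, ← mul_sum, hfs, hzs]
      _ ≤ ∑ k, z i j / s j * f j k * min (c k) (D i) := by
          refine sum_le_sum fun k _ => ?_
          rcases lt_or_ge k j with hkj | hjk
          · simp [hfup j k hkj]
          · exact mul_le_mul_of_nonneg_left (min_le_min_right _ (hmono hjk))
              (mul_nonneg (hq i j) (hf0 j k))
end

section
/- Let there be m machines with demands D_1,…,D_m > 0 and cardinality bounds f_1,…,f_m ∈ ℕ, and n job types with capacities sorted so that 0 < c_1 ≤ c_2 ≤ ⋯ ≤ c_n. Let s, t ∈ ℝ_{≥0}^n satisfy Σ_{k ≥ j} t_k ≥ Σ_{k ≥ j} s_k for every j ∈ {1,…,n}. If there exists a fractional configuration solution for the supply vector s, then there exists a fractional configuration solution for the supply vector t. -/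
open Finset

/-- A fractional configuration-LP solution for a CCKP instance (`m` machines with demands
`D` and cardinality bounds `f`, `n` job types with capacities `c`) and supply vector `s`:
a finitely supported family `z(i, S) ≥ 0` over configurations `S` (multisets of job types,
encoded as functions `Fin n → ℕ`, with `|S| ≤ f i` and total capacity at least `D i`),
with `Σ_S z(i,S) = 1` for every machine `i` and `Σ_{i,S} z(i,S)·S(j) ≤ s j` for every `j`. -/
def ConfigSol (m n : ℕ) (D : Fin m → ℝ) (f : Fin m → ℕ) (c : Fin n → ℝ)
    (s : Fin n → ℝ) : Prop :=
  ∃ (𝒮 : Finset (Fin n → ℕ)) (z : Fin m → (Fin n → ℕ) → ℝ),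
    (∀ i S, 0 ≤ z i S) ∧
    (∀ i S, S ∉ 𝒮 → z i S = 0) ∧
    (∀ i S, 0 < z i S → (∑ j, S j ≤ f i ∧ D i ≤ ∑ j, (S j : ℝ) * c j)) ∧
    (∀ i, ∑ S ∈ 𝒮, z i S = 1) ∧
    (∀ j, ∑ i, ∑ S ∈ 𝒮, z i S * (S j : ℝ) ≤ s j)

namespace ConfigSol

variable {m n : ℕ} {D : Fin m → ℝ} {f : Fin m → ℕ} {c s t : Fin n → ℝ}

theorem mono (h : ConfigSol m n D f c s) (hst : s ≤ t) : ConfigSol m n D f c t := by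
  obtain ⟨𝒮, z, h0, hsupp, hconf, hone, hsup⟩ := h
  exact ⟨𝒮, z, h0, hsupp, hconf, hone, fun j => (hsup j).trans (hst j)⟩

/-- The supply vectors admitting a fractional configuration solution form a convex set. -/
theorem convexComb (hs : ConfigSol m n D f c s) (ht : ConfigSol m n D f c t) {α β : ℝ}
    (hα : 0 ≤ α) (hβ : 0 ≤ β) (hαβ : α + β = 1) :
    ConfigSol m n D f c (α • s + β • t) := by
  obtain ⟨𝒮, z, hz0, hzsupp, hzconf, hzone, hzsup⟩ := hs
  obtain ⟨𝒯, w, hw0, hwsupp, hwconf, hwone, hwsup⟩ := ht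
  have hzsum (i : Fin m) (g : (Fin n → ℕ) → ℝ) :
      ∑ S ∈ 𝒮 ∪ 𝒯, z i S * g S = ∑ S ∈ 𝒮, z i S * g S :=
    (sum_subset subset_union_left fun S _ hS => by rw [hzsupp i S hS, zero_mul]).symm
  have hwsum (i : Fin m) (g : (Fin n → ℕ) → ℝ) :
      ∑ S ∈ 𝒮 ∪ 𝒯, w i S * g S = ∑ S ∈ 𝒯, w i S * g S :=
    (sum_subset subset_union_right fun S _ hS => by rw [hwsupp i S hS, zero_mul]).symm
  have hsum (i : Fin m) (g : (Fin n → ℕ) → ℝ) :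
      ∑ S ∈ 𝒮 ∪ 𝒯, (α * z i S + β * w i S) * g S =
        α * ∑ S ∈ 𝒮, z i S * g S + β * ∑ S ∈ 𝒯, w i S * g S := by
    rw [← hzsum, ← hwsum, mul_sum, mul_sum, ← sum_add_distrib]
    exact sum_congr rfl fun S _ => by ring
  refine ⟨𝒮 ∪ 𝒯, fun i S => α * z i S + β * w i S, fun i S => ?_, fun i S hS => ?_,
    fun i S hS => ?_, fun i => ?_, fun j => ?_⟩
  · have := hz0 i S
    have := hw0 i S
    positivity
  · rw [mem_union, not_or] at hS
    simp [hzsupp i S hS.1, hwsupp i S hS.2]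
  · rcases (hz0 i S).lt_or_eq with hz | hz
    · exact hzconf i S hz
    rcases (hw0 i S).lt_or_eq with hw | hw
    · exact hwconf i S hw
    · simp [← hz, ← hw] at hS
  · simpa [hzone, hwone, hαβ] using hsum i fun _ => 1
  · simp only [hsum _ fun S => (S j : ℝ), sum_add_distrib, ← mul_sum, Pi.add_apply, Pi.smul_apply,
      smul_eq_mul]
    exact add_le_add (mul_le_mul_of_nonneg_left (hzsup j) hα)
      (mul_le_mul_of_nonneg_left (hwsup j) hβ)

/-- Replacing every job of type `k` by one of type `φ k` of at least the same capacity transports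
solutions along with the supply. -/
theorem pushforward (h : ConfigSol m n D f c s) (φ : Fin n → Fin n) (hφ : ∀ k, c k ≤ c (φ k)) :
    ConfigSol m n D f c (fun j => ∑ k with φ k = j, s k) := by
  classical
  obtain ⟨𝒮, z, h0, hsupp, hconf, hone, hsup⟩ := h
  set g : (Fin n → ℕ) → Fin n → ℕ := fun S j => ∑ k with φ k = j, S k with hg
  have hsum (i : Fin m) (F : (Fin n → ℕ) → ℝ) :
      ∑ T ∈ 𝒮.image g, (∑ S ∈ 𝒮 with g S = T, z i S) * F T = ∑ S ∈ 𝒮, z i S * F (g S) := by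
    rw [← sum_fiberwise_of_maps_to (s := 𝒮) (fun S hS => mem_image_of_mem g hS)]
    refine sum_congr rfl fun T _ => ?_
    rw [sum_mul]
    exact sum_congr rfl fun S hS => by rw [(mem_filter.1 hS).2]
  refine ⟨𝒮.image g, fun i T => ∑ S ∈ 𝒮 with g S = T, z i S,
    fun i T => sum_nonneg fun S _ => h0 i S, fun i T hT => ?_, fun i T hT => ?_, fun i => ?_,
    fun j => ?_⟩
  · refine sum_eq_zero fun S hS => absurd ?_ hT
    rw [mem_filter] at hS
    exact mem_image.2 ⟨S, hS⟩
  · obtain ⟨S, hS, hpos⟩ := exists_lt_of_sum_lt (f := fun _ => (0 : ℝ)) (by simpa using hT)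
    obtain ⟨hcard, hcap⟩ := hconf i S hpos
    obtain rfl := (mem_filter.1 hS).2
    refine ⟨(sum_fiberwise univ φ S).trans_le hcard, hcap.trans ?_⟩
    calc ∑ k, (S k : ℝ) * c k ≤ ∑ k, (S k : ℝ) * c (φ k) :=
          sum_le_sum fun k _ => mul_le_mul_of_nonneg_left (hφ k) (Nat.cast_nonneg _)
      _ = ∑ j, ∑ k with φ k = j, (S k : ℝ) * c (φ k) := (sum_fiberwise univ φ _).symm
      _ = ∑ j, (g S j : ℝ) * c j := by
          refine sum_congr rfl fun j _ => ?_
          rw [hg, Nat.cast_sum, sum_mul]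
          exact sum_congr rfl fun k hk => by rw [(mem_filter.1 hk).2]
  · simpa [hone] using hsum i fun _ => 1
  · simp only [hsum _ fun T => (T j : ℝ)]
    calc ∑ i, ∑ S ∈ 𝒮, z i S * (g S j : ℝ)
        = ∑ k with φ k = j, ∑ i, ∑ S ∈ 𝒮, z i S * (S k : ℝ) := by
          simp only [hg, Nat.cast_sum, mul_sum]
          rw [sum_comm]
          simp only [sum_comm (s := univ.filter fun k => φ k = j)]
          rw [sum_comm]
      _ ≤ ∑ k with φ k = j, s k := sum_le_sum fun k _ => hsup k

/-- Part of the supply of one type may be exchanged for supply of a type of larger capacity. -/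
theorem shift (h : ConfigSol m n D f c s) {a b : Fin n} (hab : c a ≤ c b) {δ : ℝ} (hδ : 0 ≤ δ)
    (hδs : δ ≤ s a) : ConfigSol m n D f c (s - Pi.single a δ + Pi.single b δ) := by
  rcases hδ.eq_or_lt with rfl | hδ
  · simpa using h
  have hsa : 0 < s a := hδ.trans_le hδs
  have hpush := h.pushforward (Function.update id a b) fun k => by
    rcases eq_or_ne k a with rfl | hk
    · simpa using hab
    · simp [hk]
  have hmoved : (fun j => ∑ k with Function.update id a b k = j, s k) =
      s - Pi.single a (s a) + Pi.single b (s a) := by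
    ext j
    have hterm (k : Fin n) : (if Function.update id a b k = j then s k else 0) =
        (if k = j then s k else 0) + if k = a then
          (Pi.single b (s a) : Fin n → ℝ) j - (Pi.single a (s a) : Fin n → ℝ) j else 0 := by
      rcases eq_or_ne k a with rfl | hk
      · simp only [Function.update_self, if_true, Pi.single_apply, eq_comm (a := j)]
        ring
      · simp [hk]
    rw [sum_filter, sum_congr rfl fun k _ => hterm k, sum_add_distrib]
    simp only [sum_ite_eq', mem_univ, if_true, Pi.add_apply, Pi.sub_apply]
    ring
  rw [hmoved] at hpush
  have hratio : δ / s a ≤ 1 := (div_le_one hsa).2 hδs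
  convert h.convexComb hpush (sub_nonneg.2 hratio) (by positivity) (sub_add_cancel 1 (δ / s a))
    using 1
  ext j
  simp only [Pi.add_apply, Pi.sub_apply, Pi.smul_apply, smul_eq_mul, Pi.single_apply]
  split_ifs <;> field_simp <;> ring

end ConfigSol

/-- A family of vectors closed under increasing entries and under shifting nonnegative mass to
larger indices is closed under domination of suffix sums. -/
theorem suffixSum_dominance_induction {ι : Type*} [Fintype ι] [LinearOrder ι]
    {K : (ι → ℝ) → Prop} {t : ι → ℝ} (hK : ∀ s, K s → s ≤ t → K t)
    (hshift : ∀ s a b δ, K s → a < b → 0 ≤ δ → δ ≤ s a →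
      K (s - Pi.single a δ + Pi.single b δ))
    (ht : 0 ≤ t) (s : ι → ℝ) (hs : K s)
    (hdom : ∀ j, ∑ l with j ≤ l, s l ≤ ∑ l with j ≤ l, t l) : K t := by
  induction hN : #{k | s k ≠ t k} using Nat.strong_induction_on generalizing s with
  | _ N ih =>
  by_cases hst : s ≤ t
  · exact hK s hs hst
  have hne : (univ.filter fun k => t k < s k).Nonempty := by
    simpa [Pi.le_def, Finset.Nonempty] using hst
  obtain ⟨a, ha, hmax⟩ := exists_max_image _ id hne
  have hta : t a < s a := (mem_filter.1 ha).2
  have hle (k : ι) (hk : a < k) : s k ≤ t k := by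
    by_contra! hlt
    exact hk.not_ge (hmax k (mem_filter.2 ⟨mem_univ k, hlt⟩))
  obtain ⟨b, hab, hb⟩ : ∃ b, a < b ∧ s b < t b := by
    by_contra! hge
    refine (hdom a).not_gt (sum_lt_sum (fun k hk => ?_) ⟨a, by simp, hta⟩)
    rcases (mem_filter.1 hk).2.eq_or_lt with rfl | hk
    · exact hta.le
    · exact hge k hk
  set δ := min (s a - t a) (t b - s b) with hδ
  have hδ0 : 0 ≤ δ := le_min (by linarith) (by linarith)
  have hδa : δ ≤ s a - t a := min_le_left _ _
  have hδb : δ ≤ t b - s b := min_le_right _ _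
  have hta0 : 0 ≤ t a := ht a
  set s' := s - Pi.single a δ + Pi.single b δ with hs'
  have hs'a : s' a = s a - δ := by simp [hs', hab.ne]
  have hs'b : s' b = s b + δ := by simp [hs', hab.ne']
  have hs'k (k : ι) (hka : k ≠ a) (hkb : k ≠ b) : s' k = s k := by simp [hs', hka, hkb]
  refine ih _ ?_ s' (hshift s a b δ hs hab hδ0 (by linarith)) (fun j => ?_) rfl
  · rw [← hN]
    refine card_lt_card (ssubset_iff_of_subset (fun k hk => ?_) |>.2 ?_)
    · simp only [mem_filter_univ] at hk ⊢
      rcases eq_or_ne k a with rfl | hka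
      · exact hta.ne'
      rcases eq_or_ne k b with rfl | hkb
      · exact hb.ne
      rwa [← hs'k k hka hkb]
    · rcases min_choice (s a - t a) (t b - s b) with h | h
      · exact ⟨a, by simpa using hta.ne', by simp [hs'a, hδ, h]⟩
      · exact ⟨b, by simpa using hb.ne, by simp [hs'b, hδ, h]⟩
  · rcases le_or_gt j a with hj | hj
    · refine le_of_eq_of_le ?_ (hdom j)
      simp [hs', sum_add_distrib, sum_sub_distrib, hj, hj.trans hab.le]
    · refine sum_le_sum fun k hk => ?_
      have hak : a < k := hj.trans_le (mem_filter.1 hk).2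
      rcases eq_or_ne k b with rfl | hkb
      · linarith
      · rw [hs'k k hak.ne' hkb]
        exact hle k hak

/-- The configuration polyhedron `P_conf` for CCKP is upward-feasible: if the supply vector
`t` dominates `s` in suffix sums (capacities sorted increasingly) and `s` admits a fractional
configuration solution, then so does `t`. -/
theorem configLP_upward_feasible (m n : ℕ)
    (D : Fin m → ℝ) (hD : ∀ i, 0 < D i)
    (f : Fin m → ℕ)
    (c : Fin n → ℝ) (hc : ∀ j, 0 < c j) (hmono : Monotone c)
    (s t : Fin n → ℝ) (hs : ∀ j, 0 ≤ s j) (ht : ∀ j, 0 ≤ t j)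
    (hdom : ∀ j : Fin n,
      ∑ l ∈ Finset.univ.filter (fun l => j ≤ l), s l ≤
        ∑ l ∈ Finset.univ.filter (fun l => j ≤ l), t l)
    (hsol : ConfigSol m n D f c s) :
    ConfigSol m n D f c t := by
  exact suffixSum_dominance_induction (K := ConfigSol m n D f c) (fun _ h hle => h.mono hle)
    (fun _ _ _ _ h hab hδ hδs => h.shift (hmono hab.le) hδ hδs) ht s hsol hdom
end

section
/- There is an absolute constant A > 0 with the following property. Let there be m machines with demands D_1,…,D_m > 0 and cardinality bounds f_1,…,f_m ∈ ℕ, and n job types with capacities c_1,…,c_n > 0, and let s ∈ ℕ^n be an integer supply vector. If there exists a fractional configuration solution for s, then there exist nonnegative integers n_{ij} with Σ_i n_{ij} ≤ s_j for every job type j, Σ_j n_{ij} ≤ f_i for every machine i, and Σ_j n_{ij}·c_j ≥ D_i / (A·(1 + ln(max_i D_i / min_i D_i))) for every machine i. -/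
open Finset

/-- A fractional solution in which machine `i` receives mass `y i` of single large jobs (`b`)
and mass `1 - y i` of configurations of small jobs (`x`); a job is large for the demand class
`k` if its capacity is at least `τ k`. -/
structure IsSplitSol {ι J : Type*} [Fintype ι] [Fintype J] {K : ℕ} (κ : ι → Fin K)
    (d τ : Fin K → ℝ) (f : ι → ℕ) (c s : J → ℝ) (x b : ι → J → ℝ) (y : ι → ℝ) : Prop where
  x_nonneg : ∀ i j, 0 ≤ x i j
  b_nonneg : ∀ i j, 0 ≤ b i j
  y_nonneg : ∀ i, 0 ≤ y i
  y_le_one : ∀ i, y i ≤ 1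
  x_small : ∀ i j, τ (κ i) ≤ c j → x i j = 0
  b_large : ∀ i j, c j < τ (κ i) → b i j = 0
  sum_b : ∀ i, ∑ j, b i j = y i
  sum_x : ∀ i, ∑ j, x i j ≤ f i * (1 - y i)
  demand : ∀ i, d (κ i) * (1 - y i) ≤ ∑ j, x i j * c j
  supply : ∀ j, ∑ i, (x i j + b i j) ≤ s j

/-- Changing a function at two points without changing the sum of the two values preserves
the total sum. -/
lemma sum_eq_sum_of_pair {ι : Type*} [Fintype ι] [DecidableEq ι] {F G : ι → ℝ} {p q : ι}
    (hpq : p ≠ q) (hoff : ∀ i, i ≠ p → i ≠ q → F i = G i) (hpair : F p + F q = G p + G q) :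
    ∑ i, F i = ∑ i, G i := by
  rw [← Finset.sum_add_sum_compl {p, q} F, ← Finset.sum_add_sum_compl {p, q} G,
    Finset.sum_pair hpq, Finset.sum_pair hpq, hpair]
  congr 1
  refine Finset.sum_congr rfl fun i hi => ?_
  simp only [Finset.mem_compl, Finset.mem_insert, Finset.mem_singleton, not_or] at hi
  exact hoff i hi.1 hi.2

/-- Two machines of the same class with fractional large mass can trade small against large
mass until one of them becomes integral. -/
lemma IsSplitSol.exchange {ι J : Type*} [Fintype ι] [DecidableEq ι] [Fintype J] {K : ℕ}
    {κ : ι → Fin K} {d τ : Fin K → ℝ} {f : ι → ℕ} {c s : J → ℝ} {x b : ι → J → ℝ} {y : ι → ℝ}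
    (h : IsSplitSol κ d τ f c s x b y) {p q : ι} (hpq : p ≠ q) (hκ : κ p = κ q)
    (hf : f p ≤ f q) (hp : y p < 1) (hq : 0 < y q) :
    ∃ x' b' y', IsSplitSol κ d τ f c s x' b' y' ∧ (∀ i, i ≠ p → i ≠ q → y' i = y i) ∧
      (y' p = 1 ∨ y' q = 0) := by
  obtain ⟨ε, hε⟩ : ∃ ε, ε = min (1 - y p) (y q) := ⟨_, rfl⟩
  have hε0 : 0 ≤ ε := by rw [hε]; exact le_min (by linarith) hq.le
  have hε1 : ε ≤ 1 - y p := hε ▸ min_le_left _ _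
  have hε2 : ε ≤ y q := hε ▸ min_le_right _ _
  obtain ⟨α, hα⟩ : ∃ α, α = ε / (1 - y p) := ⟨_, rfl⟩
  obtain ⟨β, hβ⟩ : ∃ β, β = ε / y q := ⟨_, rfl⟩
  have hp' : 0 < 1 - y p := by linarith
  have hα0 : 0 ≤ α := hα ▸ div_nonneg hε0 hp'.le
  have hβ0 : 0 ≤ β := hβ ▸ div_nonneg hε0 hq.le
  have hα1 : α ≤ 1 := hα ▸ (div_le_one hp').2 hε1
  have hβ1 : β ≤ 1 := hβ ▸ (div_le_one hq).2 hε2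
  have hαε : α * (1 - y p) = ε := by rw [hα]; field_simp
  have hβε : β * y q = ε := by rw [hβ]; field_simp
  have hfR : (f p : ℝ) ≤ f q := by exact_mod_cast hf
  have hqp : q ≠ p := hpq.symm
  let x' : ι → J → ℝ := fun i j =>
    if i = p then (1 - α) * x p j else if i = q then x q j + α * x p j else x i j
  let b' : ι → J → ℝ := fun i j =>
    if i = p then b p j + β * b q j else if i = q then (1 - β) * b q j else b i j
  let y' : ι → ℝ := fun i => if i = p then y p + ε else if i = q then y q - ε else y i
  have xp : ∀ j, x' p j = (1 - α) * x p j := fun j => by simp [x']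
  have xq : ∀ j, x' q j = x q j + α * x p j := fun j => by simp [x', hqp]
  have xo : ∀ i, i ≠ p → i ≠ q → x' i = x i := fun i h1 h2 => by ext j; simp [x', h1, h2]
  have bp : ∀ j, b' p j = b p j + β * b q j := fun j => by simp [b']
  have bq : ∀ j, b' q j = (1 - β) * b q j := fun j => by simp [b', hqp]
  have bo : ∀ i, i ≠ p → i ≠ q → b' i = b i := fun i h1 h2 => by ext j; simp [b', h1, h2]
  have yp : y' p = y p + ε := by simp [y']
  have yq : y' q = y q - ε := by simp [y', hqp]
  have yo : ∀ i, i ≠ p → i ≠ q → y' i = y i := fun i h1 h2 => by simp [y', h1, h2]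
  have cases3 : ∀ {P : ι → Prop}, P p → P q → (∀ i, i ≠ p → i ≠ q → P i) → ∀ i, P i := by
    intro P h1 h2 h3 i
    by_cases hip : i = p
    · exact hip ▸ h1
    by_cases hiq : i = q
    · exact hiq ▸ h2
    exact h3 i hip hiq
  refine ⟨x', b', y', ⟨?_, ?_, ?_, ?_, ?_, ?_, ?_, ?_, ?_, ?_⟩, yo, ?_⟩
  · refine cases3 (fun j => ?_) (fun j => ?_) fun i h1 h2 j => ?_
    · rw [xp]; exact mul_nonneg (by linarith) (h.x_nonneg _ _)
    · rw [xq]; exact add_nonneg (h.x_nonneg _ _) (mul_nonneg hα0 (h.x_nonneg _ _))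
    · rw [xo i h1 h2]; exact h.x_nonneg _ _
  · refine cases3 (fun j => ?_) (fun j => ?_) fun i h1 h2 j => ?_
    · rw [bp]; exact add_nonneg (h.b_nonneg _ _) (mul_nonneg hβ0 (h.b_nonneg _ _))
    · rw [bq]; exact mul_nonneg (by linarith) (h.b_nonneg _ _)
    · rw [bo i h1 h2]; exact h.b_nonneg _ _
  · refine cases3 ?_ ?_ fun i h1 h2 => ?_
    · rw [yp]; linarith [h.y_nonneg p]
    · rw [yq]; linarith
    · rw [yo i h1 h2]; exact h.y_nonneg _
  · refine cases3 ?_ ?_ fun i h1 h2 => ?_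
    · rw [yp]; linarith
    · rw [yq]; linarith [h.y_le_one q]
    · rw [yo i h1 h2]; exact h.y_le_one _
  · refine cases3 (fun j hj => ?_) (fun j hj => ?_) fun i h1 h2 j hj => ?_
    · rw [xp, h.x_small p j hj, mul_zero]
    · rw [xq, h.x_small p j (hκ ▸ hj), h.x_small q j hj, mul_zero, add_zero]
    · rw [xo i h1 h2]; exact h.x_small i j hj
  · refine cases3 (fun j hj => ?_) (fun j hj => ?_) fun i h1 h2 j hj => ?_
    · rw [bp, h.b_large p j hj, h.b_large q j (hκ ▸ hj), mul_zero, add_zero]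
    · rw [bq, h.b_large q j hj, mul_zero]
    · rw [bo i h1 h2]; exact h.b_large i j hj
  · refine cases3 ?_ ?_ fun i h1 h2 => ?_
    · simp only [bp, yp, Finset.sum_add_distrib, ← Finset.mul_sum, h.sum_b, hβε]
    · simp only [bq, yq, ← Finset.mul_sum, h.sum_b]; linarith
    · rw [bo i h1 h2, yo i h1 h2]; exact h.sum_b i
  · refine cases3 ?_ ?_ fun i h1 h2 => ?_
    · simp only [xp, yp, ← Finset.mul_sum]
      calc (1 - α) * ∑ j, x p j ≤ (1 - α) * (f p * (1 - y p)) :=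
            mul_le_mul_of_nonneg_left (h.sum_x p) (by linarith)
        _ = f p * (1 - (y p + ε)) := by rw [← hαε]; ring
    · simp only [xq, yq, Finset.sum_add_distrib, ← Finset.mul_sum]
      have h1 : α * ∑ j, x p j ≤ f q * ε :=
        calc α * ∑ j, x p j ≤ α * (f p * (1 - y p)) :=
              mul_le_mul_of_nonneg_left (h.sum_x p) hα0
          _ = f p * ε := by rw [← hαε]; ring
          _ ≤ f q * ε := mul_le_mul_of_nonneg_right hfR hε0
      linarith [h.sum_x q]
    · rw [xo i h1 h2, yo i h1 h2]; exact h.sum_x i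
  · refine cases3 ?_ ?_ fun i h1 h2 => ?_
    · simp only [xp, yp, mul_assoc, ← Finset.mul_sum]
      calc d (κ p) * (1 - (y p + ε)) = (1 - α) * (d (κ p) * (1 - y p)) := by
            rw [← hαε]; ring
        _ ≤ _ := mul_le_mul_of_nonneg_left (h.demand p) (by linarith)
    · simp only [xq, yq, add_mul, mul_assoc, Finset.sum_add_distrib, ← Finset.mul_sum]
      have h1 : d (κ q) * ε ≤ α * ∑ j, x p j * c j :=
        calc d (κ q) * ε = α * (d (κ p) * (1 - y p)) := by rw [← hαε, hκ]; ring
          _ ≤ _ := mul_le_mul_of_nonneg_left (h.demand p) hα0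
      linarith [h.demand q]
    · rw [xo i h1 h2, yo i h1 h2]; exact h.demand i
  · intro j
    refine le_of_eq_of_le (sum_eq_sum_of_pair hpq (fun i h1 h2 => ?_) ?_) (h.supply j)
    · rw [xo i h1 h2, bo i h1 h2]
    · rw [xp, xq, bp, bq]; ring
  · rw [yp, yq, hε]
    rcases min_choice (1 - y p) (y q) with h1 | h1 <;> rw [h1]
    · left; ring
    · right; ring

/-- A split solution can be chosen with at most one fractional machine per demand class. -/
lemma IsSplitSol.exists_fractional_unique {ι J : Type*} [Fintype ι] [DecidableEq ι] [Fintype J]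
    {K : ℕ} {κ : ι → Fin K} {d τ : Fin K → ℝ} {f : ι → ℕ} {c s : J → ℝ} {x b : ι → J → ℝ}
    {y : ι → ℝ} (h : IsSplitSol κ d τ f c s x b y) :
    ∃ x' b' y', IsSplitSol κ d τ f c s x' b' y' ∧
      ∀ p q, 0 < y' p → y' p < 1 → 0 < y' q → y' q < 1 → κ p = κ q → p = q := by
  induction hN : (univ.filter fun i => 0 < y i ∧ y i < 1).card using Nat.strong_induction_on
    generalizing x b y with
  | _ N ih =>
    by_cases hu : ∀ p q, 0 < y p → y p < 1 → 0 < y q → y q < 1 → κ p = κ q → p = q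
    · exact ⟨x, b, y, h, hu⟩
    push Not at hu
    obtain ⟨p, q, hp0, hp1, hq0, hq1, hκ, hpq⟩ := hu
    wlog hf : f p ≤ f q generalizing p q
    · exact this q p hq0 hq1 hp0 hp1 hκ.symm hpq.symm (le_of_not_ge hf)
    obtain ⟨x', b', y', h', ho, hor⟩ := h.exchange hpq hκ hf hp1 hq0
    refine ih _ ?_ h' rfl
    rw [← hN]
    refine Finset.card_lt_card (Finset.ssubset_iff_subset_ne.2 ⟨fun i hi => ?_, fun heq => ?_⟩)
    · simp only [mem_filter, mem_univ, true_and] at hi ⊢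
      by_cases hip : i = p
      · exact hip ▸ ⟨hp0, hp1⟩
      by_cases hiq : i = q
      · exact hiq ▸ ⟨hq0, hq1⟩
      rwa [ho i hip hiq] at hi
    · have hp := (Finset.ext_iff.1 heq p).2 (by simp [hp0, hp1])
      have hq := (Finset.ext_iff.1 heq q).2 (by simp [hq0, hq1])
      simp only [mem_filter, mem_univ, true_and] at hp hq
      rcases hor with h1 | h1
      · linarith [hp.2]
      · linarith [hq.1]

/-- Greedy slots: the fractional bundle `x` of jobs of capacity at most `τ` can be replaced by
`⌊∑ x⌋` slots with capacity thresholds `θ`, such that the first `g + 1` slots are covered by jobs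
meeting the threshold of slot `g`, at a total loss of at most `τ`. -/
lemma exists_slot_thresholds {J : Type*} [DecidableEq J] (c x : J → ℝ) (τ : ℝ)
    (hx : ∀ j, 0 ≤ x j) (T : Finset J) :
    (∀ j ∈ T, c j ≤ τ) →
    ∃ θ : ℕ → ℝ,
      (∀ g < ⌊∑ j ∈ T, x j⌋₊, (g : ℝ) + 1 ≤ ∑ j ∈ T.filter (fun j => θ g ≤ c j), x j) ∧
      ∀ a ≤ τ, (∀ j ∈ T, a ≤ c j) →
        ∑ j ∈ T, x j * c j - τ + a * (1 - (∑ j ∈ T, x j - ⌊∑ j ∈ T, x j⌋₊)) ≤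
          ∑ g ∈ range ⌊∑ j ∈ T, x j⌋₊, θ g := by
  induction T using Finset.induction_on_min_value c with
  | empty => exact fun _ => ⟨fun _ => 0, by simp, fun a ha _ => by simpa using ha⟩
  | insert a T ha hmin ih =>
    intro hτ
    obtain ⟨θ, hθ, hsum⟩ := ih fun j hj => hτ j (mem_insert_of_mem hj)
    have hX : 0 ≤ ∑ j ∈ T, x j := sum_nonneg fun j _ => hx j
    rw [sum_insert ha, sum_insert ha]
    obtain ⟨X, hXdef⟩ : ∃ X, X = ∑ j ∈ T, x j := ⟨_, rfl⟩
    rw [← hXdef] at hθ hsum hX ⊢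
    have hle : ⌊X⌋₊ ≤ ⌊x a + X⌋₊ := Nat.floor_le_floor (by linarith [hx a])
    refine ⟨fun g => if g < ⌊X⌋₊ then θ g else c a, fun g hg => ?_, fun a' _ hmin' => ?_⟩
    · by_cases hgX : g < ⌊X⌋₊
      · simp only [hgX, if_true]
        refine (hθ g hgX).trans (sum_le_sum_of_subset_of_nonneg
          (filter_subset_filter _ (subset_insert _ _)) fun j _ _ => hx j)
      · simp only [hgX, if_false]
        rw [filter_true_of_mem, sum_insert ha, ← hXdef]
        · have := (Nat.le_floor_iff (by linarith [hx a])).1 (Nat.succ_le_of_lt hg)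
          push_cast at this
          exact this
        · intro j hj
          rcases mem_insert.1 hj with rfl | hj
          · exact le_rfl
          · exact hmin j hj
    · have h1 := hsum (c a) (hτ a (mem_insert_self _ _)) hmin
      have h2 : ∑ g ∈ range ⌊x a + X⌋₊, (if g < ⌊X⌋₊ then θ g else c a) =
          ∑ g ∈ range ⌊X⌋₊, θ g + ((⌊x a + X⌋₊ : ℝ) - ⌊X⌋₊) * c a := by
        rw [← sum_range_add_sum_Ico _ hle]
        congr 1
        · exact sum_congr rfl fun g hg => if_pos (mem_range.1 hg)
        · rw [sum_congr rfl fun g hg => if_neg (not_lt.2 (mem_Ico.1 hg).1), sum_const,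
            Nat.card_Ico, nsmul_eq_mul, Nat.cast_sub hle]
      rw [h2]
      have h3 := Nat.lt_floor_add_one (x a + X)
      have h4 : a' * (1 - (x a + X - ⌊x a + X⌋₊)) ≤ c a * (1 - (x a + X - ⌊x a + X⌋₊)) :=
        mul_le_mul_of_nonneg_right (hmin' a (mem_insert_self _ _)) (by linarith)
      linarith

/-- Rounding of slots by Hall's theorem: if the fractional solution `u` covers the first `g + 1`
slots of every machine `i` up to a defect `δ i`, with total defect below one, then
all slots can be filled integrally. -/
lemma exists_slot_assignment {ι J : Type*} [Fintype ι] [DecidableEq ι] [Fintype J]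
    [DecidableEq J] (s : J → ℕ) (N : ι → ℕ) (T : ι → ℕ → Finset J) (u : ι → J → ℝ) (δ : ι → ℝ)
    (hu : ∀ i j, 0 ≤ u i j) (hs : ∀ j, ∑ i, u i j ≤ s j) (hδ0 : ∀ i, 0 ≤ δ i)
    (hδ : ∑ i, δ i < 1)
    (hT : ∀ i, ∀ g < N i, (g : ℝ) + 1 - δ i ≤ ∑ j ∈ T i g, u i j) :
    ∃ φ : (i : ι) → Fin (N i) → J, (∀ i (g : Fin (N i)), φ i g ∈ T i g) ∧
      ∀ j, ∑ i, (univ.filter fun g => φ i g = j).card ≤ s j := by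
  let t : (Σ i, Fin (N i)) → Finset (Σ j, Fin (s j)) := fun p => (T p.1 p.2).sigma fun _ => univ
  have hall : ∀ A : Finset (Σ i, Fin (N i)), A.card ≤ (A.biUnion t).card := by
    intro A
    let B : (i : ι) → Finset (Fin (N i)) := fun i =>
      univ.filter fun g => (⟨i, g⟩ : Σ i, Fin (N i)) ∈ A
    let U : Finset J := univ.filter fun j => ∃ p ∈ A, j ∈ T p.1 p.2
    have hA : A = univ.sigma B := by ext ⟨i, g⟩; simp [B]
    have hU : A.biUnion t = U.sigma fun _ => univ := by ext ⟨j, k⟩; simp [U, t]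
    have hi : ∀ i, ((B i).card : ℝ) - δ i ≤ ∑ j ∈ U, u i j := by
      intro i
      rcases (B i).eq_empty_or_nonempty with hB | hB
      · rw [hB, card_empty, Nat.cast_zero]
        linarith [hδ0 i, sum_nonneg fun j (_ : j ∈ U) => hu i j]
      · have hmax := (B i).max'_mem hB
        have hcard : (B i).card ≤ ((B i).max' hB : ℕ) + 1 := by
          rw [← card_map Fin.valEmbedding, ← card_range (((B i).max' hB : ℕ) + 1)]
          refine card_le_card fun g hg => ?_
          obtain ⟨g', hg', rfl⟩ := mem_map.1 hg
          exact mem_range.2 (Nat.lt_succ_of_le ((B i).le_max' g' hg'))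
        have hcard' : ((B i).card : ℝ) ≤ ((B i).max' hB : ℕ) + 1 := by exact_mod_cast hcard
        have hsub : T i ((B i).max' hB) ⊆ U := fun j hj => by
          simp only [U, mem_filter, mem_univ, true_and]
          exact ⟨⟨i, (B i).max' hB⟩, (mem_filter.1 hmax).2, hj⟩
        linarith [hT i _ ((B i).max' hB).2,
          sum_le_sum_of_subset_of_nonneg hsub fun j _ _ => hu i j]
    have hsum : ∑ i, ((B i).card : ℝ) - ∑ i, δ i ≤ ∑ j ∈ U, (s j : ℝ) :=
      calc ∑ i, ((B i).card : ℝ) - ∑ i, δ i = ∑ i, (((B i).card : ℝ) - δ i) :=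
            (sum_sub_distrib _ _).symm
        _ ≤ ∑ i, ∑ j ∈ U, u i j := sum_le_sum fun i _ => hi i
        _ = ∑ j ∈ U, ∑ i, u i j := sum_comm
        _ ≤ ∑ j ∈ U, (s j : ℝ) := sum_le_sum fun j _ => hs j
    rw [hU, hA, card_sigma, card_sigma]
    simp only [card_univ, Fintype.card_fin]
    have : ((∑ i, (B i).card : ℕ) : ℝ) < ((∑ j ∈ U, s j + 1 : ℕ) : ℝ) := by
      push_cast
      linarith
    exact Nat.lt_succ_iff.1 (by exact_mod_cast this)
  obtain ⟨φ, hinj, hmem⟩ := (Finset.all_card_le_biUnion_card_iff_exists_injective t).1 hall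
  refine ⟨fun i g => (φ ⟨i, g⟩).1, fun i g => (mem_sigma.1 (hmem ⟨i, g⟩)).1, fun j => ?_⟩
  calc ∑ i, (univ.filter fun g => (φ ⟨i, g⟩).1 = j).card
      = (univ.sigma fun i => univ.filter fun g => (φ ⟨i, g⟩).1 = j).card := (card_sigma _ _).symm
    _ ≤ (({j} : Finset J).sigma fun j => (univ : Finset (Fin (s j)))).card :=
        card_le_card_of_injOn φ (fun p hp => by simpa using hp) hinj.injOn
    _ = s j := by simp

/-- Every machine of a split solution can be served by slots, either one slot for a large job
with defect below `1 / K`, or slots for small jobs without defect. -/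
lemma IsSplitSol.exists_slots {ι J : Type*} [Fintype ι] [Fintype J] [DecidableEq J]
    {K : ℕ} {κ : ι → Fin K} {d : Fin K → ℝ} {f : ι → ℕ} {c s : J → ℝ} {x b : ι → J → ℝ}
    {y : ι → ℝ} (h : IsSplitSol κ d (fun k => d k / (2 * K)) f c s x b y)
    (hd : ∀ k, 0 < d k) (hc : ∀ j, 0 < c j) (hf : ∀ i, 1 ≤ f i) (i : ι) :
    ∃ (N : ℕ) (T : ℕ → Finset J) (u : J → ℝ) (δ : ℝ), N ≤ f i ∧ (∀ j, 0 ≤ u j) ∧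
      (∀ j, u j ≤ x i j + b i j) ∧ 0 ≤ δ ∧ δ < 1 / K ∧ (δ ≠ 0 → 0 < y i ∧ y i < 1) ∧
      (∀ g < N, (g : ℝ) + 1 - δ ≤ ∑ j ∈ T g, u j) ∧
      ∀ φ : Fin N → J, (∀ g : Fin N, φ g ∈ T g) → d (κ i) / (2 * K) ≤ ∑ g, c (φ g) := by
  have hK : 0 < K := (κ i).pos
  have hKR : (0 : ℝ) < K := by exact_mod_cast hK
  have hK1 : 1 / (K : ℝ) ≤ 1 := by
    rw [div_le_one hKR]; exact_mod_cast hK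
  have hK0 : 0 < 1 / (K : ℝ) := by positivity
  obtain ⟨τ, hτ⟩ : ∃ τ, τ = d (κ i) / (2 * K) := ⟨_, rfl⟩
  have hτ0 : 0 < τ := by rw [hτ]; have := hd (κ i); positivity
  rw [← hτ]
  by_cases hy : 1 - 1 / (K : ℝ) < y i
  · refine ⟨1, fun _ => univ.filter fun j => τ ≤ c j, b i, 1 - y i, hf i, h.b_nonneg i,
      fun j => by linarith [h.x_nonneg i j], by linarith [h.y_le_one i], by linarith,
      fun hne => ⟨by linarith, lt_of_le_of_ne (h.y_le_one i) fun he => hne (by linarith)⟩,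
      fun g hg => ?_, fun φ hφ => ?_⟩
    · obtain rfl : g = 0 := by omega
      rw [sum_filter_of_ne, h.sum_b]
      · simp
      · intro j _ hj
        by_contra hlt
        exact hj (h.b_large i j (by simpa [← hτ] using hlt))
    · simpa using hφ 0
  · obtain ⟨θ, hθ, hsum⟩ := exists_slot_thresholds c (x i) τ (h.x_nonneg i)
      (univ.filter fun j => c j < τ) fun j hj => (mem_filter.1 hj).2.le
    have hx0 : ∀ j, x i j ≠ 0 → c j < τ := fun j hj => by
      by_contra hlt
      exact hj (h.x_small i j (by simpa [← hτ] using hlt))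
    have hX : ∑ j ∈ univ.filter (fun j => c j < τ), x i j = ∑ j, x i j :=
      sum_filter_of_ne fun j _ => hx0 j
    have hXc : ∑ j ∈ univ.filter (fun j => c j < τ), x i j * c j = ∑ j, x i j * c j :=
      sum_filter_of_ne fun j _ hj => hx0 j (left_ne_zero_of_mul hj)
    rw [hX] at hθ
    rw [hX, hXc] at hsum
    have hdem : 2 * τ ≤ ∑ j, x i j * c j :=
      calc 2 * τ = d (κ i) * (1 / K) := by rw [hτ]; field_simp
        _ ≤ d (κ i) * (1 - y i) := mul_le_mul_of_nonneg_left (by linarith) (hd _).le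
        _ ≤ _ := h.demand i
    have hsum0 := hsum 0 hτ0.le fun j _ => (hc j).le
    refine ⟨⌊∑ j, x i j⌋₊, fun g => univ.filter fun j => θ g ≤ c j, x i, 0, ?_, h.x_nonneg i,
      fun j => by linarith [h.b_nonneg i j], le_rfl, hK0, fun hne => absurd rfl hne,
      fun g hg => ?_, fun φ hφ => ?_⟩
    · refine Nat.floor_le_of_le ((h.sum_x i).trans ?_)
      exact mul_le_of_le_one_right (Nat.cast_nonneg _) (by linarith [h.y_nonneg i])
    · rw [sub_zero]
      exact (hθ g hg).trans (sum_le_sum_of_subset_of_nonneg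
        (filter_subset_filter _ (subset_univ _)) fun j _ _ => h.x_nonneg i j)
    · have hle : ∑ g ∈ range ⌊∑ j, x i j⌋₊, θ g ≤ ∑ g, c (φ g) := by
        rw [sum_range]
        exact sum_le_sum fun g _ => (mem_filter.1 (hφ g)).2
      linarith

/-- Rounding of a split solution to an integral allocation. -/
lemma IsSplitSol.exists_allocation {ι J : Type*} [Fintype ι] [DecidableEq ι] [Fintype J]
    [DecidableEq J] {K : ℕ} {κ : ι → Fin K} {d : Fin K → ℝ} {f : ι → ℕ} {c : J → ℝ} {s : J → ℕ}
    {x b : ι → J → ℝ} {y : ι → ℝ}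
    (h : IsSplitSol κ d (fun k => d k / (2 * K)) f c (fun j => (s j : ℝ)) x b y)
    (hd : ∀ k, 0 < d k) (hc : ∀ j, 0 < c j) (hf : ∀ i, 1 ≤ f i) :
    ∃ a : ι → J → ℕ, (∀ j, ∑ i, a i j ≤ s j) ∧ (∀ i, ∑ j, a i j ≤ f i) ∧
      ∀ i, d (κ i) / (2 * K) ≤ ∑ j, (a i j : ℝ) * c j := by
  obtain ⟨x, b, y, h, huniq⟩ := h.exists_fractional_unique
  choose N T u δ hN hu0 hu hδ0 hδK hδy hT hval using h.exists_slots hd hc hf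
  have hδ : ∑ i, δ i < 1 := by
    have hF : ∑ i ∈ univ.filter (fun i => δ i ≠ 0), δ i = ∑ i, δ i := sum_filter_ne_zero _
    rw [← hF]
    rcases (univ.filter fun i => δ i ≠ 0).eq_empty_or_nonempty with he | hne
    · rw [he, sum_empty]; exact one_pos
    · have hcard : (univ.filter fun i => δ i ≠ 0).card ≤ K := by
        rw [← Fintype.card_fin K]
        refine card_le_card_of_injOn κ (fun _ _ => mem_univ _) fun p hp q hq hpq => ?_
        have hp' := hδy p (mem_filter.1 hp).2
        have hq' := hδy q (mem_filter.1 hq).2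
        exact huniq p q hp'.1 hp'.2 hq'.1 hq'.2 hpq
      have hKR : (0 : ℝ) < K := by exact_mod_cast (κ hne.choose).pos
      calc ∑ i ∈ univ.filter (fun i => δ i ≠ 0), δ i
          < ∑ i ∈ univ.filter (fun i => δ i ≠ 0), 1 / (K : ℝ) :=
            sum_lt_sum_of_nonempty hne fun i _ => hδK i
        _ = (univ.filter fun i => δ i ≠ 0).card * (1 / (K : ℝ)) := by
            rw [sum_const, nsmul_eq_mul]
        _ ≤ K * (1 / (K : ℝ)) := by gcongr
        _ = 1 := by field_simp
  obtain ⟨φ, hφ, hφs⟩ := exists_slot_assignment s N T u δ hu0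
    (fun j => (sum_le_sum fun i _ => hu i j).trans (h.supply j)) hδ0 hδ hT
  refine ⟨fun i j => (univ.filter fun g => φ i g = j).card, hφs, fun i => ?_, fun i => ?_⟩
  · rw [← card_eq_sum_card_fiberwise fun g _ => mem_univ (φ i g)]
    simpa using hN i
  · refine (hval i (φ i) (hφ i)).trans_eq ?_
    rw [← sum_fiberwise univ (φ i) fun g => c (φ i g)]
    refine sum_congr rfl fun j _ => ?_
    rw [sum_congr rfl fun g hg => congrArg c (mem_filter.1 hg).2, sum_const, nsmul_eq_mul]

/-- A configuration solution yields a split solution: configurations containing a large job are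
replaced by one such job. -/
lemma ConfigSol.exists_isSplitSol {m n K : ℕ} {D : Fin m → ℝ} {f : Fin m → ℕ} {c : Fin n → ℝ}
    {s : Fin n → ℝ} (h : ConfigSol m n D f c s) (κ : Fin m → Fin K) (d τ : Fin K → ℝ)
    (hd : ∀ i, d (κ i) ≤ D i) : ∃ x b y, IsSplitSol κ d τ f c s x b y := by
  classical
  obtain ⟨𝒮, z, hz0, -, hconf, hz1, hsup⟩ := h
  let L : Fin m → (Fin n → ℕ) → Prop := fun i S => ∃ j, 0 < S j ∧ τ (κ i) ≤ c j
  have hpick : ∀ i S, ∃ e : Fin n → ℝ, (∀ j, 0 ≤ e j) ∧ (∀ j, e j ≤ S j) ∧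
      (∀ j, c j < τ (κ i) → e j = 0) ∧ ∑ j, e j = if L i S then 1 else 0 := by
    intro i S
    by_cases hL : L i S
    · obtain ⟨j₀, hj₀, hτ⟩ := id hL
      refine ⟨fun j => if j = j₀ then 1 else 0, fun j => by positivity, fun j => ?_,
        fun j hj => if_neg fun he => ?_, by simp [hL]⟩
      · beta_reduce
        split_ifs with he
        · subst he; exact_mod_cast hj₀
        · positivity
      · subst he; linarith
    · exact ⟨fun _ => 0, fun _ => le_rfl, fun j => Nat.cast_nonneg _, fun _ _ => rfl,
        by simp [hL]⟩
  choose e he0 heS hesmall hesum using hpick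
  let y : Fin m → ℝ := fun i => ∑ S ∈ 𝒮, if L i S then z i S else 0
  have hy1 : ∀ i, 1 - y i = ∑ S ∈ 𝒮, if L i S then 0 else z i S := fun i => by
    rw [← hz1 i, ← sum_sub_distrib]
    exact sum_congr rfl fun S _ => by split_ifs <;> simp
  have hzconf : ∀ i S, z i S * ∑ j, (S j : ℝ) ≤ f i * z i S ∧
      d (κ i) * z i S ≤ z i S * ∑ j, (S j : ℝ) * c j := by
    intro i S
    rcases (hz0 i S).eq_or_lt with hz | hz
    · simp [← hz]
    · obtain ⟨h1, h2⟩ := hconf i S hz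
      have h1' : ∑ j, (S j : ℝ) ≤ f i := by exact_mod_cast h1
      constructor
      · rw [mul_comm]; exact mul_le_mul_of_nonneg_right h1' hz.le
      · rw [mul_comm]; exact mul_le_mul_of_nonneg_left ((hd i).trans h2) hz.le
  refine ⟨fun i j => ∑ S ∈ 𝒮, if L i S then 0 else z i S * S j,
    fun i j => ∑ S ∈ 𝒮, if L i S then z i S * e i S j else 0, y,
    ⟨fun i j => ?_, fun i j => ?_, fun i => ?_, fun i => ?_, fun i j hj => ?_, fun i j hj => ?_,
      fun i => ?_, fun i => ?_, fun i => ?_, fun j => ?_⟩⟩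
  · refine sum_nonneg fun S _ => ?_
    split_ifs
    · exact le_rfl
    · exact mul_nonneg (hz0 i S) (Nat.cast_nonneg _)
  · refine sum_nonneg fun S _ => ?_
    split_ifs
    · exact mul_nonneg (hz0 i S) (he0 i S j)
    · exact le_rfl
  · refine sum_nonneg fun S _ => ?_
    split_ifs
    · exact hz0 i S
    · exact le_rfl
  · rw [← sub_nonneg, hy1]
    refine sum_nonneg fun S _ => ?_
    split_ifs
    · exact le_rfl
    · exact hz0 i S
  · refine sum_eq_zero fun S _ => ?_
    split_ifs with hL
    · rfl
    · have : S j = 0 := Nat.eq_zero_of_not_pos fun hS => hL ⟨j, hS, hj⟩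
      simp [this]
  · refine sum_eq_zero fun S _ => ?_
    rw [hesmall i S j hj]
    simp
  · rw [sum_comm]
    refine sum_congr rfl fun S _ => ?_
    split_ifs with hL
    · rw [← mul_sum, hesum, if_pos hL, mul_one]
    · simp
  · rw [sum_comm, hy1, mul_sum]
    refine sum_le_sum fun S _ => ?_
    split_ifs
    · simp
    · rw [← mul_sum]; exact (hzconf i S).1
  · simp only [sum_mul]
    rw [sum_comm, hy1, mul_sum]
    refine sum_le_sum fun S _ => ?_
    split_ifs
    · simp
    · simp only [mul_assoc]
      rw [← mul_sum]; exact (hzconf i S).2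
  · refine le_trans (sum_le_sum fun i _ => ?_) (hsup j)
    rw [← sum_add_distrib]
    refine sum_le_sum fun S _ => ?_
    split_ifs
    · rw [zero_add]; exact mul_le_mul_of_nonneg_left (heS i S j) (hz0 i S)
    · rw [add_zero]

/-- In an instance with positive demands, a configuration solution forces every cardinality
bound to be positive. -/
lemma ConfigSol.one_le_card {m n : ℕ} {D : Fin m → ℝ} {f : Fin m → ℕ} {c : Fin n → ℝ}
    {s : Fin n → ℝ} (h : ConfigSol m n D f c s) (hD : ∀ i, 0 < D i) (i : Fin m) : 1 ≤ f i := by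
  obtain ⟨𝒮, z, hz0, -, hconf, hz1, -⟩ := h
  obtain ⟨S, -, hS⟩ : ∃ S ∈ 𝒮, z i S ≠ 0 := exists_ne_zero_of_sum_ne_zero (by simp [hz1 i])
  obtain ⟨h1, h2⟩ := hconf i S (lt_of_le_of_ne (hz0 i S) hS.symm)
  by_contra hf
  have hS0 : ∀ j, S j = 0 := fun j => by
    have := single_le_sum (f := S) (fun _ _ => Nat.zero_le _) (mem_univ j)
    omega
  simp only [hS0, Nat.cast_zero, zero_mul, sum_const_zero] at h2
  linarith [hD i]

/-- The configuration LP is an `O(log D)`-approximate supply polyhedron for CCKP (where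
`D = D_max / D_min`): there is an absolute constant `A > 0` such that any integer supply
vector admitting a fractional configuration solution also admits an integral allocation,
respecting the supplies and the cardinality bounds, that gives every machine `i` total
capacity at least `D_i / (A·(1 + ln(D_max/D_min)))`. -/
theorem configLP_log_approximate_supply :
    ∃ A : ℝ, 0 < A ∧
      ∀ (m n : ℕ) (D : Fin m → ℝ) (f : Fin m → ℕ) (c : Fin n → ℝ)
        (s : Fin n → ℕ) (Dmax Dmin : ℝ),
        (∀ i, 0 < D i) → (∀ j, 0 < c j) →
        IsGreatest (Set.range D) Dmax → IsLeast (Set.range D) Dmin →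
        ConfigSol m n D f c (fun j => (s j : ℝ)) →
        ∃ nn : Fin m → Fin n → ℕ,
          (∀ j, ∑ i, nn i j ≤ s j) ∧
          (∀ i, ∑ j, nn i j ≤ f i) ∧
          (∀ i, D i / (A * (1 + Real.log (Dmax / Dmin))) ≤
            ∑ j, (nn i j : ℝ) * c j) := by
  refine ⟨8, by norm_num, fun m n D f c s Dmax Dmin hD hc hmax hmin hsol => ?_⟩
  obtain ⟨i₀, hi₀⟩ := hmin.1
  have hDmin : 0 < Dmin := hi₀ ▸ hD i₀
  have hlow : ∀ i, Dmin ≤ D i := fun i => hmin.2 ⟨i, rfl⟩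
  have hupp : ∀ i, D i ≤ Dmax := fun i => hmax.2 ⟨i, rfl⟩
  have hr : 1 ≤ Dmax / Dmin := (one_le_div hDmin).2 ((hlow i₀).trans (hupp i₀))
  have hlog : 0 ≤ Real.log (Dmax / Dmin) := Real.log_nonneg hr
  let ℓ : ℝ → ℕ := fun t => ⌊Real.logb 2 (t / Dmin)⌋₊
  obtain ⟨K, hK⟩ : ∃ K, K = ℓ Dmax + 1 := ⟨_, rfl⟩
  have hℓ : ∀ i, ℓ (D i) < K := fun i => by
    rw [hK]
    refine Nat.lt_succ_of_le (Nat.floor_le_floor ?_)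
    have := hD i
    have := hupp i
    exact Real.logb_le_logb_of_le one_lt_two (by positivity) (by gcongr)
  have hclass : ∀ i, 2 ^ ℓ (D i) * Dmin ≤ D i ∧ D i ≤ 2 * (2 ^ ℓ (D i) * Dmin) := fun i => by
    have hq : 0 < D i / Dmin := div_pos (hD i) hDmin
    have hq0 : 0 ≤ Real.logb 2 (D i / Dmin) :=
      Real.logb_nonneg one_lt_two ((one_le_div hDmin).2 (hlow i))
    have h1 := Nat.floor_le hq0
    have h2 := (Nat.lt_floor_add_one (Real.logb 2 (D i / Dmin))).le
    rw [Real.le_logb_iff_rpow_le one_lt_two hq, Real.rpow_natCast, le_div_iff₀ hDmin] at h1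
    rw [Real.logb_le_iff_le_rpow one_lt_two hq, Real.rpow_add_one two_ne_zero,
      Real.rpow_natCast, div_le_iff₀ hDmin] at h2
    exact ⟨h1, h2.trans_eq (by ring)⟩
  have hKlog : (K : ℝ) ≤ 2 * (1 + Real.log (Dmax / Dmin)) := by
    have h1 : (ℓ Dmax : ℝ) ≤ Real.logb 2 (Dmax / Dmin) :=
      Nat.floor_le (Real.logb_nonneg one_lt_two hr)
    have h2 : Real.logb 2 (Dmax / Dmin) ≤ 2 * Real.log (Dmax / Dmin) := by
      rw [Real.logb, div_le_iff₀ (Real.log_pos one_lt_two)]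
      nlinarith [Real.log_two_gt_d9]
    rw [hK]
    push_cast
    linarith
  obtain ⟨x, b, y, h⟩ := hsol.exists_isSplitSol (fun i => (⟨ℓ (D i), hℓ i⟩ : Fin K))
    (fun k => 2 ^ (k : ℕ) * Dmin) (fun k => 2 ^ (k : ℕ) * Dmin / (2 * K)) fun i => (hclass i).1
  obtain ⟨a, has, haf, hac⟩ := h.exists_allocation (fun k => by positivity) hc
    (hsol.one_le_card hD)
  refine ⟨a, has, haf, fun i => le_trans ?_ (hac i)⟩
  have hKR : (0 : ℝ) < K := by rw [hK]; positivity
  calc D i / (8 * (1 + Real.log (Dmax / Dmin))) ≤ D i / (4 * K) :=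
        div_le_div_of_nonneg_left (hD i).le (by positivity) (by linarith)
    _ ≤ 2 * (2 ^ ℓ (D i) * Dmin) / (4 * K) := by
        gcongr
        exact (hclass i).2
    _ = 2 ^ ℓ (D i) * Dmin / (2 * K) := by field_simp; ring
end

section
/- Let there be m machines with demands D_1,…,D_m > 0 and cardinality bounds f_1,…,f_m ∈ ℕ, and n job types with capacities c_1,…,c_n > 0 and supplies s_1,…,s_n ∈ ℕ. Suppose z : {1,…,m} × {1,…,n} → ℝ_{≥0} satisfies Σ_i z_{ij} ≤ s_j for every j, Σ_j z_{ij}·min(c_j, D_i) ≥ D_i for every i, and Σ_j z_{ij} ≤ f_i for every i. For each machine i let C_i := max{ c_j : z_{ij} > 0 }. Then there exist nonnegative integers n_{ij} with n_{ij} > 0 only if z_{ij} > 0, Σ_i n_{ij} ≤ s_j for every j, Σ_j n_{ij} ≤ f_i for every i, and Σ_j n_{ij}·min(c_j, D_i) ≥ D_i − C_i for every machine i. -/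
open Finset

/-- A fractional assignment, of total weight one for each `a : ι` and of total weight at most
`s j` on each `j : κ`, contains in its support an integral assignment that uses each `j` at most
`s j` times. -/
theorem exists_assignment_of_fractional {ι κ : Type*} [Fintype ι] [Fintype κ] [DecidableEq κ]
    (s : κ → ℕ) (x : ι → κ → ℝ) (hx : ∀ a j, 0 ≤ x a j) (hrow : ∀ a, ∑ j, x a j = 1)
    (hcol : ∀ j, ∑ a, x a j ≤ (s j : ℝ)) :
    ∃ g : ι → κ, (∀ a, 0 < x a (g a)) ∧ ∀ j, #{a | g a = j} ≤ s j := by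
  classical
  let t : ι → Finset (Σ j : κ, Fin (s j)) := fun a => {p | 0 < x a p.1}
  have hall : ∀ A : Finset ι, #A ≤ #(A.biUnion t) := by
    intro A
    let J : Finset κ := {j | ∃ a ∈ A, 0 < x a j}
    have hsub : J.sigma (fun j => (univ : Finset (Fin (s j)))) ⊆ A.biUnion t := by
      rintro ⟨j, k⟩ h
      simpa [J, t] using h
    refine le_trans ?_ (card_le_card hsub)
    rw [card_sigma]
    have h : (#A : ℝ) ≤ ∑ j ∈ J, (s j : ℝ) := by
      calc (#A : ℝ) = ∑ a ∈ A, ∑ j, x a j := by simp [hrow]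
        _ = ∑ a ∈ A, ∑ j ∈ J, x a j := by
          refine sum_congr rfl fun a ha => ?_
          refine (sum_subset (subset_univ J) fun j _ hj => ?_).symm
          by_contra hne
          exact hj (by simpa [J] using ⟨a, ha, lt_of_le_of_ne (hx a j) (Ne.symm hne)⟩)
        _ = ∑ j ∈ J, ∑ a ∈ A, x a j := sum_comm
        _ ≤ ∑ j ∈ J, (s j : ℝ) := by
          refine sum_le_sum fun j _ => le_trans ?_ (hcol j)
          exact sum_le_sum_of_subset_of_nonneg (subset_univ A) fun a _ _ => hx a j
    simp only [card_univ, Fintype.card_fin]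
    exact_mod_cast h
  obtain ⟨F, hFinj, hF⟩ := (Finset.all_card_le_biUnion_card_iff_exists_injective t).1 hall
  refine ⟨fun a => (F a).1, fun a => by simpa [t] using hF a, fun j => ?_⟩
  calc #{a | (F a).1 = j}
      ≤ #(({j} : Finset κ).sigma fun j => (univ : Finset (Fin (s j)))) := by
        refine card_le_card_of_injOn F (fun a ha => ?_) hFinj.injOn
        simpa using ha
    _ = s j := by simp

/-- The length of `[0, y] ∩ [k, k + 1]`, for `y ≥ 0`. -/
noncomputable def unitOverlap (k : ℕ) (y : ℝ) : ℝ := min 1 (max 0 (y - k))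

theorem unitOverlap_mono (k : ℕ) : Monotone (unitOverlap k) := fun a b h => by
  unfold unitOverlap
  gcongr

theorem unitOverlap_eq_zero {k : ℕ} {y : ℝ} (h : y ≤ k) : unitOverlap k y = 0 := by
  simp [unitOverlap, h]

theorem unitOverlap_eq_one {k : ℕ} {y : ℝ} (h : (k : ℝ) + 1 ≤ y) : unitOverlap k y = 1 := by
  have : 1 ≤ y - k := by linarith
  simp [unitOverlap, this]

theorem unitOverlap_le_one (k : ℕ) (y : ℝ) : unitOverlap k y ≤ 1 := min_le_left _ _

theorem sum_range_unitOverlap (N : ℕ) {y : ℝ} (hy : 0 ≤ y) :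
    ∑ k ∈ range N, unitOverlap k y = min y N := by
  induction N with
  | zero => simp [hy]
  | succ N ih =>
    rw [sum_range_succ, ih]
    push_cast
    rcases le_total y N with h | h
    · rw [unitOverlap_eq_zero h, min_eq_left h, min_eq_left (by linarith), add_zero]
    · rcases le_total y (N + 1) with h' | h'
      · rw [unitOverlap, max_eq_right (by linarith), min_eq_right h, min_eq_left h',
          min_eq_right (by linarith)]
        ring
      · rw [unitOverlap_eq_one h', min_eq_right h, min_eq_right h']

/-- Splitting of the weights `z`, in the order of decreasing value `v`, into consecutive slots of
size one. -/
theorem exists_slots_of_antitone {n : ℕ} (z v : Fin n → ℝ) (hz : ∀ j, 0 ≤ z j)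
    (hv : Antitone v) :
    ∃ w : ℕ → Fin n → ℝ, (∀ k j, 0 ≤ w k j) ∧
      (∀ k < ⌊∑ j, z j⌋₊, ∑ j, w k j = 1) ∧ (∀ k, ∑ j, w k j ≤ 1) ∧
      (∀ j, ∑ k ∈ range (⌊∑ j, z j⌋₊ + 1), w k j = z j) ∧
      ∀ k j j', 0 < w k j → 0 < w (k + 1) j' → v j' ≤ v j := by
  let u : ℕ → ℝ := fun a => if h : a < n then z ⟨a, h⟩ else 0
  have hu : ∀ a, 0 ≤ u a := fun a => by
    by_cases h : a < n <;> simp [u, h, hz]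
  have huz : ∀ j : Fin n, u j = z j := fun j => by simp [u]
  let Q : ℕ → ℝ := fun a => ∑ b ∈ range a, u b
  have hQ0 : Q 0 = 0 := by simp [Q]
  have hQs : ∀ j : Fin n, Q (j + 1) = Q j + z j := fun j => by
    simp only [Q, sum_range_succ, huz]
  have hQm : Monotone Q := monotone_nat_of_le_succ fun a => by
    simp only [Q, sum_range_succ]
    linarith [hu a]
  have hQnn : ∀ a, 0 ≤ Q a := fun a => hQ0 ▸ hQm (Nat.zero_le a)
  have hQn : Q n = ∑ j, z j := by
    simp only [Q, ← huz]
    exact (Fin.sum_univ_eq_sum_range u n).symm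
  have hrow : ∀ k, ∑ j : Fin n, (unitOverlap k (Q (j + 1)) - unitOverlap k (Q j)) =
      unitOverlap k (∑ j, z j) := fun k => by
    rw [Fin.sum_univ_eq_sum_range (fun a => unitOverlap k (Q (a + 1)) - unitOverlap k (Q a)) n,
      sum_range_sub (fun a => unitOverlap k (Q a)), hQ0, hQn,
      unitOverlap_eq_zero (Nat.cast_nonneg k), sub_zero]
  refine ⟨fun k j => unitOverlap k (Q (j + 1)) - unitOverlap k (Q j), fun k j => ?_,
    fun k hk => ?_, fun k => ?_, fun j => ?_, fun k j j' h h' => ?_⟩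
  · exact sub_nonneg.2 (unitOverlap_mono k (hQm (Nat.le_succ _)))
  · rw [hrow]
    refine unitOverlap_eq_one ?_
    have := (Nat.le_floor_iff (hQn ▸ hQnn n)).1 (Nat.succ_le_of_lt hk)
    exact_mod_cast this
  · rw [hrow]
    exact unitOverlap_le_one _ _
  · have hle : ∀ a ≤ n, Q a ≤ ((⌊∑ j, z j⌋₊ + 1 : ℕ) : ℝ) := fun a ha => by
      push_cast
      exact (hQm ha).trans (hQn ▸ (Nat.lt_floor_add_one _).le)
    rw [sum_sub_distrib, sum_range_unitOverlap _ (hQnn _), sum_range_unitOverlap _ (hQnn _),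
      min_eq_left (hle _ j.2), min_eq_left (hle _ j.2.le), hQs]
    ring
  · beta_reduce at h h'
    refine hv (not_lt.1 fun hlt => ?_)
    have h1 : Q j < (k : ℝ) + 1 := by
      by_contra hge
      rw [not_lt] at hge
      rw [unitOverlap_eq_one hge, unitOverlap_eq_one (hge.trans (hQm (Nat.le_succ _)))] at h
      simp at h
    have h2 : ((k + 1 : ℕ) : ℝ) < Q (j' + 1) := by
      by_contra hge
      rw [not_lt] at hge
      rw [unitOverlap_eq_zero hge, unitOverlap_eq_zero ((hQm (Nat.le_succ _)).trans hge)] at h'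
      simp at h'
    push_cast at h2
    have h3 : Q (j' + 1) ≤ Q j := hQm (Nat.succ_le_of_lt hlt)
    linarith

theorem exists_slots {n : ℕ} (z v : Fin n → ℝ) (hz : ∀ j, 0 ≤ z j) :
    ∃ w : ℕ → Fin n → ℝ, (∀ k j, 0 ≤ w k j) ∧
      (∀ k < ⌊∑ j, z j⌋₊, ∑ j, w k j = 1) ∧ (∀ k, ∑ j, w k j ≤ 1) ∧
      (∀ j, ∑ k ∈ range (⌊∑ j, z j⌋₊ + 1), w k j = z j) ∧
      ∀ k j j', 0 < w k j → 0 < w (k + 1) j' → v j' ≤ v j := by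
  let σ := Tuple.sort fun j => -v j
  have hσ : Antitone (v ∘ σ) := fun a b h => by
    have := Tuple.monotone_sort (fun j => -v j) h
    simpa using this
  obtain ⟨w, h0, h1, h2, h3, h4⟩ := exists_slots_of_antitone (z ∘ σ) (v ∘ σ) (fun j => hz _) hσ
  have hF : ∑ j, (z ∘ σ) j = ∑ j, z j := Equiv.sum_comp σ z
  rw [hF] at h1 h3
  have hs : ∀ k, ∑ j, w k (σ.symm j) = ∑ j, w k j := fun k => Equiv.sum_comp σ.symm (w k)
  refine ⟨fun k j => w k (σ.symm j), fun k j => h0 _ _, fun k hk => ?_, fun k => ?_,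
    fun j => ?_, fun k j j' h h' => ?_⟩
  · rw [hs, h1 k hk]
  · rw [hs]
    exact h2 k
  · simpa using h3 (σ.symm j)
  · simpa using h4 k _ _ h h'

/-- Filling each full slot with an item at least as good as everything in the next slot loses at
most the value of the first slot. -/
theorem sum_mul_le_add_sum_of_slots {n K : ℕ} {z v : Fin n → ℝ} {V : ℝ} {w : ℕ → Fin n → ℝ}
    (hv : ∀ j, 0 ≤ v j) (hV : 0 ≤ V) (hzV : ∀ j, 0 < z j → v j ≤ V)
    (hw : ∀ k j, 0 ≤ w k j) (hw1 : ∀ k, ∑ j, w k j ≤ 1)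
    (hwz : ∀ j, ∑ k ∈ range (K + 1), w k j = z j)
    (hwv : ∀ k j j', 0 < w k j → 0 < w (k + 1) j' → v j' ≤ v j)
    (g : Fin K → Fin n) (hg : ∀ k : Fin K, 0 < w k (g k)) :
    ∑ j, z j * v j ≤ V + ∑ k, v (g k) := by
  have slot : ∀ k (b : ℝ), 0 ≤ b → (∀ j, 0 < w k j → v j ≤ b) → ∑ j, w k j * v j ≤ b := by
    intro k b hb h
    calc ∑ j, w k j * v j ≤ ∑ j, w k j * b := by
          refine sum_le_sum fun j _ => ?_
          rcases (hw k j).eq_or_lt with h0 | h0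
          · simp [← h0]
          · exact mul_le_mul_of_nonneg_left (h j h0) h0.le
      _ = (∑ j, w k j) * b := (sum_mul _ _ _).symm
      _ ≤ b := mul_le_of_le_one_left hb (hw1 k)
  have hsplit : ∑ j, z j * v j = ∑ k ∈ range (K + 1), ∑ j, w k j * v j := by
    rw [sum_comm]
    exact sum_congr rfl fun j _ => by rw [← hwz j, sum_mul]
  rw [hsplit, sum_range_succ', add_comm]
  refine add_le_add (slot 0 V hV fun j hj => hzV j ?_) ?_
  · rw [← hwz j]
    exact hj.trans_le (single_le_sum (f := fun k => w k j) (fun k _ => hw k j) (by simp))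
  · rw [← Fin.sum_univ_eq_sum_range (fun k => ∑ j, w (k + 1) j * v j) K]
    exact sum_le_sum fun k _ => slot _ _ (hv _) fun j hj => hwv k _ _ (hg k) hj

/-- Shmoys–Tardos-type rounding of the assignment LP with cardinality constraints: a
fractional solution `z` of (A1), (A2), (A4) can be rounded to an integral allocation,
supported within the support of `z`, respecting the supplies and cardinality bounds and
giving each machine `i` total (truncated) capacity at least `D_i − C_i`, where
`C_i = max{c_j : z_{ij} > 0}`. -/
theorem shmoys_tardos_rounding (m n : ℕ)
    (D : Fin m → ℝ) (hD : ∀ i, 0 < D i)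
    (f : Fin m → ℕ)
    (c : Fin n → ℝ) (hc : ∀ j, 0 < c j)
    (s : Fin n → ℕ)
    (z : Fin m → Fin n → ℝ) (hz : ∀ i j, 0 ≤ z i j)
    (hA1 : ∀ j, ∑ i, z i j ≤ (s j : ℝ))
    (hA2 : ∀ i, D i ≤ ∑ j, z i j * min (c j) (D i))
    (hA4 : ∀ i, ∑ j, z i j ≤ (f i : ℝ))
    (Cmax : Fin m → ℝ)
    (hCmax : ∀ i, IsGreatest {r : ℝ | ∃ j, 0 < z i j ∧ c j = r} (Cmax i)) :
    ∃ nn : Fin m → Fin n → ℕ,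
      (∀ i j, 0 < nn i j → 0 < z i j) ∧
      (∀ j, ∑ i, nn i j ≤ s j) ∧
      (∀ i, ∑ j, nn i j ≤ f i) ∧
      (∀ i, D i - Cmax i ≤ ∑ j, (nn i j : ℝ) * min (c j) (D i)) := by
  choose w hw0 hw1 hwle hwz hwv using fun i =>
    exists_slots (z i) (fun j => min (c j) (D i)) (hz i)
  let K : Fin m → ℕ := fun i => ⌊∑ j, z i j⌋₊
  obtain ⟨g, hg, hgs⟩ := exists_assignment_of_fractional (ι := Σ i, Fin (K i)) s
    (fun a j => w a.1 a.2 j) (fun a j => hw0 _ _ _) (fun a => hw1 _ _ a.2.2) (fun j => by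
      refine le_trans ?_ (hA1 j)
      rw [Fintype.sum_sigma]
      refine sum_le_sum fun i _ => ?_
      rw [Fin.sum_univ_eq_sum_range (fun k => w i k j) (K i), ← hwz i j, sum_range_succ]
      exact le_add_of_nonneg_right (hw0 _ _ _))
  refine ⟨fun i j => #{k : Fin (K i) | g ⟨i, k⟩ = j}, fun i j h => ?_, fun j => ?_,
    fun i => ?_, fun i => ?_⟩
  · obtain ⟨k, hk⟩ := card_pos.1 h
    obtain rfl : g ⟨i, k⟩ = j := by simpa using hk
    rw [← hwz i]
    refine (hg ⟨i, k⟩).trans_le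
      (single_le_sum (f := fun k' => w i k' (g ⟨i, k⟩)) (fun k' _ => hw0 _ _ _) ?_)
    exact mem_range.2 (Nat.lt_succ_of_lt k.2)
  · refine le_trans (le_of_eq ?_) (hgs j)
    simp only [card_filter, Fintype.sum_sigma]
  · rw [← card_eq_sum_card_fiberwise (fun k _ => mem_coe.2 (mem_univ (g ⟨i, k⟩))), card_univ,
      Fintype.card_fin]
    exact Nat.floor_le_of_le (hA4 i)
  · obtain ⟨⟨j₀, _, hj₀⟩, hub⟩ := hCmax i
    have key := sum_mul_le_add_sum_of_slots (K := K i) (V := Cmax i)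
      (fun j => (lt_min (hc j) (hD i)).le) (hj₀ ▸ (hc j₀).le)
      (fun j hj => (min_le_left _ _).trans (hub ⟨j, hj, rfl⟩)) (hw0 i) (hwle i) (hwz i) (hwv i)
      (fun k => g ⟨i, k⟩) (fun k => hg ⟨i, k⟩)
    have hfib : ∑ j, (#{k : Fin (K i) | g ⟨i, k⟩ = j} : ℝ) * min (c j) (D i) =
        ∑ k : Fin (K i), min (c (g ⟨i, k⟩)) (D i) := by
      rw [← sum_fiberwise' univ (fun k : Fin (K i) => g ⟨i, k⟩) fun j => min (c j) (D i)]
      simp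
    rw [hfib]
    linarith [hA2 i]
end

section
/- Assign to each edge {i,j} of the Petersen graph (on vertex set {0,…,9}) the weight 2^i + 2^j. Then for every partition of the edge set of the Petersen graph into three sets E_1, E_2, E_3, there is some t ∈ {1,2,3} with Σ_{{i,j} ∈ E_t} (2^i + 2^j) ≤ 1022. -/
open Finset

/-- The edge set of the Petersen graph on vertex set `Fin 10`: the outer 5-cycle on
`{0,…,4}`, the spokes `{i, i+5}`, and the inner 5-cycle `{5+i, 5+((i+2) mod 5)}`. -/
def petersenEdges : Finset (Sym2 (Fin 10)) :=
  { s(0, 1), s(1, 2), s(2, 3), s(3, 4), s(4, 0),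
    s(0, 5), s(1, 6), s(2, 7), s(3, 8), s(4, 9),
    s(5, 7), s(6, 8), s(7, 9), s(8, 5), s(9, 6) }

/-- The weight of an edge `{i, j}` is `2^i + 2^j`. -/
def edgeWeight : Sym2 (Fin 10) → ℕ :=
  Sym2.lift ⟨fun a b => 2 ^ (a : ℕ) + 2 ^ (b : ℕ), fun a b => add_comm _ _⟩

/-- If `card ι` strings of natural-number digits have digits adding up to `card ι` in each
position, and each of them represents `2 ^ n - 1` in base two, then all digits are one. -/
theorem eq_one_of_sum_two_pow_mul {ι : Type*} [Fintype ι] :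
    ∀ {n : ℕ} (d : Fin n → ι → ℕ), (∀ v, ∑ t, d v t = Fintype.card ι) →
      (∀ t, ∑ v : Fin n, 2 ^ (v : ℕ) * d v t + 1 = 2 ^ n) → ∀ v t, d v t = 1
  | 0, _, _, _ => fun v => v.elim0
  | n + 1, d, hd, hs => by
    have hsplit : ∀ t, d 0 t + 2 * ∑ v : Fin n, 2 ^ (v : ℕ) * d v.succ t + 1 = 2 * 2 ^ n := by
      intro t
      rw [← pow_succ', ← hs t, Fin.sum_univ_succ, mul_sum]
      simp [pow_succ', mul_assoc]
    have hpos : ∀ t ∈ univ, 1 ≤ d 0 t := fun t _ => by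
      have := hsplit t
      omega
    have hzero : ∀ t, d 0 t = 1 := fun t =>
      ((sum_eq_sum_iff_of_le hpos).1 (by simp [hd]) t (mem_univ t)).symm
    have hsucc := eq_one_of_sum_two_pow_mul (fun v : Fin n => d v.succ) (fun v => hd v.succ)
      (fun t => by
        have := hsplit t
        rw [hzero t] at this
        omega)
    exact fun v => Fin.cases hzero hsucc v

theorem edgeWeight_eq_sum : ∀ e ∈ petersenEdges,
    edgeWeight e = ∑ v : Fin 10, if v ∈ e then 2 ^ (v : ℕ) else 0 := by
  decide

theorem card_petersenEdges_filter_mem :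
    ∀ v : Fin 10, #{e ∈ petersenEdges | v ∈ e} = 3 := by
  decide

theorem sum_edgeWeight {s : Finset (Sym2 (Fin 10))} (hs : s ⊆ petersenEdges) :
    ∑ e ∈ s, edgeWeight e = ∑ v : Fin 10, 2 ^ (v : ℕ) * #{e ∈ s | v ∈ e} := by
  rw [sum_congr rfl fun e he => edgeWeight_eq_sum e (hs he), sum_comm]
  refine sum_congr rfl fun v _ => ?_
  rw [← sum_filter, sum_const, smul_eq_mul, mul_comm]

set_option synthInstance.maxSize 1000 in
/-- The Petersen graph has no proper edge colouring with three colours. -/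
theorem petersenEdges_not_three_edge_colorable (c : Sym2 (Fin 10) → Fin 3) :
    ∃ v : Fin 10, ∃ e ∈ petersenEdges, ∃ f ∈ petersenEdges,
      v ∈ e ∧ v ∈ f ∧ e ≠ f ∧ c e = c f := by
  by_contra! h
  have hproper : ∀ i j k l : Fin 10, s(i, j) ∈ petersenEdges → s(i, k) ∈ petersenEdges →
      s(i, l) ∈ petersenEdges → s(i, j) ≠ s(i, k) ∧ s(i, j) ≠ s(i, l) ∧ s(i, k) ≠ s(i, l) →
      c s(i, j) ≠ c s(i, k) ∧ c s(i, j) ≠ c s(i, l) ∧ c s(i, k) ≠ c s(i, l) :=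
    fun i j k l hj hk hl hne =>
      ⟨h i _ hj _ hk (by simp) (by simp) hne.1, h i _ hj _ hl (by simp) (by simp) hne.2.1,
        h i _ hk _ hl (by simp) (by simp) hne.2.2⟩
  have h0 := hproper 0 1 4 5 (by decide) (by decide) (by decide) (by decide)
  have h1 := hproper 1 0 2 6 (by decide) (by decide) (by decide) (by decide)
  have h2 := hproper 2 1 3 7 (by decide) (by decide) (by decide) (by decide)
  have h3 := hproper 3 2 4 8 (by decide) (by decide) (by decide) (by decide)
  have h4 := hproper 4 3 0 9 (by decide) (by decide) (by decide) (by decide)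
  have h5 := hproper 5 0 7 8 (by decide) (by decide) (by decide) (by decide)
  have h6 := hproper 6 1 8 9 (by decide) (by decide) (by decide) (by decide)
  have h7 := hproper 7 2 5 9 (by decide) (by decide) (by decide) (by decide)
  have h8 := hproper 8 3 6 5 (by decide) (by decide) (by decide) (by decide)
  have h9 := hproper 9 4 7 6 (by decide) (by decide) (by decide) (by decide)
  have search : ∀ a b s : Fin 3, a ≠ b ∧ a ≠ s ∧ b ≠ s →
      ∀ a₁ s₁ : Fin 3, a ≠ a₁ ∧ a ≠ s₁ ∧ a₁ ≠ s₁ →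
      ∀ a₂ s₂ : Fin 3, a₁ ≠ a₂ ∧ a₁ ≠ s₂ ∧ a₂ ≠ s₂ →
      ∀ a₃ s₃ : Fin 3, a₂ ≠ a₃ ∧ a₂ ≠ s₃ ∧ a₃ ≠ s₃ →
      ∀ s₄ : Fin 3, a₃ ≠ b ∧ a₃ ≠ s₄ ∧ b ≠ s₄ →
      ∀ x y : Fin 3, s ≠ x ∧ s ≠ y ∧ x ≠ y →
      ∀ z : Fin 3, s₂ ≠ x ∧ s₂ ≠ z ∧ x ≠ z →
      ∀ w : Fin 3, s₃ ≠ w ∧ s₃ ≠ y ∧ w ≠ y →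
      ∀ u : Fin 3, s₁ ≠ w ∧ s₁ ≠ u ∧ w ≠ u →
      ¬(s₄ ≠ z ∧ s₄ ≠ u ∧ z ≠ u) := by
    decide
  rw [Sym2.eq_swap (a := 1) (b := 0)] at h1
  rw [Sym2.eq_swap (a := 2) (b := 1)] at h2
  rw [Sym2.eq_swap (a := 3) (b := 2)] at h3
  rw [Sym2.eq_swap (a := 4) (b := 3), Sym2.eq_swap (a := 4) (b := 0)] at h4
  rw [Sym2.eq_swap (a := 5) (b := 0)] at h5
  rw [Sym2.eq_swap (a := 6) (b := 1)] at h6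
  rw [Sym2.eq_swap (a := 7) (b := 2), Sym2.eq_swap (a := 7) (b := 5)] at h7
  rw [Sym2.eq_swap (a := 8) (b := 3), Sym2.eq_swap (a := 8) (b := 6),
    Sym2.eq_swap (a := 8) (b := 5)] at h8
  rw [Sym2.eq_swap (a := 9) (b := 4), Sym2.eq_swap (a := 9) (b := 7),
    Sym2.eq_swap (a := 9) (b := 6)] at h9
  exact search _ _ _ h0 _ _ h1 _ _ h2 _ _ h3 _ h4 _ _ h5 _ h7 _ h8 _ h6 h9

/-- For every partition of the edge set of the Petersen graph into three sets, some part
has total weight at most `1022` (where edge `{i,j}` weighs `2^i + 2^j`). -/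
theorem petersen_three_partition_light_part
    (E : Fin 3 → Finset (Sym2 (Fin 10)))
    (hdisj : ∀ t₁ t₂, t₁ ≠ t₂ → Disjoint (E t₁) (E t₂))
    (hunion : Finset.univ.biUnion E = petersenEdges) :
    ∃ t : Fin 3, ∑ e ∈ E t, edgeWeight e ≤ 1022 := by
  by_contra! h
  have hsub : ∀ t, E t ⊆ petersenEdges := fun t => hunion ▸ subset_biUnion_of_mem E (mem_univ t)
  have hdeg : ∀ v : Fin 10, ∑ t, #{e ∈ E t | v ∈ e} = 3 := fun v => by
    refine Eq.trans ?_ (card_petersenEdges_filter_mem v)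
    rw [← hunion, filter_biUnion, card_biUnion]
    exact fun t _ u _ htu => disjoint_filter_filter (hdisj t u htu)
  have htotal : ∑ t, ∑ e ∈ E t, edgeWeight e = 3069 := by
    rw [← sum_biUnion fun t _ u _ htu => hdisj t u htu, hunion]
    decide
  have hweight : ∀ t, ∑ e ∈ E t, edgeWeight e = 1023 := fun t =>
    ((sum_eq_sum_iff_of_le (f := fun _ => 1023) fun u _ => h u).1 (by simp [htotal]) t (mem_univ t)).symm
  have hone := eq_one_of_sum_two_pow_mul (fun v t => #{e ∈ E t | v ∈ e}) (by simpa using hdeg)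
    (fun t => by rw [← sum_edgeWeight (hsub t), hweight]; norm_num)
  have hpart : ∀ e, ∃ t, e ∈ petersenEdges → e ∈ E t := fun e => by
    by_cases he : e ∈ petersenEdges
    · rw [← hunion, mem_biUnion] at he
      obtain ⟨t, -, ht⟩ := he
      exact ⟨t, fun _ => ht⟩
    · exact ⟨0, fun h => absurd h he⟩
  choose c hc using hpart
  obtain ⟨v, e, he, f, hf, hve, hvf, hne, hcef⟩ := petersenEdges_not_three_edge_colorable c
  exact hne (card_le_one.1 (hone v (c e)).le e (mem_filter.2 ⟨hc e he, hve⟩) f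
    (mem_filter.2 ⟨hcef ▸ hc f hf, hvf⟩))
end

section
/- There exist six perfect matchings M_1,…,M_6 of the Petersen graph such that every edge of the Petersen graph belongs to exactly two of M_1,…,M_6. -/
open Finset

/-- A perfect matching of the Petersen graph: a set of `5` pairwise vertex-disjoint
Petersen edges covering all `10` vertices. -/
def IsPetersenPerfectMatching (M : Finset (Sym2 (Fin 10))) : Prop :=
  M ⊆ petersenEdges ∧ M.card = 5 ∧
  (∀ e ∈ M, ∀ e' ∈ M, e ≠ e' → ∀ v : Fin 10, v ∈ e → v ∉ e') ∧
  (∀ v : Fin 10, ∃ e ∈ M, v ∈ e)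

/-- The six perfect matchings of the Petersen graph: the five spokes, and for each outer
vertex `i` the matching whose only spoke is the one at `i`. -/
def petersenMatching : Fin 6 → Finset (Sym2 (Fin 10)) :=
  ![{s(0, 5), s(1, 6), s(2, 7), s(3, 8), s(4, 9)},
    {s(0, 5), s(1, 2), s(3, 4), s(7, 9), s(6, 8)},
    {s(1, 6), s(2, 3), s(4, 0), s(8, 5), s(7, 9)},
    {s(2, 7), s(3, 4), s(0, 1), s(9, 6), s(8, 5)},
    {s(3, 8), s(4, 0), s(1, 2), s(5, 7), s(9, 6)},
    {s(4, 9), s(0, 1), s(2, 3), s(6, 8), s(5, 7)}]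

theorem isPetersenPerfectMatching_petersenMatching (t : Fin 6) :
    IsPetersenPerfectMatching (petersenMatching t) := by
  unfold IsPetersenPerfectMatching
  revert t
  decide +kernel

theorem card_filter_mem_petersenMatching :
    ∀ e ∈ petersenEdges, (Finset.univ.filter (fun t => e ∈ petersenMatching t)).card = 2 := by
  decide +kernel

/-- There exist six perfect matchings of the Petersen graph such that every edge of the
Petersen graph belongs to exactly two of them. -/
theorem petersen_six_perfect_matchings :
    ∃ M : Fin 6 → Finset (Sym2 (Fin 10)),
      (∀ t, IsPetersenPerfectMatching (M t)) ∧
      (∀ e ∈ petersenEdges, (Finset.univ.filter (fun t => e ∈ M t)).card = 2) := by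
  exact ⟨petersenMatching, isPetersenPerfectMatching_petersenMatching,
    card_filter_mem_petersenMatching⟩
end

section
/- The edge set of the Petersen graph cannot be partitioned into three perfect matchings. -/
open Finset

set_option synthInstance.maxSize 1000 in
/-- The fifteen edge colours `a i` (outer cycle), `s i` (spokes) and `b i` (inner cycle) of the
Petersen graph cannot be chosen among three so that edges sharing a vertex differ. -/
theorem petersen_colors_false :
    ∀ a₀ a₁ : Fin 3, a₀ ≠ a₁ → ∀ a₂, a₁ ≠ a₂ → ∀ a₃, a₂ ≠ a₃ → ∀ a₄, a₃ ≠ a₄ → a₄ ≠ a₀ →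
    ∀ s₀, s₀ ≠ a₀ → s₀ ≠ a₄ → ∀ s₁, s₁ ≠ a₁ → s₁ ≠ a₀ → ∀ s₂, s₂ ≠ a₂ → s₂ ≠ a₁ →
    ∀ s₃, s₃ ≠ a₃ → s₃ ≠ a₂ → ∀ s₄, s₄ ≠ a₄ → s₄ ≠ a₃ →
    ∀ b₀, b₀ ≠ s₀ → b₀ ≠ s₂ → ∀ b₂, b₂ ≠ s₂ → b₂ ≠ s₄ → b₂ ≠ b₀ →
    ∀ b₄, b₄ ≠ s₄ → b₄ ≠ s₁ → b₄ ≠ b₂ → ∀ b₁, b₁ ≠ s₁ → b₁ ≠ s₃ → b₁ ≠ b₄ →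
    ∀ b₃, b₃ ≠ s₃ → b₃ ≠ s₀ → b₃ ≠ b₁ → b₃ ≠ b₀ → False := by
  decide

/-- The Petersen graph has no proper edge colouring with three colours. -/
theorem petersen_not_three_edge_colorable (c : Sym2 (Fin 10) → Fin 3)
    (hc : ∀ e ∈ petersenEdges, ∀ e' ∈ petersenEdges, e ≠ e' → ∀ v, v ∈ e → v ∈ e' → c e ≠ c e') :
    False := by
  have hne (v x y : Fin 10) (hx : s(v, x) ∈ petersenEdges) (hy : s(v, y) ∈ petersenEdges)
      (hxy : x ≠ y) : c s(v, x) ≠ c s(v, y) :=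
    hc _ hx _ hy (fun h => hxy (Sym2.congr_right.mp h)) v (Sym2.mem_mk_left v x)
      (Sym2.mem_mk_left v y)
  have hflip (x y : Fin 10) : c s(x, y) = c s(y, x) := by rw [Sym2.eq_swap]
  refine petersen_colors_false (c s(0, 1)) (c s(1, 2)) ?_ (c s(2, 3)) ?_ (c s(3, 4)) ?_
    (c s(4, 0)) ?_ ?_ (c s(0, 5)) ?_ ?_ (c s(1, 6)) ?_ ?_ (c s(2, 7)) ?_ ?_ (c s(3, 8)) ?_ ?_
    (c s(4, 9)) ?_ ?_ (c s(5, 7)) ?_ ?_ (c s(7, 9)) ?_ ?_ ?_ (c s(9, 6)) ?_ ?_ ?_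
    (c s(6, 8)) ?_ ?_ ?_ (c s(8, 5)) ?_ ?_ ?_ ?_
  all_goals
    first
    | exact hne _ _ _ (by decide) (by decide) (by decide)
    | rw [hflip]; exact hne _ _ _ (by decide) (by decide) (by decide)
    | refine fun h => hne _ _ _ ?_ ?_ ?_ (h.trans (hflip _ _)) <;> decide
    | refine fun h => hne _ _ _ ?_ ?_ ?_ ((hflip _ _).trans (h.trans (hflip _ _))) <;> decide

/-- The edge set of the Petersen graph cannot be partitioned into three perfect
matchings. -/
theorem petersen_no_three_matching_partition :
    ¬ ∃ M : Fin 3 → Finset (Sym2 (Fin 10)),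
        (∀ t, IsPetersenPerfectMatching (M t)) ∧
        (∀ t₁ t₂, t₁ ≠ t₂ → Disjoint (M t₁) (M t₂)) ∧
        (Finset.univ.biUnion M = petersenEdges) := by
  rintro ⟨M, hM, -, hU⟩
  have hcover : ∀ e ∈ petersenEdges, ∃ t, e ∈ M t := fun e he => by
    simpa [← hU] using he
  choose! c hc using hcover
  refine petersen_not_three_edge_colorable c fun e he e' he' hne v hv hv' heq => ?_
  exact (hM (c e)).2.2.1 e (hc e he) e' (heq ▸ hc e' he') hne v hv hv'
end
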